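/- For any collection 𝔛 ⊆ 𝒫(ω) of cardinality at most ℵ₁ and any complete consistent theory T ⊇ PA, the following are equivalent: (i) 𝔛 is a Scott set (equivalently (ℕ,𝔛) ⊨ WKL₀) and rep(T) ⊆ 𝔛; (ii) there is a nonstandard model M ⊨ T with SSy(M) = 𝔛. -/

import Mathlib

/-!
Scott's theorem for Scott sets of size at most `ℵ₁`.

The easy direction. In a nonstandard model `M` of PA, a relation definable with parameters has
arbitrarily long initial pieces of its trace on `ℕ` coded in `M`; by overspill the whole trace is
in `SSy(M)`. Partial recursive functions with an oracle in `SSy(M)` have graphs given by such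
relations, so `SSy(M)` is closed under relative recursion, and overspill for the nodes of a coded
tree produces a branch. A set represented in `T` is the trace of a formula on `ℕ`.

The hard direction. Start from any model `M` of `T` and reserve one variable for every set in `𝔛`.
A complete type in the variables indexed by `I ⊆ 𝔛` is encoded by a filter on the power `M ^ 𝔛`
which depends only on the coordinates in `I` and decides each formula in these variables; the
predicate `Good` requires further that every formula `B(x, n)` has, according to the type, a trace
on `ℕ` which is in `𝔛`, and that the variable indexed by `A ∈ I` codes `A`. For `I = ∅` this holds
because `rep(T) ⊆ 𝔛`. If `I` is countable, one more variable can be added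
(`Good.exists_insert`): enumerate the countably many formulas with the new variable, and decide the
trace of one after the other. By `typ` for the given type, the tree of consistent finite decisions
for the traces of one more formula, given the decisions `Y ∈ 𝔛` made so far, is in `𝔛`, so it has a
branch in `𝔛` (`exists_step`). The types obtained increase along chains (`Good.iInf`), and with
a well-order of `𝔛` whose initial segments are countable, Zorn's lemma gives such a type in the
variables indexed by all of `𝔛`.

Finally the model generated by a realization of this type is the ultrapower of `M` formed with the
functions `M ^ 𝔛 → M` definable from finitely many coordinates, with respect to an ultrafilter
refining the type. Łoś's theorem holds as PA has definable Skolem functions (least witnesses). Its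
standard system contains `A ∈ 𝔛`, which is coded by the coordinate of index `A`, and contains
nothing outside of `𝔛`, since the set coded by a definable function `g` is the trace of the formula
`n ∈ g(x)`.
-/

namespace Paper

/-! ### Syntax of (second-order) arithmetic.

Terms of the language `L_A = {0, 1, +, ·, <}`, with number variables indexed by `ℕ`.
Formulas also allow atomic formulas `t ∈ X_k` (membership in a set variable) and
set quantifiers `allS`; first-order formulas are those avoiding both. -/

inductive PTerm where
  | var : ℕ → PTerm
  | zero : PTerm
  | one : PTerm
  | add : PTerm → PTerm → PTerm
  | mul : PTerm → PTerm → PTerm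

inductive Fml where
  | eq : PTerm → PTerm → Fml
  | lt : PTerm → PTerm → Fml
  | mem : PTerm → ℕ → Fml
  | not : Fml → Fml
  | imp : Fml → Fml → Fml
  | all : ℕ → Fml → Fml
  | allS : ℕ → Fml → Fml

def Fml.and (φ ψ : Fml) : Fml := .not (.imp φ (.not ψ))
def Fml.or (φ ψ : Fml) : Fml := .imp (.not φ) ψ
def Fml.iff (φ ψ : Fml) : Fml := (Fml.imp φ ψ).and (Fml.imp ψ φ)
def Fml.ex (x : ℕ) (φ : Fml) : Fml := .not (.all x (.not φ))
def Fml.exS (k : ℕ) (φ : Fml) : Fml := .not (.allS k (.not φ))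

/-- A structure for the language `{0, 1, +, ·, <}` on a carrier `M`
(bundled, so that several structures can live on the same carrier). -/
structure AStr (M : Type) where
  zero : M
  one : M
  add : M → M → M
  mul : M → M → M
  lt : M → M → Prop

/-- The standard model of arithmetic. -/
def natStr : AStr ℕ := ⟨0, 1, (· + ·), (· * ·), (· < ·)⟩

namespace PTerm

def vars : PTerm → Finset ℕ
  | var n => {n}
  | zero => ∅
  | one => ∅
  | add t u => t.vars ∪ u.vars
  | mul t u => t.vars ∪ u.vars

/-- Substitution of a term `r` for the variable `x` (used only with `r` closed or
with `vars r ⊆ {x}`, in which case it is capture-free). -/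
def subst (x : ℕ) (r : PTerm) : PTerm → PTerm
  | var n => if n = x then r else var n
  | zero => zero
  | one => one
  | add t u => add (subst x r t) (subst x r u)
  | mul t u => mul (subst x r t) (subst x r u)

def val {M : Type} (S : AStr M) (v : ℕ → M) : PTerm → M
  | var n => v n
  | zero => S.zero
  | one => S.one
  | add t u => S.add (t.val S v) (u.val S v)
  | mul t u => S.mul (t.val S v) (u.val S v)

end PTerm

namespace Fml

/-- Free number variables. -/
def freeN : Fml → Finset ℕ
  | eq t u => t.vars ∪ u.vars
  | lt t u => t.vars ∪ u.vars
  | mem t _ => t.vars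
  | not φ => φ.freeN
  | imp φ ψ => φ.freeN ∪ ψ.freeN
  | all x φ => φ.freeN.erase x
  | allS _ φ => φ.freeN

/-- Substitution of a term `r` for the (free) variable `x`. -/
def substN (x : ℕ) (r : PTerm) : Fml → Fml
  | eq t u => eq (PTerm.subst x r t) (PTerm.subst x r u)
  | lt t u => lt (PTerm.subst x r t) (PTerm.subst x r u)
  | mem t k => mem (PTerm.subst x r t) k
  | not φ => not (substN x r φ)
  | imp φ ψ => imp (substN x r φ) (substN x r ψ)
  | all y φ => if y = x then all y φ else all y (substN x r φ)
  | allS k φ => allS k (substN x r φ)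

/-- First-order formulas: no set variables, no set quantifiers. -/
def IsFO : Fml → Prop
  | eq _ _ => True
  | lt _ _ => True
  | mem _ _ => False
  | not φ => φ.IsFO
  | imp φ ψ => φ.IsFO ∧ ψ.IsFO
  | all _ φ => φ.IsFO
  | allS _ _ => False

/-- Arithmetical formulas: set variables allowed as parameters, but no set quantifiers. -/
def IsArith : Fml → Prop
  | eq _ _ => True
  | lt _ _ => True
  | mem _ _ => True
  | not φ => φ.IsArith
  | imp φ ψ => φ.IsArith ∧ ψ.IsArith
  | all _ φ => φ.IsArith
  | allS _ _ => False

end Fml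

/-! ### Satisfaction -/

/-- Satisfaction for a second-order structure `(M, 𝔛)`: number quantifiers range over `M`,
set quantifiers range over `𝔛`. -/
def Sat {M : Type} (S : AStr M) (𝔛 : Set (Set M)) : (ℕ → M) → (ℕ → Set M) → Fml → Prop
  | v, _, .eq t u => t.val S v = u.val S v
  | v, _, .lt t u => S.lt (t.val S v) (u.val S v)
  | v, w, .mem t k => t.val S v ∈ w k
  | v, w, .not φ => ¬ Sat S 𝔛 v w φ
  | v, w, .imp φ ψ => Sat S 𝔛 v w φ → Sat S 𝔛 v w ψ
  | v, w, .all x φ => ∀ a : M, Sat S 𝔛 (Function.update v x a) w φ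
  | v, w, .allS k φ => ∀ X ∈ 𝔛, Sat S 𝔛 v (Function.update w k X) φ

/-- First-order satisfaction. -/
def SatFO {M : Type} (S : AStr M) (v : ℕ → M) (φ : Fml) : Prop :=
  Sat S Set.univ v (fun _ => ∅) φ

/-- `M ⊨ T` for a first-order theory `T`. -/
def ModelsT {M : Type} (S : AStr M) (T : Set Fml) : Prop :=
  ∀ φ ∈ T, ∀ v, SatFO S v φ

/-- Semantic consequence (equivalently, by the completeness theorem, provability). -/
def Proves (T : Set Fml) (φ : Fml) : Prop :=
  ∀ (M : Type) (S : AStr M), ModelsT S T → ∀ v, SatFO S v φ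

/-- Consistency (equivalently, by the completeness theorem, having a model). -/
def ConsistentT (T : Set Fml) : Prop :=
  ∃ (M : Type) (S : AStr M), ModelsT S T

def IsFOSentence (φ : Fml) : Prop := φ.IsFO ∧ φ.freeN = ∅

/-- Completeness of a theory. -/
def CompleteT (T : Set Fml) : Prop :=
  ∀ φ, IsFOSentence φ → (Proves T φ ∨ Proves T φ.not)

/-! ### Peano arithmetic -/

def numeral : ℕ → PTerm
  | 0 => .zero
  | n + 1 => .add (numeral n) .one

def univClosure (φ : Fml) : Fml := (φ.freeN.sort (· ≤ ·)).foldr Fml.all φ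

/-- The induction axiom for `φ` in the variable `x` (before taking universal closure). -/
def indFml (φ : Fml) (x : ℕ) : Fml :=
  .imp ((φ.substN x .zero).and (.all x (.imp φ (φ.substN x (.add (.var x) .one)))))
    (.all x φ)

/-- The axioms of first-order Peano arithmetic `PA`. -/
def PAax : Set Fml :=
  {Fml.all 0 (.not (.eq (.add (.var 0) .one) .zero)),
   Fml.all 0 (.all 1 (.imp (.eq (.add (.var 0) .one) (.add (.var 1) .one))
     (.eq (.var 0) (.var 1)))),
   Fml.all 0 (.eq (.add (.var 0) .zero) (.var 0)),
   Fml.all 0 (.all 1 (.eq (.add (.var 0) (.add (.var 1) .one))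
     (.add (.add (.var 0) (.var 1)) .one))),
   Fml.all 0 (.eq (.mul (.var 0) .zero) .zero),
   Fml.all 0 (.all 1 (.eq (.mul (.var 0) (.add (.var 1) .one))
     (.add (.mul (.var 0) (.var 1)) (.var 0)))),
   Fml.all 0 (.all 1 (Fml.iff (.lt (.var 0) (.var 1))
     (Fml.ex 2 (.eq (.add (.var 0) (.add (.var 2) .one)) (.var 1)))))} ∪
  {ψ | ∃ φ x, Fml.IsFO φ ∧ ψ = univClosure (indFml φ x)}

/-! ### Gödel coding -/

/-- The Cantor pairing function (the canonical pairing `⟨·,·⟩`). -/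
def cpair (a b : ℕ) : ℕ := (a + b) * (a + b + 1) / 2 + a

def PTerm.code : PTerm → ℕ
  | .var n => cpair 0 n
  | .zero => cpair 1 0
  | .one => cpair 2 0
  | .add t u => cpair 3 (cpair t.code u.code)
  | .mul t u => cpair 4 (cpair t.code u.code)

def Fml.code : Fml → ℕ
  | .eq t u => cpair 5 (cpair t.code u.code)
  | .lt t u => cpair 6 (cpair t.code u.code)
  | .not φ => cpair 7 φ.code
  | .imp φ ψ => cpair 8 (cpair φ.code ψ.code)
  | .all x φ => cpair 9 (cpair x φ.code)
  | .mem t k => cpair 10 (cpair t.code k)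
  | .allS k φ => cpair 11 (cpair k φ.code)

/-- A theory identified with its set of Gödel codes. -/
def theoryCode (T : Set Fml) : Set ℕ := Fml.code '' T

/-! ### The arithmetical hierarchy (syntactic classes) -/

inductive IsDelta0 : Fml → Prop
  | eq (t u) : IsDelta0 (.eq t u)
  | lt (t u) : IsDelta0 (.lt t u)
  | mem (t k) : IsDelta0 (.mem t k)
  | not {φ} : IsDelta0 φ → IsDelta0 φ.not
  | imp {φ ψ} : IsDelta0 φ → IsDelta0 ψ → IsDelta0 (φ.imp ψ)
  | ball {φ} (x t) : x ∉ PTerm.vars t → IsDelta0 φ →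
      IsDelta0 (.all x (.imp (.lt (.var x) t) φ))

def IsSigma01 (φ : Fml) : Prop := ∃ x ψ, IsDelta0 ψ ∧ φ = Fml.ex x ψ

def IsPi01 (φ : Fml) : Prop := ∃ x ψ, IsDelta0 ψ ∧ φ = Fml.all x ψ

/-! ### Subsystems of second-order arithmetic, semantically -/

/-- The basic axioms (`PA⁻`, a discretely ordered commutative semiring). -/
def PAminusSem {M : Type} (S : AStr M) : Prop :=
  (∀ a b c : M, S.add a (S.add b c) = S.add (S.add a b) c) ∧
  (∀ a b : M, S.add a b = S.add b a) ∧
  (∀ a b c : M, S.mul a (S.mul b c) = S.mul (S.mul a b) c) ∧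
  (∀ a b : M, S.mul a b = S.mul b a) ∧
  (∀ a b c : M, S.mul a (S.add b c) = S.add (S.mul a b) (S.mul a c)) ∧
  (∀ a : M, S.add a S.zero = a) ∧
  (∀ a : M, S.mul a S.zero = S.zero) ∧
  (∀ a : M, S.mul a S.one = a) ∧
  (∀ a b c : M, S.lt a b → S.lt b c → S.lt a c) ∧
  (∀ a : M, ¬ S.lt a a) ∧
  (∀ a b : M, S.lt a b ∨ a = b ∨ S.lt b a) ∧
  (∀ a b c : M, S.lt a b → S.lt (S.add a c) (S.add b c)) ∧
  (∀ a b c : M, S.lt S.zero c → S.lt a b → S.lt (S.mul a c) (S.mul b c)) ∧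
  (∀ a b : M, S.lt a b → ∃ c : M, S.add a c = b) ∧
  S.lt S.zero S.one ∧
  (∀ a : M, S.lt S.zero a → a = S.one ∨ S.lt S.one a) ∧
  (∀ a : M, a = S.zero ∨ S.lt S.zero a)

/-- `(M,𝔛)` satisfies the induction axiom for `φ` in the variable `x`
(with arbitrary number and set parameters). -/
def SatInd {M : Type} (S : AStr M) (𝔛 : Set (Set M)) (φ : Fml) (x : ℕ) : Prop :=
  ∀ (v : ℕ → M) (w : ℕ → Set M), (∀ k, w k ∈ 𝔛) →
    (Sat S 𝔛 (Function.update v x S.zero) w φ ∧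
      ∀ a, Sat S 𝔛 (Function.update v x a) w φ →
        Sat S 𝔛 (Function.update v x (S.add a S.one)) w φ) →
    ∀ a, Sat S 𝔛 (Function.update v x a) w φ

/-- `(M,𝔛) ⊨ RCA₀`: basic axioms, `Σ⁰₁` induction and `Δ⁰₁` comprehension. -/
def SatRCA0 {M : Type} (S : AStr M) (𝔛 : Set (Set M)) : Prop :=
  PAminusSem S ∧
  (∀ φ x, IsSigma01 φ → SatInd S 𝔛 φ x) ∧
  (∀ φ ψ x, IsSigma01 φ → IsPi01 ψ →
    ∀ (v : ℕ → M) (w : ℕ → Set M), (∀ k, w k ∈ 𝔛) →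
      (∀ a, Sat S 𝔛 (Function.update v x a) w φ ↔ Sat S 𝔛 (Function.update v x a) w ψ) →
      {a : M | Sat S 𝔛 (Function.update v x a) w φ} ∈ 𝔛)

/-- `(M,𝔛) ⊨ ACA₀`: basic axioms, the induction axiom and arithmetical comprehension. -/
def SatACA0 {M : Type} (S : AStr M) (𝔛 : Set (Set M)) : Prop :=
  PAminusSem S ∧
  (∀ X ∈ 𝔛, S.zero ∈ X → (∀ a, a ∈ X → S.add a S.one ∈ X) → ∀ a, a ∈ X) ∧
  (∀ φ x, Fml.IsArith φ → ∀ (v : ℕ → M) (w : ℕ → Set M), (∀ k, w k ∈ 𝔛) →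
    {a : M | Sat S 𝔛 (Function.update v x a) w φ} ∈ 𝔛)

/-! ### Arithmetization inside a model

All notions below unfold the standard (`Δ₀`/`Σ₁`) arithmetized definitions at the
meta-level, using the operations of a structure `S : AStr M`.  On models of `IΣ₁`
they agree with satisfaction of the corresponding arithmetic formulas. -/

namespace AStr

variable {M : Type} (S : AStr M)

/-- Interpretation of numerals. -/
def num : ℕ → M
  | 0 => S.zero
  | n + 1 => S.add (num n) S.one

def le (a b : M) : Prop := S.lt a b ∨ a = b

def two : M := S.add S.one S.one

/-- `p = ⟨a,b⟩` for the Cantor pairing function: `2p = (a+b)(a+b+1) + 2a`. -/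
def PairRel (p a b : M) : Prop :=
  S.mul S.two p = S.add (S.mul (S.add a b) (S.add (S.add a b) S.one)) (S.mul S.two a)

/-- `r = a mod m`. -/
def ModRel (a m r : M) : Prop := S.lt r m ∧ ∃ q, a = S.add (S.mul q m) r

/-- Gödel's β-function: `x = β(c, i)` where `c = ⟨a,b⟩` and `x = a mod (1 + (i+1)b)`. -/
def BetaRel (c i x : M) : Prop :=
  ∃ a b, S.PairRel c a b ∧ S.ModRel a (S.add S.one (S.mul (S.add i S.one) b)) x

/-- `s` codes a sequence of length `l` (as `s = ⟨c, l⟩`). -/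
def SeqLen (s l : M) : Prop := ∃ c, S.PairRel s c l

/-- The `i`-th entry of the sequence coded by `s` is `x`. -/
def SeqAt (s i x : M) : Prop := ∃ c l, S.PairRel s c l ∧ S.lt i l ∧ S.BetaRel c i x

/-- The fixed `Δ₀` coding formula `x ∈ y` for (bounded) sets:
`y = ⟨a,b⟩` and `a mod (1 + (x+1)b) = 1` with modulus `> 1`, and `x < y`. -/
def MemRel (x y : M) : Prop :=
  S.lt x y ∧ ∃ a b, S.PairRel y a b ∧
    S.lt S.one (S.add S.one (S.mul (S.add x S.one) b)) ∧
    S.ModRel a (S.add S.one (S.mul (S.add x S.one) b)) S.one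

/-- Tagged pairs, used for codes of syntax: `x = ⟨tag, payload⟩`. -/
def Node (x tag payload : M) : Prop := S.PairRel x tag payload

/-- `x` is the code of the variable `v`. -/
def VarC (v x : M) : Prop := S.Node x (S.num 0) v

def AddC (t u y : M) : Prop := ∃ p, S.PairRel p t u ∧ S.Node y (S.num 3) p
def MulC (t u y : M) : Prop := ∃ p, S.PairRel p t u ∧ S.Node y (S.num 4) p
def EqC (t u y : M) : Prop := ∃ p, S.PairRel p t u ∧ S.Node y (S.num 5) p
def LtC (t u y : M) : Prop := ∃ p, S.PairRel p t u ∧ S.Node y (S.num 6) p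
def NotC (x y : M) : Prop := S.Node y (S.num 7) x
def ImpC (x y z : M) : Prop := ∃ p, S.PairRel p x y ∧ S.Node z (S.num 8) p
def AllC (v x y : M) : Prop := ∃ p, S.PairRel p v x ∧ S.Node y (S.num 9) p

/-- `s` codes a construction sequence for terms. -/
def IsTermConSeq (s : M) : Prop :=
  ∀ i x, S.SeqAt s i x →
    (∃ v, S.VarC v x) ∨ S.Node x (S.num 1) (S.num 0) ∨ S.Node x (S.num 2) (S.num 0) ∨
    (∃ j k y z, S.lt j i ∧ S.lt k i ∧ S.SeqAt s j y ∧ S.SeqAt s k z ∧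
      (S.AddC y z x ∨ S.MulC y z x))

/-- `x` is a term code (in the sense of `M`, possibly nonstandard). -/
def TermCodeM (x : M) : Prop := ∃ s i, S.IsTermConSeq s ∧ S.SeqAt s i x

/-- `s` codes a construction sequence for (first-order) formulas. -/
def IsFmlConSeq (s : M) : Prop :=
  ∀ i x, S.SeqAt s i x →
    (∃ t u, S.TermCodeM t ∧ S.TermCodeM u ∧ (S.EqC t u x ∨ S.LtC t u x)) ∨
    (∃ j y, S.lt j i ∧ S.SeqAt s j y ∧ S.NotC y x) ∨
    (∃ j k y z, S.lt j i ∧ S.lt k i ∧ S.SeqAt s j y ∧ S.SeqAt s k z ∧ S.ImpC y z x) ∨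
    (∃ j v y, S.lt j i ∧ S.SeqAt s j y ∧ S.AllC v y x)

/-- `x` is a formula code (in the sense of `M`, possibly nonstandard). -/
def FmlCodeM (x : M) : Prop := ∃ s i, S.IsFmlConSeq s ∧ S.SeqAt s i x

/-- Construction sequences of pairs (term code, occurrence flag for the variable `v`). -/
def IsOccConSeq (v s : M) : Prop :=
  ∀ i p, S.SeqAt s i p → ∃ x f, S.PairRel p x f ∧
    ((S.VarC v x ∧ f = S.num 1) ∨
     (∃ u, S.VarC u x ∧ u ≠ v ∧ f = S.num 0) ∨
     ((S.Node x (S.num 1) (S.num 0) ∨ S.Node x (S.num 2) (S.num 0)) ∧ f = S.num 0) ∨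
     (∃ j k y z g h pj pk, S.lt j i ∧ S.lt k i ∧ S.SeqAt s j pj ∧ S.SeqAt s k pk ∧
       S.PairRel pj y g ∧ S.PairRel pk z h ∧ (S.AddC y z x ∨ S.MulC y z x) ∧
       ((f = S.num 1 ∧ (g = S.num 1 ∨ h = S.num 1)) ∨
        (f = S.num 0 ∧ g = S.num 0 ∧ h = S.num 0))))

/-- `f = 1` iff the variable `v` occurs in the term coded by `t` (`f ∈ {0,1}`). -/
def OccT (v t f : M) : Prop :=
  ∃ s i p, S.IsOccConSeq v s ∧ S.SeqAt s i p ∧ S.PairRel p t f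

/-- Construction sequences of pairs (formula code, freeness flag for the variable `v`). -/
def IsFreeConSeq (v s : M) : Prop :=
  ∀ i p, S.SeqAt s i p → ∃ x f, S.PairRel p x f ∧
    ((∃ t u, (S.EqC t u x ∨ S.LtC t u x) ∧
       ((f = S.num 1 ∧ (S.OccT v t (S.num 1) ∨ S.OccT v u (S.num 1))) ∨
        (f = S.num 0 ∧ S.OccT v t (S.num 0) ∧ S.OccT v u (S.num 0)))) ∨
     (∃ j y g pj, S.lt j i ∧ S.SeqAt s j pj ∧ S.PairRel pj y g ∧ S.NotC y x ∧ f = g) ∨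
     (∃ j k y z g h pj pk, S.lt j i ∧ S.lt k i ∧ S.SeqAt s j pj ∧ S.SeqAt s k pk ∧
       S.PairRel pj y g ∧ S.PairRel pk z h ∧ S.ImpC y z x ∧
       ((f = S.num 1 ∧ (g = S.num 1 ∨ h = S.num 1)) ∨
        (f = S.num 0 ∧ g = S.num 0 ∧ h = S.num 0))) ∨
     (∃ j w y g pj, S.lt j i ∧ S.SeqAt s j pj ∧ S.PairRel pj y g ∧ S.AllC w y x ∧
       ((w = v ∧ f = S.num 0) ∨ (w ≠ v ∧ f = g))))

/-- `f = 1` iff the variable `v` is free in the formula coded by `φ`. -/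
def FreeF (v φ f : M) : Prop :=
  ∃ s i p, S.IsFreeConSeq v s ∧ S.SeqAt s i p ∧ S.PairRel p φ f

/-- Construction sequences of pairs (term code, result of substituting `t` for `v`). -/
def IsSubTConSeq (v t s : M) : Prop :=
  ∀ i p, S.SeqAt s i p → ∃ x x', S.PairRel p x x' ∧
    ((S.VarC v x ∧ x' = t) ∨
     (∃ u, S.VarC u x ∧ u ≠ v ∧ x' = x) ∨
     ((S.Node x (S.num 1) (S.num 0) ∨ S.Node x (S.num 2) (S.num 0)) ∧ x' = x) ∨
     (∃ j k y z y' z' pj pk, S.lt j i ∧ S.lt k i ∧ S.SeqAt s j pj ∧ S.SeqAt s k pk ∧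
       S.PairRel pj y y' ∧ S.PairRel pk z z' ∧
       ((S.AddC y z x ∧ S.AddC y' z' x') ∨ (S.MulC y z x ∧ S.MulC y' z' x'))))

/-- Substitution of the term (code) `t` for the variable `v` in terms: `x' = x[t/v]`. -/
def SubT (v t x x' : M) : Prop :=
  ∃ s i p, S.IsSubTConSeq v t s ∧ S.SeqAt s i p ∧ S.PairRel p x x'

/-- Construction sequences for capture-free substitution in formulas. -/
def IsSubFConSeq (v t s : M) : Prop :=
  ∀ i p, S.SeqAt s i p → ∃ x x', S.PairRel p x x' ∧
    ((∃ a b a' b', S.SubT v t a a' ∧ S.SubT v t b b' ∧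
       ((S.EqC a b x ∧ S.EqC a' b' x') ∨ (S.LtC a b x ∧ S.LtC a' b' x'))) ∨
     (∃ j y y' pj, S.lt j i ∧ S.SeqAt s j pj ∧ S.PairRel pj y y' ∧
       S.NotC y x ∧ S.NotC y' x') ∨
     (∃ j k y z y' z' pj pk, S.lt j i ∧ S.lt k i ∧ S.SeqAt s j pj ∧ S.SeqAt s k pk ∧
       S.PairRel pj y y' ∧ S.PairRel pk z z' ∧ S.ImpC y z x ∧ S.ImpC y' z' x') ∨
     (∃ w y, S.AllC w y x ∧
       ((w = v ∧ x' = x) ∨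
        (w ≠ v ∧ (S.OccT w t (S.num 0) ∨ S.FreeF v y (S.num 0)) ∧
          ∃ j y' pj, S.lt j i ∧ S.SeqAt s j pj ∧ S.PairRel pj y y' ∧ S.AllC w y' x'))))

/-- Capture-free substitution in formulas: `x' = x[t/v]`, with `t` substitutable for `v`. -/
def SubF (v t x x' : M) : Prop :=
  ∃ s i p, S.IsSubFConSeq v t s ∧ S.SeqAt s i p ∧ S.PairRel p x x'

/-- `x` is (the code of) a generalization `∀v₁ ⋯ ∀vₖ y` of `y`. -/
def GenOf (y x : M) : Prop :=
  ∃ s i, S.SeqAt s (S.num 0) y ∧ S.SeqAt s i x ∧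
    ∀ j z z', S.SeqAt s j z → S.SeqAt s (S.add j S.one) z' → S.le (S.add j S.one) i →
      ∃ v, S.AllC v z z'

/-- Codes of instances of the logical axiom schemes (a Hilbert-style calculus with
modus ponens as the only rule; axioms are taken together with their generalizations). -/
def LogAxCore (x : M) : Prop :=
  -- A1 : a → (b → a)
  (∃ a b y, S.FmlCodeM a ∧ S.FmlCodeM b ∧ S.ImpC b a y ∧ S.ImpC a y x) ∨
  -- A2 : (a → (b → c)) → ((a → b) → (a → c))
  (∃ a b c bc abc ab ac r, S.FmlCodeM a ∧ S.FmlCodeM b ∧ S.FmlCodeM c ∧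
    S.ImpC b c bc ∧ S.ImpC a bc abc ∧ S.ImpC a b ab ∧ S.ImpC a c ac ∧
    S.ImpC ab ac r ∧ S.ImpC abc r x) ∨
  -- A3 : (¬b → ¬a) → (a → b)
  (∃ a b na nb l r, S.FmlCodeM a ∧ S.FmlCodeM b ∧ S.NotC a na ∧ S.NotC b nb ∧
    S.ImpC nb na l ∧ S.ImpC a b r ∧ S.ImpC l r x) ∨
  -- A4 : ∀v a → a[t/v]
  (∃ v t a a' al, S.TermCodeM t ∧ S.FmlCodeM a ∧ S.AllC v a al ∧ S.SubF v t a a' ∧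
    S.ImpC al a' x) ∨
  -- A5 : ∀v (a → b) → (∀v a → ∀v b)
  (∃ v a b ab alab ala alb r, S.FmlCodeM a ∧ S.FmlCodeM b ∧ S.ImpC a b ab ∧
    S.AllC v ab alab ∧ S.AllC v a ala ∧ S.AllC v b alb ∧ S.ImpC ala alb r ∧
    S.ImpC alab r x) ∨
  -- A6 : a → ∀v a, for v not free in a
  (∃ v a ala, S.FmlCodeM a ∧ S.FreeF v a (S.num 0) ∧ S.AllC v a ala ∧ S.ImpC a ala x) ∨
  -- E1 : t = t
  (∃ t, S.TermCodeM t ∧ S.EqC t t x) ∨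
  -- E2 : u = w → w = u (variables)
  (∃ u w vu vw e1 e2, S.VarC u vu ∧ S.VarC w vw ∧ S.EqC vu vw e1 ∧ S.EqC vw vu e2 ∧
    S.ImpC e1 e2 x) ∨
  -- E3 : u = w → (w = z → u = z) (variables)
  (∃ u w z vu vw vz e1 e2 e3 r, S.VarC u vu ∧ S.VarC w vw ∧ S.VarC z vz ∧
    S.EqC vu vw e1 ∧ S.EqC vw vz e2 ∧ S.EqC vu vz e3 ∧ S.ImpC e2 e3 r ∧ S.ImpC e1 r x) ∨
  -- E4 : congruence of +, ·, < with respect to = (variables)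
  (∃ u1 w1 u2 w2 a1 b1 a2 b2 e1 e2 s1 s2 es r,
    S.VarC u1 a1 ∧ S.VarC w1 b1 ∧ S.VarC u2 a2 ∧ S.VarC w2 b2 ∧
    S.EqC a1 b1 e1 ∧ S.EqC a2 b2 e2 ∧
    ((S.AddC a1 a2 s1 ∧ S.AddC b1 b2 s2 ∧ S.EqC s1 s2 es) ∨
     (S.MulC a1 a2 s1 ∧ S.MulC b1 b2 s2 ∧ S.EqC s1 s2 es) ∨
     (S.LtC a1 a2 s1 ∧ S.LtC b1 b2 s2 ∧ S.ImpC s1 s2 es)) ∧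
    S.ImpC e2 es r ∧ S.ImpC e1 r x) ∨
  -- E5 : congruence of = (variables)
  (∃ u1 w1 u2 w2 a1 b1 a2 b2 e1 e2 d1 d2 inner r,
    S.VarC u1 a1 ∧ S.VarC w1 b1 ∧ S.VarC u2 a2 ∧ S.VarC w2 b2 ∧
    S.EqC a1 b1 e1 ∧ S.EqC a2 b2 e2 ∧ S.EqC a1 a2 d1 ∧ S.EqC b1 b2 d2 ∧
    S.ImpC d1 d2 inner ∧ S.ImpC e2 inner r ∧ S.ImpC e1 r x)

/-- Logical axioms: generalizations of instances of the axiom schemes. -/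
def LogAx (x : M) : Prop := ∃ y, S.LogAxCore y ∧ S.GenOf y x

/-- `s` codes a proof of `φ` from the set `Γ ⊆ M` of (codes of) sentences:
every entry is a logical axiom, a member of `Γ`, or follows by modus ponens. -/
def ProofFrom (Γ : Set M) (s φ : M) : Prop :=
  (∃ i, S.SeqAt s i φ) ∧
  ∀ i x, S.SeqAt s i x →
    S.LogAx x ∨ x ∈ Γ ∨
    (∃ j k y z, S.lt j i ∧ S.lt k i ∧ S.SeqAt s j y ∧ S.SeqAt s k z ∧ S.ImpC y x z)

/-- Provability (in the sense of `M`) from the axiom set `Γ ⊆ M`. -/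
def ProvFrom (Γ : Set M) (φ : M) : Prop := ∃ s, S.ProofFrom Γ s φ

/-- `M ⊨ Con_Γ` : there is no (possibly nonstandard) proof of a contradiction from `Γ`. -/
def ConOf (Γ : Set M) : Prop :=
  ¬ ∃ φ nφ, S.NotC φ nφ ∧ S.ProvFrom Γ φ ∧ S.ProvFrom Γ nφ

/-- `M ⊨ Con_T` for a (standard) theory `T`: `M` thinks every finite subtheory
of `T` is consistent. -/
def SatConTheory (T : Set Fml) : Prop :=
  ∀ F : Finset Fml, ↑F ⊆ T → S.ConOf {x : M | ∃ φ ∈ F, x = S.num (Fml.code φ)}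

/-! ### Coded sets, standard systems, filters on `P_𝔛` -/

/-- `A` is unbounded in `M`. -/
def Unb (A : Set M) : Prop := ∀ b, ∃ a ∈ A, S.lt b a

/-- `P_𝔛`: the collection of unbounded sets in `𝔛` (a partial order under `⊆`). -/
def PX (𝔛 : Set (Set M)) : Set (Set M) := {A | A ∈ 𝔛 ∧ S.Unb A}

/-- The `a`-th slice `(A)_a = {b | ⟨a,b⟩ ∈ A}`. -/
def SliceAt (A : Set M) (a : M) : Set M := {b | ∃ p, S.PairRel p a b ∧ p ∈ A}

/-- A function `M → M` is coded in `𝔛` if its graph (via the canonical pairing)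
belongs to `𝔛`. -/
def CodedFun (𝔛 : Set (Set M)) (f : M → M) : Prop :=
  ∃ G ∈ 𝔛, ∀ a b, f a = b ↔ b ∈ S.SliceAt G a

/-- A family `F` of sets is definable (over `(M,𝔛)`) if `{a | (A)_a ∈ F} ∈ 𝔛`
for every `A ∈ 𝔛`. -/
def DefinableFam (𝔛 F : Set (Set M)) : Prop :=
  ∀ A ∈ 𝔛, {a : M | S.SliceAt A a ∈ F} ∈ 𝔛

/-- `F` is a complete family: every function coded in `𝔛` with bounded range is
constant on some member of `F`. -/
def CompleteOn (𝔛 F : Set (Set M)) : Prop :=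
  ∀ f : M → M, S.CodedFun 𝔛 f → (∃ b, ∀ a, S.lt (f a) b) →
    ∃ A ∈ F, ∀ x ∈ A, ∀ y ∈ A, f x = f y

/-- The standard system `SSy(M)`: standard parts of the `M`-coded sets. -/
def SSy : Set (Set ℕ) := {A | ∃ c : M, ∀ n : ℕ, (n ∈ A ↔ S.MemRel (S.num n) c)}

/-- `M` is nonstandard. -/
def Nonstd : Prop := ∃ a : M, ∀ n : ℕ, a ≠ S.num n

/-- `M` is recursively saturated: every recursive type (in the variable `0`, with
finitely many parameters assigned to the variables `1, …, k`) that is finitely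
realized in `M` is realized in `M`. -/
def RecSat : Prop :=
  ∀ (p : Set Fml) (k : ℕ) (par : ℕ → M),
    (∀ φ ∈ p, Fml.IsFO φ ∧ φ.freeN ⊆ Finset.range (k + 1)) →
    ComputablePred (fun n => ∃ φ ∈ p, Fml.code φ = n) →
    (∀ F : Finset Fml, ↑F ⊆ p →
      ∃ a : M, ∀ φ ∈ F, SatFO S (fun i => if i = 0 then a else par i) φ) →
    ∃ a : M, ∀ φ ∈ p, SatFO S (fun i => if i = 0 then a else par i) φ

/-- `c` is the least code of the (bounded) set `A`. -/
def IsLeastCode (A : Set M) (c : M) : Prop :=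
  (∀ x, S.MemRel x c ↔ x ∈ A) ∧ ∀ c', (∀ x, S.MemRel x c' ↔ x ∈ A) → S.le c c'

/-- `A* = {⟨A ∩ I_{<a}⟩ | a ∈ M}`, the set of least codes of initial segments of `A`. -/
def star (A : Set M) : Set M :=
  {c | ∃ a, S.IsLeastCode (A ∩ {b | S.lt b a}) c}

end AStr

/-! ### Filters and partial orders of sets -/

/-- A filter on a partial order `P` of sets, ordered by inclusion: a proper, nonempty,
upward closed, downward directed subset of `P`. -/
def IsFilterOn {α : Type} (P F : Set (Set α)) : Prop :=
  F ⊆ P ∧ F.Nonempty ∧ F ≠ P ∧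
  (∀ A ∈ F, ∀ B ∈ P, A ⊆ B → B ∈ F) ∧
  (∀ A ∈ F, ∀ B ∈ F, ∃ C ∈ F, C ⊆ A ∧ C ⊆ B)

/-- An ultrafilter on a partial order of sets: a maximal filter. -/
def IsUltraOn {α : Type} (P U : Set (Set α)) : Prop :=
  IsFilterOn P U ∧ ∀ F, IsFilterOn P F → U ⊆ F → F = U

/-- A principal filter on a partial order of sets. -/
def IsPrincipalOn {α : Type} (P U : Set (Set α)) : Prop :=
  ∃ A ∈ P, U = {B | B ∈ P ∧ A ⊆ B}

/-- The countable chain condition for a partial order `P` of sets (ordered by `⊆`):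
every uncountable subset contains two distinct compatible elements. -/
def CCCOn {α : Type} (P : Set (Set α)) : Prop :=
  ∀ A : Set (Set α), A ⊆ P → ¬A.Countable →
    ∃ X ∈ A, ∃ Y ∈ A, X ≠ Y ∧ ∃ Z ∈ P, Z ⊆ X ∧ Z ⊆ Y

/-- `𝔛` is a Boolean algebra of sets. -/
def IsBoolAlg {α : Type} (𝔛 : Set (Set α)) : Prop :=
  Set.univ ∈ 𝔛 ∧ ∅ ∈ 𝔛 ∧
  (∀ A ∈ 𝔛, ∀ B ∈ 𝔛, A ∪ B ∈ 𝔛) ∧ (∀ A ∈ 𝔛, ∀ B ∈ 𝔛, A ∩ B ∈ 𝔛) ∧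
  (∀ A ∈ 𝔛, Aᶜ ∈ 𝔛)

/-- A filter on the Boolean algebra `𝔛`. -/
def IsBAFilter {α : Type} (𝔛 F : Set (Set α)) : Prop :=
  F ⊆ 𝔛 ∧ F.Nonempty ∧ ∅ ∉ F ∧
  (∀ A ∈ F, ∀ B ∈ 𝔛, A ⊆ B → B ∈ F) ∧
  (∀ A ∈ F, ∀ B ∈ F, A ∩ B ∈ F)

/-- An ultrafilter on the Boolean algebra `𝔛`: a maximal filter. -/
def IsBAUltra {α : Type} (𝔛 F : Set (Set α)) : Prop :=
  IsBAFilter 𝔛 F ∧ ∀ G, IsBAFilter 𝔛 G → F ⊆ G → G = F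

/-! ### Scott sets -/

/-- Oracle partial recursive functions: partial recursive in the oracle `O`. -/
inductive RecursiveIn (O : ℕ →. ℕ) : (ℕ →. ℕ) → Prop
  | oracle : RecursiveIn O O
  | zero : RecursiveIn O (pure 0)
  | succ : RecursiveIn O Nat.succ
  | left : RecursiveIn O ↑fun n : ℕ => n.unpair.1
  | right : RecursiveIn O ↑fun n : ℕ => n.unpair.2
  | pair {f g} : RecursiveIn O f → RecursiveIn O g →
      RecursiveIn O fun n => Nat.pair <$> f n <*> g n
  | comp {f g} : RecursiveIn O f → RecursiveIn O g →
      RecursiveIn O fun n => g n >>= f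
  | prec {f g} : RecursiveIn O f → RecursiveIn O g →
      RecursiveIn O (Nat.unpaired fun a n =>
        n.rec (f a) fun y IH => do let i ← IH; g (Nat.pair a (Nat.pair y i)))
  | rfind {f} : RecursiveIn O f →
      RecursiveIn O fun a => Nat.rfind fun n => (fun m => m = 0) <$> f (Nat.pair a n)

/-- The characteristic function of a set of natural numbers. -/
noncomputable def chi (A : Set ℕ) : ℕ →. ℕ :=
  fun n => Part.some (@ite _ (n ∈ A) (Classical.propDecidable _) 1 0)

/-- Turing reducibility: `B ≤_T A`. -/
def TuringLe (B A : Set ℕ) : Prop := RecursiveIn (chi A) (chi B)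

/-- A set of naturals coding a binary tree (codes of finite binary strings,
closed under initial segments). -/
def IsTreeCode (T : Set ℕ) : Prop :=
  (∀ n ∈ T, ∃ l : List Bool, Encodable.encode l = n) ∧
  (∀ l₁ l₂ : List Bool, l₁ <+: l₂ → Encodable.encode l₂ ∈ T → Encodable.encode l₁ ∈ T)

/-- `B` (as the characteristic function of a branch) is an infinite branch of the
binary tree coded by `T`. -/
def IsBranchThrough (B T : Set ℕ) : Prop :=
  ∀ n : ℕ, ∃ l : List Bool, l.length = n ∧
    (∀ i : Fin l.length, (l.get i = true ↔ (i : ℕ) ∈ B)) ∧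
    Encodable.encode l ∈ T

/-- A Scott set: a nonempty Boolean algebra of subsets of `ω` closed under relative
recursion and containing an infinite branch of every infinite binary tree coded in it. -/
def IsScottSet (𝔛 : Set (Set ℕ)) : Prop :=
  𝔛.Nonempty ∧
  (∀ A ∈ 𝔛, ∀ B ∈ 𝔛, A ∪ B ∈ 𝔛) ∧
  (∀ A ∈ 𝔛, Aᶜ ∈ 𝔛) ∧
  (∀ A ∈ 𝔛, ∀ B : Set ℕ, TuringLe B A → B ∈ 𝔛) ∧
  (∀ T ∈ 𝔛, IsTreeCode T → T.Infinite → ∃ B ∈ 𝔛, IsBranchThrough B T)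

/-- The sets represented in the theory `T`. -/
def repSet (T : Set Fml) : Set (Set ℕ) :=
  {A | ∃ φ : Fml, Fml.IsFO φ ∧ φ.freeN ⊆ {0} ∧
    ∀ n : ℕ, (n ∈ A → Proves T (φ.substN 0 (numeral n))) ∧
      (n ∉ A → Proves T (Fml.not (φ.substN 0 (numeral n))))}

/-- Martin's axiom. -/
def MartinsAxiom : Prop :=
  ∀ (P : Type) (_ : PartialOrder P),
    (∀ A : Set P, ¬A.Countable → ∃ x ∈ A, ∃ y ∈ A, x ≠ y ∧ ∃ z, z ≤ x ∧ z ≤ y) →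
    ∀ 𝒟 : Set (Set P), (∀ D ∈ 𝒟, ∀ x : P, ∃ y ∈ D, y ≤ x) →
      Cardinal.mk 𝒟 < Cardinal.continuum →
      ∃ F : Set P, F.Nonempty ∧ (∀ x ∈ F, ∀ y, x ≤ y → y ∈ F) ∧
        (∀ x ∈ F, ∀ y ∈ F, ∃ z ∈ F, z ≤ x ∧ z ≤ y) ∧
        ∀ D ∈ 𝒟, (F ∩ D).Nonempty

/-! ### Satisfaction, renaming and substitution -/

section Fmls

variable {M : Type} {S : AStr M}

theorem satFO_eq {v : ℕ → M} {t u : PTerm} : SatFO S v (.eq t u) ↔ t.val S v = u.val S v := Iff.rfl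
theorem satFO_lt {v : ℕ → M} {t u : PTerm} :
    SatFO S v (.lt t u) ↔ S.lt (t.val S v) (u.val S v) := Iff.rfl
theorem satFO_not {v : ℕ → M} {φ : Fml} : SatFO S v φ.not ↔ ¬ SatFO S v φ := Iff.rfl
theorem satFO_imp {v : ℕ → M} {φ ψ : Fml} :
    SatFO S v (φ.imp ψ) ↔ (SatFO S v φ → SatFO S v ψ) := Iff.rfl
theorem satFO_all {v : ℕ → M} {x : ℕ} {φ : Fml} :
    SatFO S v (.all x φ) ↔ ∀ a, SatFO S (Function.update v x a) φ := Iff.rfl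
theorem satFO_and {v : ℕ → M} {φ ψ : Fml} :
    SatFO S v (φ.and ψ) ↔ (SatFO S v φ ∧ SatFO S v ψ) := by
  simp [Fml.and, satFO_not, satFO_imp]
theorem satFO_iff {v : ℕ → M} {φ ψ : Fml} :
    SatFO S v (φ.iff ψ) ↔ (SatFO S v φ ↔ SatFO S v ψ) := by
  simp [Fml.iff, satFO_and, satFO_imp, iff_def]
theorem satFO_ex {v : ℕ → M} {x : ℕ} {φ : Fml} :
    SatFO S v (.ex x φ) ↔ ∃ a, SatFO S (Function.update v x a) φ := by
  simp [Fml.ex, satFO_not, satFO_all]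

theorem PTerm.val_congr {v w : ℕ → M} (t : PTerm) (h : ∀ n ∈ t.vars, v n = w n) :
    t.val S v = t.val S w := by
  induction t with
  | var n => exact h n (by simp [PTerm.vars])
  | zero => rfl
  | one => rfl
  | add t u iht ihu =>
    simp only [PTerm.val]
    rw [iht fun n hn => h n (by simp [PTerm.vars, hn]), ihu fun n hn => h n (by simp [PTerm.vars, hn])]
  | mul t u iht ihu =>
    simp only [PTerm.val]
    rw [iht fun n hn => h n (by simp [PTerm.vars, hn]), ihu fun n hn => h n (by simp [PTerm.vars, hn])]

theorem satFO_congr {φ : Fml} (hφ : φ.IsFO) {v w : ℕ → M} (h : ∀ n ∈ φ.freeN, v n = w n) :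
    SatFO S v φ ↔ SatFO S w φ := by
  induction φ generalizing v w with
  | eq t u =>
    rw [satFO_eq, satFO_eq, t.val_congr fun n hn => h n (by simp [Fml.freeN, hn]),
      u.val_congr fun n hn => h n (by simp [Fml.freeN, hn])]
  | lt t u =>
    rw [satFO_lt, satFO_lt, t.val_congr fun n hn => h n (by simp [Fml.freeN, hn]),
      u.val_congr fun n hn => h n (by simp [Fml.freeN, hn])]
  | mem t k => exact hφ.elim
  | not φ ih => exact not_congr (ih hφ h)
  | imp φ ψ ih1 ih2 =>
    exact imp_congr (ih1 hφ.1 fun n hn => h n (by simp [Fml.freeN, hn]))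
      (ih2 hφ.2 fun n hn => h n (by simp [Fml.freeN, hn]))
  | all x φ ih =>
    refine forall_congr' fun a => ih hφ fun n hn => ?_
    by_cases hx : n = x
    · subst hx; simp
    · simp only [Function.update_of_ne hx]
      exact h n (by simp [Fml.freeN, hn, hx])
  | allS k φ ih => exact hφ.elim

theorem PTerm.val_subst {x : ℕ} {r : PTerm} (v : ℕ → M) (t : PTerm) :
    (PTerm.subst x r t).val S v = t.val S (Function.update v x (r.val S v)) := by
  induction t with
  | var n =>
    by_cases h : n = x
    · subst h; simp [PTerm.subst, PTerm.val]
    · simp [PTerm.subst, PTerm.val, h]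
  | zero => rfl
  | one => rfl
  | add t u iht ihu => simp [PTerm.subst, PTerm.val, iht, ihu]
  | mul t u iht ihu => simp [PTerm.subst, PTerm.val, iht, ihu]

/-- The substitution lemma, for the capture-free case `vars r ⊆ {x}`. -/
theorem satFO_substN {x : ℕ} {r : PTerm} (hr : r.vars ⊆ {x}) {φ : Fml} (hφ : φ.IsFO) (v : ℕ → M) :
    SatFO S v (φ.substN x r) ↔ SatFO S (Function.update v x (r.val S v)) φ := by
  induction φ generalizing v with
  | eq t u => simp [Fml.substN, satFO_eq, PTerm.val_subst]
  | lt t u => simp [Fml.substN, satFO_lt, PTerm.val_subst]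
  | mem t k => exact hφ.elim
  | not φ ih => exact not_congr (ih hφ v)
  | imp φ ψ ih1 ih2 => exact imp_congr (ih1 hφ.1 v) (ih2 hφ.2 v)
  | all y φ ih =>
    by_cases h : y = x
    · subst h; simp [Fml.substN, satFO_all]
    · simp only [Fml.substN, if_neg h, satFO_all]
      refine forall_congr' fun a => ?_
      rw [ih hφ, Function.update_comm h]
      have : r.val S (Function.update v y a) = r.val S v :=
        r.val_congr fun n hn => by
          have := Finset.mem_singleton.1 (hr hn)
          rw [Function.update_of_ne]
          rintro rfl; exact h this
      rw [this]
  | allS k φ ih => exact hφ.elim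

theorem PTerm.vars_subst {x : ℕ} {r : PTerm} (hr : r.vars = ∅) (t : PTerm) :
    (PTerm.subst x r t).vars ⊆ t.vars.erase x := by
  induction t with
  | var n =>
    by_cases h : n = x
    · simp [PTerm.subst, h, hr]
    · simp [PTerm.subst, h, PTerm.vars, Ne.symm h]
  | zero => simp [PTerm.subst, PTerm.vars]
  | one => simp [PTerm.subst, PTerm.vars]
  | add t u iht ihu =>
    simp only [PTerm.subst, PTerm.vars, Finset.erase_union_distrib]
    exact Finset.union_subset_union iht ihu
  | mul t u iht ihu =>
    simp only [PTerm.subst, PTerm.vars, Finset.erase_union_distrib]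
    exact Finset.union_subset_union iht ihu

theorem Fml.freeN_substN {x : ℕ} {r : PTerm} (hr : r.vars = ∅) (φ : Fml) :
    (φ.substN x r).freeN ⊆ φ.freeN.erase x := by
  induction φ with
  | eq t u =>
    simp only [Fml.substN, Fml.freeN, Finset.erase_union_distrib]
    exact Finset.union_subset_union (PTerm.vars_subst hr t) (PTerm.vars_subst hr u)
  | lt t u =>
    simp only [Fml.substN, Fml.freeN, Finset.erase_union_distrib]
    exact Finset.union_subset_union (PTerm.vars_subst hr t) (PTerm.vars_subst hr u)
  | mem t k => exact PTerm.vars_subst hr t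
  | not φ ih => exact ih
  | imp φ ψ ih1 ih2 =>
    simp only [Fml.substN, Fml.freeN, Finset.erase_union_distrib]
    exact Finset.union_subset_union ih1 ih2
  | all y φ ih =>
    by_cases h : y = x
    · subst h; simp [Fml.substN, Fml.freeN]
    · simp only [Fml.substN, if_neg h, Fml.freeN]
      rw [Finset.erase_right_comm]
      exact Finset.erase_subset_erase _ ih
  | allS k φ ih => exact ih

theorem Fml.isFO_substN {x : ℕ} {r : PTerm} {φ : Fml} (hφ : φ.IsFO) : (φ.substN x r).IsFO := by
  induction φ with
  | eq t u => trivial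
  | lt t u => trivial
  | mem t k => exact hφ.elim
  | not φ ih => exact ih hφ
  | imp φ ψ ih1 ih2 => exact ⟨ih1 hφ.1, ih2 hφ.2⟩
  | all y φ ih =>
    by_cases h : y = x
    · simpa [Fml.substN, h] using hφ
    · simp only [Fml.substN, if_neg h]; exact ih hφ
  | allS k φ ih => exact hφ.elim

theorem numeral_vars (n : ℕ) : (numeral n).vars = ∅ := by
  induction n with
  | zero => rfl
  | succ n ih => simp [numeral, PTerm.vars, ih]

theorem numeral_val (n : ℕ) (v : ℕ → M) : (numeral n).val S v = S.num n := by
  induction n with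
  | zero => rfl
  | succ n ih => simp [numeral, PTerm.val, ih, AStr.num]

/-- Renaming of the variables of a term. -/
def PTerm.ren (ρ : ℕ → ℕ) : PTerm → PTerm
  | .var n => .var (ρ n)
  | .zero => .zero
  | .one => .one
  | .add t u => .add (t.ren ρ) (u.ren ρ)
  | .mul t u => .mul (t.ren ρ) (u.ren ρ)

/-- Renaming of the free variables of a first-order formula along a possibly non-injective `ρ`.
The bound variables are replaced by `K, K + 1, …`, so capture is avoided as soon as `K`
exceeds all values of `ρ` on free variables. -/
def Fml.ren : Fml → (ℕ → ℕ) → ℕ → Fml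
  | .eq t u, ρ, _ => .eq (t.ren ρ) (u.ren ρ)
  | .lt t u, ρ, _ => .lt (t.ren ρ) (u.ren ρ)
  | .mem t k, ρ, _ => .mem (t.ren ρ) k
  | .not φ, ρ, K => .not (φ.ren ρ K)
  | .imp φ ψ, ρ, K => .imp (φ.ren ρ K) (ψ.ren ρ K)
  | .all x φ, ρ, K => .all K (φ.ren (Function.update ρ x K) (K + 1))
  | .allS k φ, ρ, K => .allS k (φ.ren ρ K)

theorem PTerm.val_ren (ρ : ℕ → ℕ) (v : ℕ → M) (t : PTerm) :
    (t.ren ρ).val S v = t.val S (fun n => v (ρ n)) := by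
  induction t with
  | var n => rfl
  | zero => rfl
  | one => rfl
  | add t u iht ihu => simp [PTerm.ren, PTerm.val, iht, ihu]
  | mul t u iht ihu => simp [PTerm.ren, PTerm.val, iht, ihu]

theorem PTerm.vars_ren (ρ : ℕ → ℕ) (t : PTerm) : (t.ren ρ).vars = t.vars.image ρ := by
  induction t with
  | var n => rfl
  | zero => rfl
  | one => rfl
  | add t u iht ihu => simp [PTerm.ren, PTerm.vars, iht, ihu, Finset.image_union]
  | mul t u iht ihu => simp [PTerm.ren, PTerm.vars, iht, ihu, Finset.image_union]

theorem Fml.isFO_ren {φ : Fml} (hφ : φ.IsFO) (ρ : ℕ → ℕ) (K : ℕ) : (φ.ren ρ K).IsFO := by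
  induction φ generalizing ρ K with
  | eq t u => trivial
  | lt t u => trivial
  | mem t k => exact hφ.elim
  | not φ ih => exact ih hφ _ _
  | imp φ ψ ih1 ih2 => exact ⟨ih1 hφ.1 _ _, ih2 hφ.2 _ _⟩
  | all x φ ih => exact ih hφ _ _
  | allS k φ ih => exact hφ.elim

theorem Fml.freeN_ren (φ : Fml) (ρ : ℕ → ℕ) (K : ℕ) :
    (φ.ren ρ K).freeN ⊆ φ.freeN.image ρ := by
  induction φ generalizing ρ K with
  | eq t u => simp [Fml.ren, Fml.freeN, PTerm.vars_ren, Finset.image_union]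
  | lt t u => simp [Fml.ren, Fml.freeN, PTerm.vars_ren, Finset.image_union]
  | mem t k => simp [Fml.ren, Fml.freeN, PTerm.vars_ren]
  | not φ ih => exact ih _ _
  | imp φ ψ ih1 ih2 =>
    simp only [Fml.ren, Fml.freeN, Finset.image_union]
    exact Finset.union_subset_union (ih1 _ _) (ih2 _ _)
  | all x φ ih =>
    intro n hn
    simp only [Fml.ren, Fml.freeN, Finset.mem_erase] at hn
    obtain ⟨m, hm, rfl⟩ := Finset.mem_image.1 (ih _ _ hn.2)
    have hmx : m ≠ x := by
      rintro rfl; simp at hn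
    rw [Function.update_of_ne hmx]
    exact Finset.mem_image_of_mem _ (by simp [Fml.freeN, hm, hmx])
  | allS k φ ih => exact ih _ _

theorem satFO_ren {φ : Fml} (hφ : φ.IsFO) (ρ : ℕ → ℕ) (K : ℕ) (hK : ∀ n ∈ φ.freeN, ρ n < K)
    (v : ℕ → M) : SatFO S v (φ.ren ρ K) ↔ SatFO S (fun n => v (ρ n)) φ := by
  induction φ generalizing ρ K v with
  | eq t u => simp [Fml.ren, satFO_eq, PTerm.val_ren]
  | lt t u => simp [Fml.ren, satFO_lt, PTerm.val_ren]
  | mem t k => exact hφ.elim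
  | not φ ih => exact not_congr (ih hφ _ _ hK _)
  | imp φ ψ ih1 ih2 =>
    exact imp_congr (ih1 hφ.1 _ _ (fun n hn => hK n (by simp [Fml.freeN, hn])) _)
      (ih2 hφ.2 _ _ (fun n hn => hK n (by simp [Fml.freeN, hn])) _)
  | all x φ ih =>
    refine forall_congr' fun a => ?_
    have key : ∀ n ∈ φ.freeN, n ≠ x → ρ n < K := fun n hn hx => hK n (by simp [Fml.freeN, hn, hx])
    refine (ih hφ (Function.update ρ x K) (K + 1) (fun n hn => ?_) _).trans ?_
    · by_cases hx : n = x
      · subst hx; simp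
      · rw [Function.update_of_ne hx]; exact (key n hn hx).trans (Nat.lt_succ_self _)
    · refine satFO_congr (φ := φ) hφ fun n hn => ?_
      by_cases hx : n = x
      · subst hx; simp
      · rw [Function.update_of_ne hx, Function.update_of_ne hx,
          Function.update_of_ne (key n hn hx).ne]
  | allS k φ ih => exact hφ.elim

/-- A bound above the values of `ρ` on the free variables of `φ`. -/
def Fml.fresh (φ : Fml) (ρ : ℕ → ℕ) : ℕ := φ.freeN.sup ρ + 1

theorem Fml.lt_fresh (φ : Fml) (ρ : ℕ → ℕ) : ∀ n ∈ φ.freeN, ρ n < φ.fresh ρ := fun _ hn =>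
  Nat.lt_succ_of_le (Finset.le_sup (f := ρ) hn)

/-- An auxiliary Gödel numbering of terms, used only to see that there are countably many. -/
def PTerm.toNat : PTerm → ℕ
  | .var n => Nat.pair 0 n
  | .zero => Nat.pair 1 0
  | .one => Nat.pair 2 0
  | .add t u => Nat.pair 3 (Nat.pair t.toNat u.toNat)
  | .mul t u => Nat.pair 4 (Nat.pair t.toNat u.toNat)

theorem PTerm.toNat_inj : Function.Injective PTerm.toNat := by
  intro t
  induction t with
  | var n => intro u h; cases u <;> simp_all [PTerm.toNat, Nat.pair_eq_pair]
  | zero => intro u h; cases u <;> simp_all [PTerm.toNat, Nat.pair_eq_pair]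
  | one => intro u h; cases u <;> simp_all [PTerm.toNat, Nat.pair_eq_pair]
  | add t t' ih1 ih2 =>
    intro u h
    cases u <;> simp only [PTerm.toNat, Nat.pair_eq_pair] at h <;> try omega
    rw [ih1 h.2.1, ih2 h.2.2]
  | mul t t' ih1 ih2 =>
    intro u h
    cases u <;> simp only [PTerm.toNat, Nat.pair_eq_pair] at h <;> try omega
    rw [ih1 h.2.1, ih2 h.2.2]

/-- An auxiliary Gödel numbering of formulas, used only to see that there are countably many. -/
def Fml.toNat : Fml → ℕ
  | .eq t u => Nat.pair 0 (Nat.pair t.toNat u.toNat)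
  | .lt t u => Nat.pair 1 (Nat.pair t.toNat u.toNat)
  | .mem t k => Nat.pair 2 (Nat.pair t.toNat k)
  | .not φ => Nat.pair 3 φ.toNat
  | .imp φ ψ => Nat.pair 4 (Nat.pair φ.toNat ψ.toNat)
  | .all x φ => Nat.pair 5 (Nat.pair x φ.toNat)
  | .allS x φ => Nat.pair 6 (Nat.pair x φ.toNat)

theorem Fml.toNat_inj : Function.Injective Fml.toNat := by
  intro φ
  induction φ with
  | eq t u =>
    intro ψ h
    cases ψ <;> simp only [Fml.toNat, Nat.pair_eq_pair] at h <;> try omega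
    rw [PTerm.toNat_inj h.2.1, PTerm.toNat_inj h.2.2]
  | lt t u =>
    intro ψ h
    cases ψ <;> simp only [Fml.toNat, Nat.pair_eq_pair] at h <;> try omega
    rw [PTerm.toNat_inj h.2.1, PTerm.toNat_inj h.2.2]
  | mem t k =>
    intro ψ h
    cases ψ <;> simp only [Fml.toNat, Nat.pair_eq_pair] at h <;> try omega
    rw [PTerm.toNat_inj h.2.1, h.2.2]
  | not φ ih =>
    intro ψ h
    cases ψ <;> simp only [Fml.toNat, Nat.pair_eq_pair] at h <;> try omega
    rw [ih h.2]
  | imp φ ψ ih1 ih2 =>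
    intro ψ h
    cases ψ <;> simp only [Fml.toNat, Nat.pair_eq_pair] at h <;> try omega
    rw [ih1 h.2.1, ih2 h.2.2]
  | all x φ ih =>
    intro ψ h
    cases ψ <;> simp only [Fml.toNat, Nat.pair_eq_pair] at h <;> try omega
    rw [h.2.1, ih h.2.2]
  | allS x φ ih =>
    intro ψ h
    cases ψ <;> simp only [Fml.toNat, Nat.pair_eq_pair] at h <;> try omega
    rw [h.2.1, ih h.2.2]

instance : Countable Fml := Fml.toNat_inj.countable

end Fmls

/-! ### Definable predicates and functions -/

section Definability

variable {M : Type} {S : AStr M} {X Y : Type}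

/-- `P : X → Prop` is definable in `S` from the coordinate functions in `C`: it is the pullback
of a first-order formula along finitely many coordinates from `C`. Parameters are
allowed by putting constant functions into `C`. -/
def Dfn (S : AStr M) {X : Type} (C : Set (X → M)) (P : X → Prop) : Prop :=
  ∃ φ : Fml, φ.IsFO ∧ ∃ e : ℕ → X → M, (∀ n ∈ φ.freeN, e n ∈ C) ∧
    ∀ x, SatFO S (fun n => e n x) φ ↔ P x

/-- The coordinates on `X × M`: those of `X`, and the second projection. -/
def ext (C : Set (X → M)) : Set (X × M → M) :=
  {f | f = Prod.snd ∨ ∃ c ∈ C, f = fun p => c p.1}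

/-- Functions with definable graph. -/
def FD (S : AStr M) {X : Type} (C : Set (X → M)) (f : X → M) : Prop :=
  Dfn S (ext C) fun p => f p.1 = p.2

theorem Dfn.congr {C : Set (X → M)} {P Q : X → Prop} (h : Dfn S C P) (hPQ : ∀ x, P x ↔ Q x) :
    Dfn S C Q := by
  have : P = Q := funext fun x => propext (hPQ x)
  exact this ▸ h

theorem Dfn.comap {C : Set (X → M)} {D : Set (Y → M)} {P : X → Prop} (h : Dfn S C P) (g : Y → X)
    (hg : ∀ c ∈ C, (fun y => c (g y)) ∈ D) : Dfn S D fun y => P (g y) := by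
  obtain ⟨φ, hφ, e, he, h⟩ := h
  exact ⟨φ, hφ, fun n y => e n (g y), fun n hn => hg _ (he n hn), fun y => h (g y)⟩

theorem Dfn.mono {C D : Set (X → M)} {P : X → Prop} (h : Dfn S C P) (hCD : C ⊆ D) : Dfn S D P :=
  h.comap id fun _ hc => hCD hc

theorem snd_mem_ext {C : Set (X → M)} : Prod.snd ∈ ext C := Or.inl rfl

theorem wk_mem_ext {C : Set (X → M)} {c : X → M} (hc : c ∈ C) : (fun p => c p.1) ∈ ext C :=
  Or.inr ⟨c, hc, rfl⟩

theorem ext_mono {C D : Set (X → M)} (h : C ⊆ D) : ext C ⊆ ext D := by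
  rintro f (rfl | ⟨c, hc, rfl⟩)
  · exact Or.inl rfl
  · exact Or.inr ⟨c, h hc, rfl⟩

theorem Dfn.not {C : Set (X → M)} {P : X → Prop} (h : Dfn S C P) : Dfn S C fun x => ¬ P x := by
  obtain ⟨φ, hφ, e, he, h⟩ := h
  exact ⟨φ.not, hφ, e, he, fun x => not_congr (h x)⟩

theorem Dfn.imp {C : Set (X → M)} {P Q : X → Prop} (hP : Dfn S C P) (hQ : Dfn S C Q) :
    Dfn S C fun x => P x → Q x := by
  obtain ⟨φ, hφ, e, he, h⟩ := hP
  obtain ⟨ψ, hψ, d, hd, k⟩ := hQ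
  refine ⟨(φ.ren (2 * ·) (φ.fresh (2 * ·))).imp (ψ.ren (2 * · + 1) (ψ.fresh (2 * · + 1))),
    ⟨Fml.isFO_ren hφ _ _, Fml.isFO_ren hψ _ _⟩,
    fun n => if n % 2 = 0 then e (n / 2) else d (n / 2), fun n hn => ?_, fun x => ?_⟩
  · rcases Finset.mem_union.1 hn with hn | hn
    · obtain ⟨m, hm, rfl⟩ := Finset.mem_image.1 (Fml.freeN_ren _ _ _ hn)
      simpa using he m hm
    · obtain ⟨m, hm, rfl⟩ := Finset.mem_image.1 (Fml.freeN_ren _ _ _ hn)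
      have h1 : (2 * m + 1) % 2 ≠ 0 := by omega
      have h2 : (2 * m + 1) / 2 = m := by omega
      simpa [h1, h2] using hd m hm
  · rw [satFO_imp, satFO_ren hφ _ _ (Fml.lt_fresh _ _), satFO_ren hψ _ _ (Fml.lt_fresh _ _)]
    have h1 : ∀ m, (2 * m + 1) % 2 ≠ 0 := by omega
    have h2 : ∀ m, (2 * m + 1) / 2 = m := by omega
    simp only [h1, h2]
    simpa using imp_congr (h x) (k x)

theorem Dfn.all {C : Set (X → M)} {P : X → M → Prop} (h : Dfn S (ext C) fun p => P p.1 p.2) :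
    Dfn S C fun x => ∀ a, P x a := by
  classical
  obtain ⟨φ, hφ, e, he, h⟩ := h
  let ρ : ℕ → ℕ := fun n => if e n = Prod.snd then 0 else n + 1
  have hc : ∀ n, ∃ c : X → M, n ∈ φ.freeN → e n ≠ Prod.snd → c ∈ C ∧ e n = fun p => c p.1 := by
    intro n
    by_cases hn : n ∈ φ.freeN ∧ e n ≠ Prod.snd
    · obtain ⟨c, hc, hc'⟩ := (he n hn.1).resolve_left hn.2
      exact ⟨c, fun _ _ => ⟨hc, hc'⟩⟩
    · by_cases hX : Nonempty (X → M)
      · exact ⟨hX.some, fun a b => (hn ⟨a, b⟩).elim⟩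
      · exact ⟨fun _ => S.zero, fun a b => (hn ⟨a, b⟩).elim⟩
  choose c hc using hc
  refine ⟨.all 0 (φ.ren ρ (φ.fresh ρ)), Fml.isFO_ren hφ _ _, fun n => c (n - 1),
    fun n hn => ?_, fun x => ?_⟩
  · simp only [Fml.freeN, Finset.mem_erase] at hn
    obtain ⟨m, hm, rfl⟩ := Finset.mem_image.1 (Fml.freeN_ren _ _ _ hn.2)
    have hs : e m ≠ Prod.snd := fun hs => hn.1 (by simp [ρ, hs])
    simpa [ρ, hs] using (hc m hm hs).1
  · rw [satFO_all]
    refine forall_congr' fun a => ?_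
    rw [satFO_ren hφ _ _ (Fml.lt_fresh _ _)]
    refine Iff.trans ?_ (h (x, a))
    refine satFO_congr hφ fun n hn => ?_
    by_cases hs : e n = Prod.snd
    · simp [ρ, hs]
    · have := congrFun (hc n hn hs).2 (x, a)
      simp [ρ, hs, this]

theorem Dfn.ex {C : Set (X → M)} {P : X → M → Prop} (h : Dfn S (ext C) fun p => P p.1 p.2) :
    Dfn S C fun x => ∃ a, P x a :=
  (Dfn.all (P := fun x a => ¬ P x a) h.not).not.congr fun x => by simp

theorem Dfn.and {C : Set (X → M)} {P Q : X → Prop} (hP : Dfn S C P) (hQ : Dfn S C Q) :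
    Dfn S C fun x => P x ∧ Q x :=
  (hP.imp hQ.not).not.congr fun x => by tauto

theorem Dfn.or {C : Set (X → M)} {P Q : X → Prop} (hP : Dfn S C P) (hQ : Dfn S C Q) :
    Dfn S C fun x => P x ∨ Q x :=
  (hP.not.imp hQ).congr fun x => by tauto

theorem Dfn.iff {C : Set (X → M)} {P Q : X → Prop} (hP : Dfn S C P) (hQ : Dfn S C Q) :
    Dfn S C fun x => P x ↔ Q x :=
  ((hP.imp hQ).and (hQ.imp hP)).congr fun x => by tauto

theorem Dfn.wk {C : Set (X → M)} {P : X → Prop} (h : Dfn S C P) :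
    Dfn S (ext C) fun p => P p.1 :=
  h.comap Prod.fst fun c hc => Or.inr ⟨c, hc, rfl⟩

theorem Dfn.subst {C : Set (X → M)} {P : X → M → Prop} {f : X → M}
    (h : Dfn S (ext C) fun p => P p.1 p.2) (hf : FD S C f) : Dfn S C fun x => P x (f x) :=
  (Dfn.ex (P := fun x a => f x = a ∧ P x a) (hf.and h)).congr fun x => by simp

theorem FD.comap {C : Set (X → M)} {D : Set (Y → M)} {f : X → M} (h : FD S C f) (g : Y → X)
    (hg : ∀ c ∈ C, (fun y => c (g y)) ∈ D) : FD S D fun y => f (g y) := by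
  refine Dfn.comap h (fun p : Y × M => (g p.1, p.2)) ?_
  rintro c (rfl | ⟨c, hc, rfl⟩)
  · exact Or.inl rfl
  · exact Or.inr ⟨_, hg c hc, rfl⟩

theorem FD.wk {C : Set (X → M)} {f : X → M} (h : FD S C f) : FD S (ext C) fun p => f p.1 :=
  h.comap Prod.fst fun c hc => Or.inr ⟨c, hc, rfl⟩

theorem FD.coord {C : Set (X → M)} {c : X → M} (hc : c ∈ C) : FD S C c := by
  refine ⟨.eq (.var 0) (.var 1), trivial, fun n => if n = 0 then fun p => c p.1 else Prod.snd,
    fun n hn => ?_, fun x => ?_⟩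
  · beta_reduce; split_ifs
    exacts [wk_mem_ext hc, snd_mem_ext]
  · simp [satFO_eq, PTerm.val]

theorem FD.snd {C : Set (X → M)} : FD S (ext C) fun p => p.2 := FD.coord (Or.inl rfl)

theorem Dfn.eq {C : Set (X → M)} {f g : X → M} (hf : FD S C f) (hg : FD S C g) :
    Dfn S C fun x => f x = g x := Dfn.subst hf hg

theorem Dfn.lt {C : Set (X → M)} {f g : X → M} (hf : FD S C f) (hg : FD S C g) :
    Dfn S C fun x => S.lt (f x) (g x) := by
  refine Dfn.subst (P := fun x b => S.lt (f x) b) ?_ hg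
  refine Dfn.subst (P := fun (x : X × M) a => S.lt a x.2) ?_ hf.wk
  refine ⟨.lt (.var 0) (.var 1), trivial, fun n => if n = 0 then Prod.snd else fun p => p.1.2,
    fun n hn => ?_, fun x => ?_⟩
  · beta_reduce; split_ifs
    exacts [snd_mem_ext, wk_mem_ext snd_mem_ext]
  · simp [satFO_lt, PTerm.val]

theorem FD.zero {C : Set (X → M)} : FD S C fun _ => S.zero :=
  ⟨.eq .zero (.var 0), trivial, fun _ => Prod.snd, fun _ _ => Or.inl rfl,
    fun x => by simp [satFO_eq, PTerm.val]⟩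

theorem FD.one {C : Set (X → M)} : FD S C fun _ => S.one :=
  ⟨.eq .one (.var 0), trivial, fun _ => Prod.snd, fun _ _ => Or.inl rfl,
    fun x => by simp [satFO_eq, PTerm.val]⟩

theorem FD.add {C : Set (X → M)} {f g : X → M} (hf : FD S C f) (hg : FD S C g) :
    FD S C fun x => S.add (f x) (g x) := by
  refine Dfn.subst (P := fun (x : X × M) b => S.add (f x.1) b = x.2) ?_ hg.wk
  refine Dfn.subst (P := fun (x : (X × M) × M) a => S.add a x.2 = x.1.2) ?_ hf.wk.wk
  refine ⟨.eq (.add (.var 0) (.var 1)) (.var 2), trivial,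
    fun n => if n = 0 then Prod.snd else if n = 1 then fun p => p.1.2 else fun p => p.1.1.2,
    fun n hn => ?_, fun x => ?_⟩
  · beta_reduce; split_ifs
    exacts [snd_mem_ext, wk_mem_ext snd_mem_ext, wk_mem_ext (wk_mem_ext snd_mem_ext)]
  · simp [satFO_eq, PTerm.val]

theorem FD.mul {C : Set (X → M)} {f g : X → M} (hf : FD S C f) (hg : FD S C g) :
    FD S C fun x => S.mul (f x) (g x) := by
  refine Dfn.subst (P := fun (x : X × M) b => S.mul (f x.1) b = x.2) ?_ hg.wk
  refine Dfn.subst (P := fun (x : (X × M) × M) a => S.mul a x.2 = x.1.2) ?_ hf.wk.wk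
  refine ⟨.eq (.mul (.var 0) (.var 1)) (.var 2), trivial,
    fun n => if n = 0 then Prod.snd else if n = 1 then fun p => p.1.2 else fun p => p.1.1.2,
    fun n hn => ?_, fun x => ?_⟩
  · beta_reduce; split_ifs
    exacts [snd_mem_ext, wk_mem_ext snd_mem_ext, wk_mem_ext (wk_mem_ext snd_mem_ext)]
  · simp [satFO_eq, PTerm.val]

theorem FD.num {C : Set (X → M)} (n : ℕ) : FD S C fun _ => S.num n := by
  induction n with
  | zero => exact FD.zero
  | succ n ih => exact ih.add FD.one

theorem FD.val {C : Set (X → M)} {h : ℕ → X → M} (hh : ∀ n, FD S C (h n)) (t : PTerm) :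
    FD S C fun x => t.val S fun n => h n x := by
  induction t with
  | var n => exact hh n
  | zero => exact FD.zero
  | one => exact FD.one
  | add t u iht ihu => exact iht.add ihu
  | mul t u iht ihu => exact iht.mul ihu

/-- Satisfaction of a fixed formula at definable functions is definable. -/
theorem Dfn.sat {φ : Fml} (hφ : φ.IsFO) {X : Type} {C : Set (X → M)} {h : ℕ → X → M}
    (hh : ∀ n, FD S C (h n)) : Dfn S C fun x => SatFO S (fun n => h n x) φ := by
  induction φ generalizing X with
  | eq t u => exact Dfn.eq (FD.val hh t) (FD.val hh u)
  | lt t u => exact Dfn.lt (FD.val hh t) (FD.val hh u)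
  | mem t k => exact hφ.elim
  | not φ ih => exact (ih hφ hh).not
  | imp φ ψ ih1 ih2 => exact (ih1 hφ.1 hh).imp (ih2 hφ.2 hh)
  | all y φ ih =>
    refine Dfn.all (P := fun x a => SatFO S (Function.update (fun n => h n x) y a) φ) ?_
    have hh' : ∀ n, FD S (ext C) (fun p => if n = y then p.2 else h n p.1) := by
      intro n
      by_cases hn : n = y
      · simpa [hn] using FD.snd
      · simpa [hn] using (hh n).wk
    refine (ih hφ hh').congr fun p => ?_
    refine satFO_congr (φ := φ) hφ fun n _ => ?_
    by_cases hn : n = y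
    · subst hn; simp
    · simp [hn]
  | allS k φ ih => exact hφ.elim

/-- A definable predicate depends only on the coordinates it is defined from. -/
theorem Dfn.depends {C : Set (X → M)} {P : X → Prop} (h : Dfn S C P) {x y : X}
    (hxy : ∀ c ∈ C, c x = c y) : P x ↔ P y := by
  obtain ⟨φ, hφ, e, he, h⟩ := h
  rw [← h x, ← h y]
  exact satFO_congr hφ fun n hn => hxy _ (he n hn)

/-- Countably many coordinates give countably many definable predicates. -/
theorem countable_dfn {C : Set (X → M)} (hC : C.Countable) :
    {P : X → Prop | Dfn S C P}.Countable := by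
  have : Countable C := hC
  let F : (Σ φ : Fml, (φ.freeN → C)) → (X → Prop) := fun s x =>
    SatFO S (fun n => if h : n ∈ s.1.freeN then (s.2 ⟨n, h⟩).1 x else S.zero) s.1
  refine (Set.countable_range F).mono ?_
  rintro P ⟨φ, hφ, e, he, h⟩
  refine ⟨⟨φ, fun n => ⟨e n.1, he n.1 n.2⟩⟩, funext fun x => propext ?_⟩
  rw [← h x]
  exact satFO_congr hφ fun n hn => by simp [hn]

end Definability

/-! ### Consequences of the Peano axioms -/

section Peano

variable {M : Type} {S : AStr M}

/-- Substituting definable functions into a definable predicate. -/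
theorem Dfn.pull {X Y : Type} {C : Set (X → M)} {D : Set (Y → M)} {P : X → Prop} (h : Dfn S C P)
    (g : Y → X) (hg : ∀ c ∈ C, FD S D fun y => c (g y)) : Dfn S D fun y => P (g y) := by
  classical
  obtain ⟨φ, hφ, e, he, h⟩ := h
  have := Dfn.sat (S := S) hφ (C := D)
    (h := fun n y => if n ∈ φ.freeN then e n (g y) else S.zero) fun n => by
      by_cases hn : n ∈ φ.freeN
      · simpa [hn] using hg _ (he n hn)
      · simpa [hn] using FD.zero
  refine this.congr fun y => ?_
  rw [← h (g y)]
  exact satFO_congr hφ fun n hn => by simp [hn]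

theorem FD.pull {X Y : Type} {C : Set (X → M)} {D : Set (Y → M)} {f : X → M} (h : FD S C f)
    (g : Y → X) (hg : ∀ c ∈ C, FD S D fun y => c (g y)) : FD S D fun y => f (g y) := by
  refine Dfn.pull h (fun p : Y × M => (g p.1, p.2)) ?_
  rintro c (rfl | ⟨c, hc, rfl⟩)
  · exact FD.snd
  · exact (hg c hc).wk

theorem satFO_of_univClosure {φ : Fml} (h : ∀ v, SatFO S v (univClosure φ)) (v : ℕ → M) :
    SatFO S v φ := by
  have key : ∀ l : List ℕ, (∀ v, SatFO S v (l.foldr Fml.all φ)) → ∀ v, SatFO S v φ := by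
    intro l
    induction l with
    | nil => exact id
    | cons x l ih =>
      intro h
      refine ih fun v => ?_
      have := satFO_all.1 (h v) (v x)
      rwa [Function.update_eq_self] at this
  exact key _ h v

theorem FD.param {X : Type} (f : X → M) : FD S (Set.univ : Set (X → M)) f :=
  FD.coord (Set.mem_univ f)

variable (hS : ModelsT S PAax)
include hS

theorem pa_succ_ne_zero (a : M) : S.add a S.one ≠ S.zero := by
  have := satFO_all.1 (hS (Fml.all 0 (.not (.eq (.add (.var 0) .one) .zero)))
    (by simp [PAax]) fun _ => S.zero) a
  simpa [satFO_not, satFO_eq, PTerm.val] using this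

theorem pa_succ_inj {a b : M} (h : S.add a S.one = S.add b S.one) : a = b := by
  have := satFO_all.1 (satFO_all.1 (hS (Fml.all 0 (.all 1 (.imp
    (.eq (.add (.var 0) .one) (.add (.var 1) .one)) (.eq (.var 0) (.var 1)))))
    (by simp [PAax]) fun _ => S.zero) a) b
  simp [satFO_imp, satFO_eq, PTerm.val] at this
  exact this h

theorem pa_add_zero (a : M) : S.add a S.zero = a := by
  have := satFO_all.1 (hS (Fml.all 0 (.eq (.add (.var 0) .zero) (.var 0)))
    (by simp [PAax]) fun _ => S.zero) a
  simpa [satFO_eq, PTerm.val] using this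

theorem pa_add_succ (a b : M) : S.add a (S.add b S.one) = S.add (S.add a b) S.one := by
  have := satFO_all.1 (satFO_all.1 (hS (Fml.all 0 (.all 1
    (.eq (.add (.var 0) (.add (.var 1) .one)) (.add (.add (.var 0) (.var 1)) .one))))
    (by simp [PAax]) fun _ => S.zero) a) b
  simpa [satFO_eq, PTerm.val] using this

theorem pa_mul_zero (a : M) : S.mul a S.zero = S.zero := by
  have := satFO_all.1 (hS (Fml.all 0 (.eq (.mul (.var 0) .zero) .zero))
    (by simp [PAax]) fun _ => S.zero) a
  simpa [satFO_eq, PTerm.val] using this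

theorem pa_mul_succ (a b : M) : S.mul a (S.add b S.one) = S.add (S.mul a b) a := by
  have := satFO_all.1 (satFO_all.1 (hS (Fml.all 0 (.all 1
    (.eq (.mul (.var 0) (.add (.var 1) .one)) (.add (.mul (.var 0) (.var 1)) (.var 0)))))
    (by simp [PAax]) fun _ => S.zero) a) b
  simpa [satFO_eq, PTerm.val] using this

theorem pa_lt_iff (a b : M) : S.lt a b ↔ ∃ c, S.add a (S.add c S.one) = b := by
  have := satFO_all.1 (satFO_all.1 (hS (Fml.all 0 (.all 1 (Fml.iff (.lt (.var 0) (.var 1))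
     (Fml.ex 2 (.eq (.add (.var 0) (.add (.var 2) .one)) (.var 1))))))
    (by simp [PAax]) fun _ => S.zero) a) b
  simpa [satFO_eq, satFO_iff, satFO_ex, satFO_lt, PTerm.val] using this

/-- Induction for definable predicates; `x` carries the parameters. -/
theorem pa_ind {X : Type} {C : Set (X → M)} {P : X → M → Prop}
    (hP : Dfn S (ext C) fun p => P p.1 p.2) (x : X) (h0 : P x S.zero)
    (hs : ∀ a, P x a → P x (S.add a S.one)) : ∀ a, P x a := by
  classical
  obtain ⟨φ, hφ, e, he, h⟩ := hP
  let ρ : ℕ → ℕ := fun n => if e n = Prod.snd then 0 else n + 1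
  let ψ := φ.ren ρ (φ.fresh ρ)
  have hψ : ψ.IsFO := Fml.isFO_ren hφ _ _
  -- the value of the parameter `n` is read off from `e n`, which does not depend on `M`
  let v : ℕ → M := fun n => e (n - 1) (x, S.zero)
  have key : ∀ a, SatFO S (Function.update v 0 a) ψ ↔ P x a := by
    intro a
    rw [satFO_ren hφ _ _ (Fml.lt_fresh _ _)]
    refine Iff.trans ?_ (h (x, a))
    refine satFO_congr hφ fun n hn => ?_
    by_cases hs : e n = Prod.snd
    · simp [ρ, hs]
    · obtain ⟨c, -, hc⟩ := (he n hn).resolve_left hs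
      have hρ : ρ n = n + 1 := if_neg hs
      simp [hρ, v, hc]
  have hind := satFO_of_univClosure (fun v => hS (univClosure (indFml ψ 0))
    (Or.inr ⟨ψ, 0, hψ, rfl⟩) v) v
  rw [indFml, satFO_imp, satFO_and, satFO_substN (by simp [PTerm.vars]) hψ, satFO_all,
    satFO_all] at hind
  simp only [satFO_imp, key, PTerm.val] at hind
  refine hind ⟨h0, fun a ha => ?_⟩
  rw [satFO_substN (by simp [PTerm.vars]) hψ]
  simpa [PTerm.val, key] using hs a ha

/-- Induction with arbitrary parameters. -/
theorem pa_ind' {P : M → Prop} (hP : Dfn S (ext (Set.univ : Set (Unit → M))) fun p => P p.2)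
    (h0 : P S.zero) (hs : ∀ a, P a → P (S.add a S.one)) : ∀ a, P a :=
  pa_ind hS (P := fun _ => P) hP () h0 hs

theorem pa_zero_or_succ (a : M) : a = S.zero ∨ ∃ b, a = S.add b S.one := by
  refine pa_ind' hS (P := fun a => a = S.zero ∨ ∃ b, a = S.add b S.one) ?_ (Or.inl rfl)
    (fun a _ => Or.inr ⟨a, rfl⟩) a
  exact (Dfn.eq FD.snd FD.zero).or
    (Dfn.ex (P := fun (p : Unit × M) b => p.2 = S.add b S.one) (Dfn.eq FD.snd.wk (FD.snd.add FD.one)))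

theorem pa_zero_add (a : M) : S.add S.zero a = a := by
  refine pa_ind' hS (P := fun a => S.add S.zero a = a) ?_ (pa_add_zero hS _)
    (fun a h => by rw [pa_add_succ hS, h]) a
  exact Dfn.eq (FD.zero.add FD.snd) FD.snd

theorem pa_succ_add (a b : M) : S.add (S.add a S.one) b = S.add (S.add a b) S.one := by
  refine pa_ind' hS (P := fun b => S.add (S.add a S.one) b = S.add (S.add a b) S.one) ?_
    (by rw [pa_add_zero hS, pa_add_zero hS]) (fun b h => by rw [pa_add_succ hS, h, pa_add_succ hS]) b
  have ha : FD S (ext (Set.univ : Set (Unit → M))) fun _ => a := (FD.param (fun _ => _)).wk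
  exact Dfn.eq ((ha.add FD.one).add FD.snd) ((ha.add FD.snd).add FD.one)

theorem pa_not_lt_zero (a : M) : ¬ S.lt a S.zero := by
  rw [pa_lt_iff hS]
  rintro ⟨c, hc⟩
  rw [pa_add_succ hS] at hc
  exact pa_succ_ne_zero hS _ hc

theorem pa_lt_succ (a b : M) : S.lt a (S.add b S.one) ↔ S.lt a b ∨ a = b := by
  rw [pa_lt_iff hS, pa_lt_iff hS]
  constructor
  · rintro ⟨c, hc⟩
    rw [pa_add_succ hS] at hc
    have hc := pa_succ_inj hS hc
    rcases pa_zero_or_succ hS c with rfl | ⟨d, rfl⟩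
    · exact Or.inr (by rw [← hc, pa_add_zero hS])
    · exact Or.inl ⟨d, hc⟩
  · rintro (⟨c, hc⟩ | rfl)
    · exact ⟨S.add c S.one, by rw [pa_add_succ hS, hc]⟩
    · exact ⟨S.zero, by rw [pa_add_succ hS, pa_add_zero hS]⟩

theorem pa_lt_irrefl (a : M) : ¬ S.lt a a := by
  refine pa_ind' hS (P := fun a => ¬ S.lt a a) ?_ (pa_not_lt_zero hS _) (fun a h h' => ?_) a
  · exact (Dfn.lt FD.snd FD.snd).not
  · rw [pa_lt_iff hS] at h'
    obtain ⟨c, hc⟩ := h'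
    rw [pa_succ_add hS] at hc
    exact h ((pa_lt_iff hS _ _).2 ⟨c, pa_succ_inj hS hc⟩)

theorem pa_trichotomy (a b : M) : S.lt a b ∨ a = b ∨ S.lt b a := by
  refine pa_ind' hS (P := fun a => S.lt a b ∨ a = b ∨ S.lt b a) ?_ ?_ (fun a h => ?_) a
  · have hb : FD S (ext (Set.univ : Set (Unit → M))) fun _ => b := (FD.param (fun _ => _)).wk
    exact (Dfn.lt FD.snd hb).or ((Dfn.eq FD.snd hb).or (Dfn.lt hb FD.snd))
  · rcases pa_zero_or_succ hS b with rfl | ⟨c, rfl⟩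
    · exact Or.inr (Or.inl rfl)
    · exact Or.inl ((pa_lt_iff hS _ _).2 ⟨c, pa_zero_add hS _⟩)
  · rcases h with h | rfl | h
    · obtain ⟨c, hc⟩ := (pa_lt_iff hS _ _).1 h
      rcases pa_zero_or_succ hS c with rfl | ⟨d, rfl⟩
      · rw [pa_zero_add hS] at hc
        exact Or.inr (Or.inl hc)
      · refine Or.inl ((pa_lt_iff hS _ _).2 ⟨d, ?_⟩)
        rw [pa_succ_add hS, ← pa_add_succ hS, hc]
    · exact Or.inr (Or.inr ((pa_lt_succ hS _ _).2 (Or.inr rfl)))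
    · exact Or.inr (Or.inr ((pa_lt_succ hS _ _).2 (Or.inl h)))

/-- The least number principle for definable predicates. -/
theorem pa_least {X : Type} {C : Set (X → M)} {P : X → M → Prop}
    (hP : Dfn S (ext C) fun p => P p.1 p.2) (x : X) (h : ∃ a, P x a) :
    ∃ a, P x a ∧ ∀ b, S.lt b a → ¬ P x b := by
  by_contra hcon
  push Not at hcon
  have : ∀ a, ∀ b, S.lt b a → ¬ P x b := by
    refine pa_ind hS (P := fun x a => ∀ b, S.lt b a → ¬ P x b) (C := C) ?_ x ?_ ?_
    · refine Dfn.all (P := fun (p : X × M) b => S.lt b p.2 → ¬ P p.1 b) ?_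
      refine (Dfn.lt FD.snd FD.snd.wk).imp (Dfn.not ?_)
      refine Dfn.comap hP (fun q : (X × M) × M => (q.1.1, q.2)) ?_
      rintro c (rfl | ⟨c, hc, rfl⟩)
      · exact snd_mem_ext
      · exact wk_mem_ext (wk_mem_ext hc)
    · intro b hb; exact (pa_not_lt_zero hS b hb).elim
    · intro a ih b hb hPb
      rcases (pa_lt_succ hS _ _).1 hb with hb | rfl
      · exact ih b hb hPb
      · obtain ⟨c, hc, hPc⟩ := hcon b hPb
        exact ih c hc hPc
  obtain ⟨a, ha⟩ := h
  exact this (S.add a S.one) a ((pa_lt_succ hS _ _).2 (Or.inr rfl)) ha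

theorem pa_least_unique {P : M → Prop} {a b : M} (ha : P a ∧ ∀ c, S.lt c a → ¬ P c)
    (hb : P b ∧ ∀ c, S.lt c b → ¬ P c) : a = b := by
  rcases pa_trichotomy hS a b with h | h | h
  · exact (hb.2 a h ha.1).elim
  · exact h
  · exact (ha.2 b h hb.1).elim

theorem num_add (m n : ℕ) : S.num (m + n) = S.add (S.num m) (S.num n) := by
  induction n with
  | zero => exact (pa_add_zero hS _).symm
  | succ n ih => rw [← Nat.add_assoc]; simp only [AStr.num]; rw [ih, pa_add_succ hS]

theorem num_mul (m n : ℕ) : S.num (m * n) = S.mul (S.num m) (S.num n) := by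
  induction n with
  | zero => exact (pa_mul_zero hS _).symm
  | succ n ih => rw [Nat.mul_succ, num_add hS, ih]; exact (pa_mul_succ hS _ _).symm

theorem num_one : S.num 1 = S.one := pa_zero_add hS _

theorem num_two : S.num 2 = S.two := by
  simp only [AStr.num, AStr.two]; rw [pa_zero_add hS]

theorem num_inj {m n : ℕ} (h : S.num m = S.num n) : m = n := by
  induction m generalizing n with
  | zero =>
    cases n with
    | zero => rfl
    | succ n => exact (pa_succ_ne_zero hS _ h.symm).elim
  | succ m ih =>
    cases n with
    | zero => exact (pa_succ_ne_zero hS _ h).elim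
    | succ n => rw [ih (pa_succ_inj hS h)]

theorem num_inj_iff {m n : ℕ} : S.num m = S.num n ↔ m = n := ⟨num_inj hS, fun h => h ▸ rfl⟩

theorem lt_num {a : M} {n : ℕ} : S.lt a (S.num n) ↔ ∃ m < n, a = S.num m := by
  induction n with
  | zero => exact ⟨fun h => (pa_not_lt_zero hS a h).elim, fun ⟨m, hm, _⟩ => by omega⟩
  | succ n ih =>
    refine (pa_lt_succ hS _ _).trans ?_
    rw [ih]
    constructor
    · rintro (⟨m, hm, rfl⟩ | rfl)
      · exact ⟨m, by omega, rfl⟩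
      · exact ⟨n, by omega, rfl⟩
    · rintro ⟨m, hm, rfl⟩
      rcases Nat.lt_succ_iff_lt_or_eq.1 hm with h | rfl
      · exact Or.inl ⟨m, h, rfl⟩
      · exact Or.inr rfl

theorem num_lt_num {m n : ℕ} : S.lt (S.num m) (S.num n) ↔ m < n := by
  rw [lt_num hS]
  constructor
  · rintro ⟨k, hk, h⟩; rwa [num_inj hS h]
  · intro h; exact ⟨m, h, rfl⟩

theorem le_num {a : M} {n : ℕ} : ¬ S.lt (S.num n) a ↔ ∃ m ≤ n, a = S.num m := by
  constructor
  · intro h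
    rcases pa_trichotomy hS a (S.num n) with h1 | h1 | h1
    · obtain ⟨m, hm, h1⟩ := (lt_num hS).1 h1
      exact ⟨m, hm.le, h1⟩
    · exact ⟨n, le_rfl, h1⟩
    · exact (h h1).elim
  · rintro ⟨m, hm, rfl⟩
    rw [num_lt_num hS]; omega

/-- Summands of standard numbers are standard. -/
theorem std_of_add {a b : M} {n : ℕ} (h : S.add a b = S.num n) :
    ∃ k l, a = S.num k ∧ b = S.num l := by
  induction n generalizing b with
  | zero =>
    rcases pa_zero_or_succ hS b with rfl | ⟨c, rfl⟩
    · rw [pa_add_zero hS] at h; exact ⟨0, 0, h, rfl⟩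
    · rw [pa_add_succ hS] at h; exact (pa_succ_ne_zero hS _ h).elim
  | succ n ih =>
    rcases pa_zero_or_succ hS b with rfl | ⟨c, rfl⟩
    · rw [pa_add_zero hS] at h; exact ⟨n + 1, 0, h, rfl⟩
    · rw [pa_add_succ hS] at h
      obtain ⟨k, l, hk, hl⟩ := ih (pa_succ_inj hS h)
      exact ⟨k, l + 1, hk, by rw [hl]; rfl⟩

/-- Overspill. -/
theorem overspill (hN : S.Nonstd) {X : Type} {C : Set (X → M)} {P : X → M → Prop}
    (hP : Dfn S (ext C) fun p => P p.1 p.2) (x : X) (h : ∀ n, P x (S.num n)) :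
    ∃ d, (∀ n, S.lt (S.num n) d) ∧ P x d := by
  have : ∃ d, (∀ n, d ≠ S.num n) ∧ P x d := by
    by_contra hcon
    push Not at hcon
    obtain ⟨a, ha⟩ := hN
    refine hcon a ha (pa_ind hS hP x (h 0) (fun b hb => ?_) a)
    by_cases hb' : ∃ n, b = S.num n
    · obtain ⟨n, rfl⟩ := hb'; exact h (n + 1)
    · push Not at hb'; exact (hcon b hb' hb).elim
  obtain ⟨d, hd, hPd⟩ := this
  refine ⟨d, fun n => ?_, hPd⟩
  by_contra hn
  obtain ⟨m, -, hm⟩ := (le_num hS).1 hn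
  exact hd m hm

end Peano

/-! ### The coding predicate -/

section Coding

variable {M : Type} {S : AStr M}

/-- The first-order formula defining `AStr.MemRel`, in the variables `0` and `1`. -/
def memFml : Fml :=
  let m : PTerm := .add .one (.mul (.add (.var 0) .one) (.var 3))
  let two : PTerm := .add .one .one
  let s : PTerm := .add (.var 2) (.var 3)
  .and (.lt (.var 0) (.var 1)) (.ex 2 (.ex 3 (.and
    (.eq (.mul two (.var 1)) (.add (.mul s (.add s .one)) (.mul two (.var 2))))
    (.and (.lt .one m) (.and (.lt .one m) (.ex 4 (.eq (.var 2) (.add (.mul (.var 4) m) .one))))))))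

theorem memFml_isFO : memFml.IsFO := by simp [memFml, Fml.and, Fml.ex, Fml.IsFO]

theorem satFO_memFml (v : ℕ → M) : SatFO S v memFml ↔ S.MemRel (v 0) (v 1) := by
  simp [memFml, satFO_and, satFO_ex, satFO_lt, satFO_eq, PTerm.val, AStr.MemRel, AStr.PairRel,
    AStr.ModRel, AStr.two]

theorem Dfn.memRel {X : Type} {C : Set (X → M)} {f g : X → M} (hf : FD S C f) (hg : FD S C g) :
    Dfn S C fun x => S.MemRel (f x) (g x) := by
  refine (Dfn.sat (S := S) memFml_isFO (C := C) (h := fun n => if n = 0 then f else g) ?_).congr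
    fun x => ?_
  · intro n
    split_ifs
    exacts [hf, hg]
  · rw [satFO_memFml]; simp

/-- The coding predicate evaluated in the standard model. -/
def memN (j t : ℕ) : Prop :=
  j < t ∧ ∃ a b, 2 * t = (a + b) * (a + b + 1) + 2 * a ∧ 1 < 1 + (j + 1) * b ∧
    ∃ q, a = q * (1 + (j + 1) * b) + 1

theorem cantor_inj {a b a' b' : ℕ}
    (h : (a + b) * (a + b + 1) + 2 * a = (a' + b') * (a' + b' + 1) + 2 * a') :
    a = a' ∧ b = b' := by
  have key : ∀ a b a' b' : ℕ, a + b < a' + b' →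
      (a + b) * (a + b + 1) + 2 * a < (a' + b') * (a' + b' + 1) + 2 * a' := by
    intro a b a' b' h
    nlinarith
  rcases lt_trichotomy (a + b) (a' + b') with h1 | h1 | h1
  · exact absurd h (key _ _ _ _ h1).ne
  · rw [h1] at h; omega
  · exact absurd h (key _ _ _ _ h1).ne'

/-- Every finite pattern is realized by a standard code. -/
theorem exists_code (s : Set ℕ) (l : ℕ) : ∃ t, ∀ j < l, memN j t ↔ j ∈ s := by
  classical
  -- the last entry only serves to make the second component of the β-code larger than `l`
  let L : List ℕ := (List.range (l + 1)).map fun j =>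
    if j = l then (l + 1) * (l + 1) else if j ∈ s then 1 else 0
  have hL : L.length = l + 1 := by simp [L]
  have hβ : ∀ j (hj : j < l + 1), Nat.beta (Nat.unbeta L) j =
      if j = l then (l + 1) * (l + 1) else if j ∈ s then 1 else 0 := by
    intro j hj
    have := Nat.beta_unbeta_coe L ⟨j, by rw [hL]; exact hj⟩
    simpa [L] using this
  obtain ⟨a, b, hab⟩ : ∃ a b, Nat.unpair (Nat.unbeta L) = (a, b) := ⟨_, _, rfl⟩
  simp only [Nat.beta, hab] at hβ
  have hb : l + 1 ≤ b := by
    have h := hβ l (by omega)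
    rw [if_pos rfl] at h
    have h2 : a % ((l + 1) * b + 1) < (l + 1) * b + 1 := Nat.mod_lt _ (by omega)
    rw [h] at h2
    exact Nat.le_of_mul_le_mul_left (Nat.lt_succ_iff.1 h2) (by omega)
  have heven : 2 ∣ (a + b) * (a + b + 1) := (Nat.even_mul_succ_self (a + b)).two_dvd
  obtain ⟨k, hk⟩ := heven
  refine ⟨k + a, fun j hj => ?_⟩
  have hjb : j < k + a := by nlinarith
  have h := hβ j (by omega)
  rw [if_neg (by omega)] at h
  have hjp : 0 < (j + 1) * b := Nat.mul_pos (by omega) (by omega)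
  constructor
  · rintro ⟨-, a', b', h1, h2, q, hq⟩
    obtain ⟨rfl, rfl⟩ : a = a' ∧ b = b' := cantor_inj (by rw [← h1]; omega)
    by_contra hjs
    rw [if_neg hjs, hq, add_comm ((j + 1) * b) 1, Nat.mul_add_mod_self_right, Nat.mod_eq_of_lt h2] at h
    omega
  · intro hjs
    rw [if_pos hjs] at h
    refine ⟨hjb, a, b, by omega, by omega, a / ((j + 1) * b + 1), ?_⟩
    have := Nat.div_add_mod a ((j + 1) * b + 1)
    rw [h] at this
    rw [mul_comm, add_comm 1]; exact this.symm

variable (hS : ModelsT S PAax)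
include hS

theorem num_cantor (a b : ℕ) : S.add (S.mul (S.add (S.num a) (S.num b))
    (S.add (S.add (S.num a) (S.num b)) S.one)) (S.mul S.two (S.num a)) =
    S.num ((a + b) * (a + b + 1) + 2 * a) := by
  rw [← num_two hS, ← num_one hS]
  simp only [num_add hS, num_mul hS]

theorem pairRel_num {t : ℕ} {a b : M} : S.PairRel (S.num t) a b ↔
    ∃ k l, a = S.num k ∧ b = S.num l ∧ 2 * t = (k + l) * (k + l + 1) + 2 * k := by
  constructor
  · intro h
    have h' := h
    rw [AStr.PairRel, ← num_two hS, ← num_mul hS, pa_mul_succ hS] at h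
    obtain ⟨n, -, h1, -⟩ := std_of_add hS h.symm
    obtain ⟨-, n, -, h1⟩ := std_of_add hS h1
    obtain ⟨k, l, rfl, rfl⟩ := std_of_add hS h1
    refine ⟨k, l, rfl, rfl, num_inj hS ?_⟩
    rw [AStr.PairRel, num_cantor hS, ← num_two hS, ← num_mul hS] at h'
    exact h'
  · rintro ⟨k, l, rfl, rfl, h⟩
    rw [AStr.PairRel, num_cantor hS, ← h, num_mul hS, num_two hS]

/-- The coding predicate is absolute for standard numbers. -/
theorem memRel_num {j t : ℕ} : S.MemRel (S.num j) (S.num t) ↔ memN j t := by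
  have hm : ∀ b, S.add S.one (S.mul (S.add (S.num j) S.one) (S.num b)) =
      S.num (1 + (j + 1) * b) := by
    intro b
    rw [← num_one hS]; simp only [num_add hS, num_mul hS]
  simp only [AStr.MemRel, memN, num_lt_num hS]
  refine and_congr_right fun _ => ?_
  constructor
  · rintro ⟨a, b, hp, h1, h2, q, hq⟩
    obtain ⟨k, l, rfl, rfl, h⟩ := (pairRel_num hS).1 hp
    rw [hm] at h1 hq
    rw [← num_one hS, num_lt_num hS] at h1
    refine ⟨k, l, h, h1, ?_⟩
    rw [Nat.add_comm 1] at hq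
    obtain ⟨m, -, hm', -⟩ := std_of_add hS hq.symm
    have hm'' := hm'
    simp only [AStr.num] at hm'
    rw [pa_mul_succ hS] at hm'
    obtain ⟨-, q', -, rfl⟩ := std_of_add hS hm'
    refine ⟨q', num_inj hS ?_⟩
    rw [Nat.add_comm 1, num_add hS (q' * _), num_mul hS q', num_one hS]; exact hq
  · rintro ⟨k, l, h, h1, q, hq⟩
    refine ⟨_, _, (pairRel_num hS).2 ⟨k, l, rfl, rfl, h⟩, ?_, ?_, S.num q, ?_⟩
    · rw [hm, ← num_one hS, num_lt_num hS]; exact h1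
    · rw [hm, ← num_one hS, num_lt_num hS]; exact h1
    · rw [hm, ← num_one hS, ← num_mul hS, ← num_add hS, ← hq]

end Coding

/-! ### Σ₁ definability of recursive functions on the standard numbers -/

section Sigma

variable {M : Type} {S : AStr M} {X Y : Type}

/-- The embedding of contexts `X × ℕ → Y × M` extending `i : X → Y` by numerals. -/
def extI (S : AStr M) (i : X → Y) : X × ℕ → Y × M := fun p => (i p.1, S.num p.2)

/-- `f : X → ℕ` extends, along `i`, to a definable function with values in `M`. -/
def Tm (S : AStr M) (i : X → Y) (C : Set (Y → M)) (f : X → ℕ) : Prop :=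
  ∃ t, FD S C t ∧ ∀ x, t (i x) = S.num (f x)

/-- `G` is the trace, along `i`, of a definable predicate. -/
def DD (S : AStr M) (i : X → Y) (C : Set (Y → M)) (G : X → Prop) : Prop :=
  ∃ R, Dfn S C R ∧ ∀ x, G x ↔ R (i x)

/-- `G` is the projection along the standard numbers of the trace of a definable predicate, the
latter being monotone in the projected variable (on standard numbers). -/
def Sg (S : AStr M) (i : X → Y) (C : Set (Y → M)) (G : X → Prop) : Prop :=
  ∃ R : Y → M → Prop, Dfn S (ext C) (fun p => R p.1 p.2) ∧
    (∀ x, G x ↔ ∃ z, R (i x) (S.num z)) ∧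
    ∀ x z z', z ≤ z' → R (i x) (S.num z) → R (i x) (S.num z')

variable {i : X → Y} {C : Set (Y → M)}

theorem Tm.wk {f : X → ℕ} (h : Tm S i C f) : Tm S (extI S i) (ext C) fun p => f p.1 := by
  obtain ⟨t, ht, h⟩ := h
  exact ⟨fun p => t p.1, ht.wk, fun p => h p.1⟩

theorem Tm.snd : Tm S (extI S i) (ext C) fun p => p.2 := ⟨fun p => p.2, FD.snd, fun _ => rfl⟩

theorem Tm.zero : Tm S i C fun _ => 0 := ⟨_, FD.zero, fun _ => rfl⟩

theorem Tm.succ {f : X → ℕ} (h : Tm S i C f) : Tm S i C fun x => f x + 1 := by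
  obtain ⟨t, ht, h⟩ := h
  exact ⟨_, ht.add FD.one, fun x => by rw [h]; rfl⟩

theorem Tm.one : Tm S i C fun _ => 1 := Tm.zero.succ

theorem DD.not {G : X → Prop} (h : DD S i C G) : DD S i C fun x => ¬ G x := by
  obtain ⟨R, hR, h⟩ := h
  exact ⟨_, hR.not, fun x => not_congr (h x)⟩

theorem DD.and {G H : X → Prop} (h : DD S i C G) (k : DD S i C H) :
    DD S i C fun x => G x ∧ H x := by
  obtain ⟨R, hR, h⟩ := h
  obtain ⟨Q, hQ, k⟩ := k
  exact ⟨_, hR.and hQ, fun x => and_congr (h x) (k x)⟩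

theorem DD.or {G H : X → Prop} (h : DD S i C G) (k : DD S i C H) :
    DD S i C fun x => G x ∨ H x := by
  obtain ⟨R, hR, h⟩ := h
  obtain ⟨Q, hQ, k⟩ := k
  exact ⟨_, hR.or hQ, fun x => or_congr (h x) (k x)⟩

theorem DD.sg {G : X → Prop} (h : DD S i C G) : Sg S i C G := by
  obtain ⟨R, hR, h⟩ := h
  exact ⟨fun y _ => R y, hR.wk, fun x => by simp [h x], fun _ _ _ _ h => h⟩

theorem Sg.congr {G H : X → Prop} (h : Sg S i C G) (k : ∀ x, H x ↔ G x) : Sg S i C H := by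
  obtain ⟨R, hR, h, hm⟩ := h
  exact ⟨R, hR, fun x => (k x).trans (h x), hm⟩

theorem Sg.and {G H : X → Prop} (h : Sg S i C G) (k : Sg S i C H) :
    Sg S i C fun x => G x ∧ H x := by
  obtain ⟨R, hR, h, hm⟩ := h
  obtain ⟨Q, hQ, k, km⟩ := k
  refine ⟨fun y z => R y z ∧ Q y z, hR.and hQ, fun x => ?_, fun x z z' hz hh =>
    ⟨hm x z z' hz hh.1, km x z z' hz hh.2⟩⟩
  refine (and_congr (h x) (k x)).trans ?_
  constructor
  · rintro ⟨⟨z, hz⟩, w, hw⟩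
    exact ⟨max z w, hm _ _ _ (le_max_left _ _) hz, km _ _ _ (le_max_right _ _) hw⟩
  · rintro ⟨z, h1, h2⟩
    exact ⟨⟨z, h1⟩, z, h2⟩

/-- The constants of the base context `D` are available in the context `C`. -/
class HasConst (S : AStr M) (D : Set (Unit → M)) (C : Set (Y → M)) : Prop where
  fd : ∀ c ∈ D, FD S C fun _ => c ()

instance {D : Set (Unit → M)} : HasConst S D D := ⟨fun _ hc => FD.coord hc⟩

instance {D : Set (Unit → M)} [h : HasConst S D C] : HasConst S D (ext C) :=
  ⟨fun c hc => (h.fd c hc).wk⟩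

/-- A binary relation on `ℕ` that is Σ₁ over the constants `D`. -/
def Gr (S : AStr M) (D : Set (Unit → M)) (G : ℕ → ℕ → Prop) : Prop :=
  Sg S (extI S (extI S (id : Unit → Unit))) (ext (ext D)) fun x => G x.1.2 x.2

variable (hS : ModelsT S PAax)
include hS

theorem Tm.add {f g : X → ℕ} (hf : Tm S i C f) (hg : Tm S i C g) :
    Tm S i C fun x => f x + g x := by
  obtain ⟨t, ht, hf⟩ := hf
  obtain ⟨u, hu, hg⟩ := hg
  exact ⟨_, ht.add hu, fun x => by rw [hf, hg, num_add hS]⟩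

theorem Tm.mul {f g : X → ℕ} (hf : Tm S i C f) (hg : Tm S i C g) :
    Tm S i C fun x => f x * g x := by
  obtain ⟨t, ht, hf⟩ := hf
  obtain ⟨u, hu, hg⟩ := hg
  exact ⟨_, ht.mul hu, fun x => by rw [hf, hg, num_mul hS]⟩

theorem DD.eq {f g : X → ℕ} (hf : Tm S i C f) (hg : Tm S i C g) :
    DD S i C fun x => f x = g x := by
  obtain ⟨t, ht, hf⟩ := hf
  obtain ⟨u, hu, hg⟩ := hg
  exact ⟨_, Dfn.eq ht hu, fun x => by beta_reduce; rw [hf, hg, num_inj_iff hS]⟩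

theorem DD.lt {f g : X → ℕ} (hf : Tm S i C f) (hg : Tm S i C g) :
    DD S i C fun x => f x < g x := by
  obtain ⟨t, ht, hf⟩ := hf
  obtain ⟨u, hu, hg⟩ := hg
  exact ⟨_, Dfn.lt ht hu, fun x => by beta_reduce; rw [hf, hg, num_lt_num hS]⟩

theorem DD.pair {f g k : X → ℕ} (hf : Tm S i C f) (hg : Tm S i C g) (hk : Tm S i C k) :
    DD S i C fun x => Nat.pair (f x) (g x) = k x := by
  have := ((DD.lt hS hf hg).and (DD.eq hS (((hg.mul hS hg).add hS hf)) hk)).or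
    ((DD.lt hS hf hg).not.and (DD.eq hS ((((hf.mul hS hf).add hS hf)).add hS hg) hk))
  obtain ⟨R, hR, h⟩ := this
  refine ⟨R, hR, fun x => ?_⟩
  rw [← h x]
  simp only [Nat.pair]
  split_ifs with h1 <;> simp [h1]

theorem Sg.ex {G : X → ℕ → Prop} (h : Sg S (extI S i) (ext C) fun p => G p.1 p.2) :
    Sg S i C fun x => ∃ a, G x a := by
  obtain ⟨R, hR, h, hm⟩ := h
  refine ⟨fun y z => ∃ a, ¬ S.lt z a ∧ R (y, a) z, ?_, fun x => ?_, ?_⟩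
  · refine Dfn.ex (P := fun (p : Y × M) a => ¬ S.lt p.2 a ∧ R (p.1, a) p.2) ?_
    refine (Dfn.lt FD.snd.wk FD.snd).not.and ?_
    refine hR.comap (fun q : (Y × M) × M => ((q.1.1, q.2), q.1.2)) ?_
    rintro c (rfl | ⟨c, (rfl | ⟨c, hc, rfl⟩), rfl⟩)
    exacts [wk_mem_ext snd_mem_ext, snd_mem_ext, wk_mem_ext (wk_mem_ext hc)]
  · constructor
    · rintro ⟨a, ha⟩
      obtain ⟨z, hz⟩ := (h (x, a)).1 ha
      refine ⟨max z a, S.num a, ?_, hm (x, a) _ _ (le_max_left _ _) hz⟩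
      rw [num_lt_num hS]; simp
    · rintro ⟨z, a, ha, hR⟩
      obtain ⟨m, -, rfl⟩ := (le_num hS).1 ha
      exact ⟨m, (h (x, m)).2 ⟨z, hR⟩⟩
  · rintro x z z' hz ⟨a, ha, hR⟩
    obtain ⟨m, hmz, rfl⟩ := (le_num hS).1 ha
    exact ⟨_, (le_num hS).2 ⟨m, hmz.trans hz, rfl⟩, hm (x, m) _ _ hz hR⟩

theorem Sg.ball {G : X → ℕ → Prop} {f : X → ℕ} (hf : Tm S i C f)
    (h : Sg S (extI S i) (ext C) fun p => G p.1 p.2) :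
    Sg S i C fun x => ∀ a < f x, G x a := by
  obtain ⟨R, hR, h, hm⟩ := h
  obtain ⟨t, ht, hf⟩ := hf
  refine ⟨fun y z => ∀ a, S.lt a (t y) → R (y, a) z, ?_, fun x => ?_, ?_⟩
  · refine Dfn.all (P := fun (p : Y × M) a => S.lt a (t p.1) → R (p.1, a) p.2) ?_
    refine (Dfn.lt FD.snd ht.wk.wk).imp ?_
    refine hR.comap (fun q : (Y × M) × M => ((q.1.1, q.2), q.1.2)) ?_
    rintro c (rfl | ⟨c, (rfl | ⟨c, hc, rfl⟩), rfl⟩)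
    exacts [wk_mem_ext snd_mem_ext, snd_mem_ext, wk_mem_ext (wk_mem_ext hc)]
  · constructor
    · intro hG
      have : ∀ n ≤ f x, ∃ z, ∀ a < n, R (i x, S.num a) (S.num z) := by
        intro n
        induction n with
        | zero => exact fun _ => ⟨0, fun a ha => by omega⟩
        | succ n ih =>
          intro hn
          obtain ⟨z, hz⟩ := ih (by omega)
          obtain ⟨w, hw⟩ := (h (x, n)).1 (hG n (by omega))
          refine ⟨max z w, fun a ha => ?_⟩
          rcases Nat.lt_succ_iff_lt_or_eq.1 ha with ha | rfl
          · exact hm (x, a) _ _ (le_max_left _ _) (hz a ha)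
          · exact hm (x, a) _ _ (le_max_right _ _) hw
      obtain ⟨z, hz⟩ := this _ le_rfl
      refine ⟨z, fun a ha => ?_⟩
      rw [hf] at ha
      obtain ⟨m, hm, rfl⟩ := (lt_num hS).1 ha
      exact hz m hm
    · rintro ⟨z, hz⟩ a ha
      exact (h (x, a)).2 ⟨z, hz _ (by rw [hf, num_lt_num hS]; exact ha)⟩
  · intro x z z' hz hR a ha
    have ha' := ha
    rw [hf] at ha
    obtain ⟨m, -, rfl⟩ := (lt_num hS).1 ha
    exact hm (x, m) _ _ hz (hR _ ha')

/-- A predicate that is Σ₁ together with its complement is the trace of a definable one. -/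
theorem DD.of_sg {G : X → Prop} (h1 : Sg S i C G) (h0 : Sg S i C fun x => ¬ G x) :
    DD S i C G := by
  obtain ⟨R, hR, h, -⟩ := h1
  obtain ⟨Q, hQ, k, -⟩ := h0
  refine ⟨fun y => ∃ z, R y z ∧ ∀ z', ¬ S.lt z z' → ¬ Q y z', ?_, fun x => ?_⟩
  · refine Dfn.ex (hR.and (Dfn.all (P := fun (p : Y × M) z' => ¬ S.lt p.2 z' → ¬ Q p.1 z') ?_))
    refine (Dfn.lt FD.snd.wk FD.snd).not.imp (Dfn.not ?_)
    refine hQ.comap (fun q : (Y × M) × M => (q.1.1, q.2)) ?_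
    rintro c (rfl | ⟨c, hc, rfl⟩)
    exacts [snd_mem_ext, wk_mem_ext (wk_mem_ext hc)]
  · constructor
    · intro hG
      obtain ⟨z, hz⟩ := (h x).1 hG
      refine ⟨S.num z, hz, fun z' hz' hQ => ?_⟩
      obtain ⟨m, -, rfl⟩ := (le_num hS).1 hz'
      exact (k x).2 ⟨m, hQ⟩ hG
    · rintro ⟨z, hz, hz'⟩
      by_contra hG
      obtain ⟨w, hw⟩ := (k x).1 hG
      have : S.lt z (S.num w) := by
        by_contra hlt; exact hz' _ hlt hw
      obtain ⟨m, -, rfl⟩ := (lt_num hS).1 this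
      exact hG ((h x).2 ⟨m, hz⟩)

theorem Sg.subst {G : X → ℕ → Prop} {f : X → ℕ} (hf : Tm S i C f)
    (h : Sg S (extI S i) (ext C) fun p => G p.1 p.2) : Sg S i C fun x => G x (f x) :=
  (Sg.ex hS (G := fun x a => a = f x ∧ G x a) ((DD.eq hS Tm.snd hf.wk).sg.and h)).congr
    fun x => by simp

omit hS in
theorem Sg.comap {X' Y' : Type} {i' : X' → Y'} {C' : Set (Y' → M)} {G : X → Prop}
    (h : Sg S i C G) (g : X' → X) (g' : Y' → Y) (hg : ∀ x, g' (i' x) = i (g x))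
    (hC : ∀ c ∈ C, FD S C' fun y => c (g' y)) : Sg S i' C' fun x => G (g x) := by
  obtain ⟨R, hR, h, hm⟩ := h
  refine ⟨fun y z => R (g' y) z, ?_, fun x => by beta_reduce; rw [hg]; exact h _,
    fun x z z' => by beta_reduce; rw [hg]; exact hm _ _ _⟩
  refine hR.pull (fun p : Y' × M => (g' p.1, p.2)) ?_
  rintro c (rfl | ⟨c, hc, rfl⟩)
  · exact FD.snd
  · exact (hC c hc).wk

theorem Gr.app {D : Set (Unit → M)} [hD : HasConst S D C] {G : ℕ → ℕ → Prop} (h : Gr S D G)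
    {f g : X → ℕ} (hf : Tm S i C f) (hg : Tm S i C g) : Sg S i C fun x => G (f x) (g x) := by
  refine Sg.subst hS (G := fun x b => G (f x) b) hg ?_
  refine Sg.subst hS (G := fun (x : X × ℕ) a => G a x.2) hf.wk ?_
  refine h.comap (fun x : (X × ℕ) × ℕ => (((), x.2), x.1.2)) (fun y => (((), y.2), y.1.2))
    (fun x => rfl) ?_
  rintro c (rfl | ⟨c, (rfl | ⟨c, hc, rfl⟩), rfl⟩)
  exacts [FD.snd.wk, FD.snd, (hD.fd c hc).wk.wk]

theorem Sg.mod {c m v : X → ℕ} (hc : Tm S i C c) (hm : Tm S i C m) (hv : Tm S i C v) :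
    Sg S i C fun x => c x % (m x + 1) = v x := by
  refine Sg.congr (G := fun x => v x < m x + 1 ∧ ∃ q, c x = q * (m x + 1) + v x) ?_ fun x => ?_
  · exact (DD.lt hS hv hm.succ).sg.and (Sg.ex hS
      (DD.eq hS hc.wk (((Tm.snd).mul hS hm.wk.succ).add hS hv.wk)).sg)
  · constructor
    · rintro h
      refine ⟨h ▸ Nat.mod_lt _ (by omega), c x / (m x + 1), ?_⟩
      rw [← h, mul_comm]; exact (Nat.div_add_mod _ _).symm
    · rintro ⟨h1, q, h2⟩
      rw [h2, Nat.mul_add_mod_self_right, Nat.mod_eq_of_lt h1]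

omit hS in
/-- Membership in the value of a primitive recursion, expressed by a computation sequence. -/
theorem mem_prec_seq {f g : ℕ →. ℕ} {a n m : ℕ} :
    (m ∈ (Nat.rec (f a) (fun y IH => do let i ← IH; g (Nat.pair a (Nat.pair y i))) n : Part ℕ)) ↔
      ∃ w : ℕ → ℕ, w 0 ∈ f a ∧ (∀ y < n, w (y + 1) ∈ g (Nat.pair a (Nat.pair y (w y)))) ∧
        w n = m := by
  induction n generalizing m with
  | zero =>
    constructor
    · intro h; exact ⟨fun _ => m, h, fun y hy => by omega, rfl⟩
    · rintro ⟨w, h, -, rfl⟩; exact h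
  | succ n ih =>
    simp only [Part.bind_eq_bind, Part.mem_bind_iff]
    constructor
    · rintro ⟨i, hi, hm⟩
      obtain ⟨w, h0, h1, rfl⟩ := ih.1 hi
      refine ⟨Function.update w (n + 1) m, by simpa using h0, fun y hy => ?_, by simp⟩
      rw [Function.update_of_ne (by omega : y ≠ n + 1)]
      rcases Nat.lt_succ_iff_lt_or_eq.1 hy with hy | rfl
      · rw [Function.update_of_ne (by omega)]; exact h1 y hy
      · rw [Function.update_self]; exact hm
    · rintro ⟨w, h0, h1, rfl⟩
      exact ⟨w n, ih.2 ⟨w, h0, fun y hy => h1 y (by omega), rfl⟩, h1 n (by omega)⟩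

omit hS in
/-- Membership in the value of a primitive recursion, expressed by a β-code of the computation. -/
theorem mem_prec {f g : ℕ →. ℕ} {a n m : ℕ} :
    (m ∈ (Nat.rec (f a) (fun y IH => do let i ← IH; g (Nat.pair a (Nat.pair y i))) n : Part ℕ)) ↔
      ∃ c d, c % ((n + 1) * d + 1) = m ∧
        (∃ v, v ∈ f a ∧ c % ((0 + 1) * d + 1) = v) ∧
        ∀ y < n, ∃ i, c % ((y + 1) * d + 1) = i ∧ ∃ j, c % ((y + 1 + 1) * d + 1) = j ∧
          ∃ p, Nat.pair y i = p ∧ ∃ q, Nat.pair a p = q ∧ j ∈ g q := by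
  rw [mem_prec_seq]
  constructor
  · rintro ⟨w, h0, h1, rfl⟩
    let L : List ℕ := (List.range (n + 1)).map w
    have hL : L.length = n + 1 := by simp [L]
    have hβ : ∀ j (hj : j < n + 1), Nat.beta (Nat.unbeta L) j = w j := by
      intro j hj
      have := Nat.beta_unbeta_coe L ⟨j, by rw [hL]; exact hj⟩
      simpa [L] using this
    simp only [Nat.beta] at hβ
    refine ⟨_, _, hβ n (by omega), ⟨_, h0, hβ 0 (by omega)⟩, fun y hy =>
      ⟨_, hβ y (by omega), _, hβ (y + 1) (by omega), _, rfl, _, rfl, h1 y hy⟩⟩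
  · rintro ⟨c, d, rfl, ⟨v, hv, rfl⟩, h⟩
    refine ⟨fun y => c % ((y + 1) * d + 1), hv, fun y hy => ?_, rfl⟩
    obtain ⟨i, rfl, j, rfl, p, rfl, q, rfl, hg⟩ := h y hy
    exact hg

/-- The graph of a function recursive in a trace is Σ₁. -/
theorem gr_of_recursiveIn {D : Set (Unit → M)} {A : Set ℕ}
    (hA : DD S (extI S (id : Unit → Unit)) (ext D) fun x => x.2 ∈ A) {f : ℕ →. ℕ}
    (hf : RecursiveIn (chi A) f) : Gr S D fun n m => m ∈ f n := by
  induction hf with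
  | oracle =>
    obtain ⟨R, hR, h⟩ := hA
    have hA' : DD S (extI S (extI S (id : Unit → Unit))) (ext (ext D)) fun x => x.1.2 ∈ A :=
      ⟨_, hR.wk, fun x => h x.1⟩
    refine ((hA'.and (DD.eq hS Tm.snd Tm.one)).or
      (hA'.not.and (DD.eq hS Tm.snd Tm.zero))).sg.congr fun x => ?_
    by_cases hx : x.1.2 ∈ A <;> simp [chi, hx]
  | zero => exact (DD.eq hS Tm.snd Tm.zero).sg.congr fun x => by simp [pure, PFun.pure]
  | succ => exact (DD.eq hS Tm.snd Tm.snd.wk.succ).sg.congr fun x => by simp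
  | left =>
    have key : Sg S (extI S (extI S (id : Unit → Unit))) (ext (ext D)) fun x =>
        ∃ k, Nat.pair x.2 k = x.1.2 :=
      Sg.ex hS (DD.pair hS Tm.snd.wk Tm.snd Tm.snd.wk.wk).sg
    refine key.congr fun x => ?_
    simp only [PFun.coe_val, Part.mem_some_iff]
    constructor
    · intro h; exact ⟨x.1.2.unpair.2, by rw [h, Nat.pair_unpair]⟩
    · rintro ⟨k, h⟩; rw [← h]; simp
  | right =>
    have key : Sg S (extI S (extI S (id : Unit → Unit))) (ext (ext D)) fun x =>
        ∃ k, Nat.pair k x.2 = x.1.2 :=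
      Sg.ex hS (DD.pair hS Tm.snd Tm.snd.wk Tm.snd.wk.wk).sg
    refine key.congr fun x => ?_
    simp only [PFun.coe_val, Part.mem_some_iff]
    constructor
    · intro h; exact ⟨x.1.2.unpair.1, by rw [h, Nat.pair_unpair]⟩
    · rintro ⟨k, h⟩; rw [← h]; simp
  | @pair f g _ _ hf hg =>
    have key : Sg S (extI S (extI S (id : Unit → Unit))) (ext (ext D)) fun x =>
        ∃ a b, (a ∈ f x.1.2 ∧ b ∈ g x.1.2) ∧ Nat.pair a b = x.2 :=
      Sg.ex hS (Sg.ex hS (((hf.app hS Tm.snd.wk.wk.wk Tm.snd.wk).and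
        (hg.app hS Tm.snd.wk.wk.wk Tm.snd)).and
        (DD.pair hS Tm.snd.wk Tm.snd Tm.snd.wk.wk).sg))
    refine key.congr fun x => ?_
    simp [Seq.seq, and_assoc, eq_comm]
  | @comp f g _ _ hf hg =>
    have key : Sg S (extI S (extI S (id : Unit → Unit))) (ext (ext D)) fun x =>
        ∃ k, k ∈ g x.1.2 ∧ x.2 ∈ f k :=
      Sg.ex hS ((hg.app hS Tm.snd.wk.wk Tm.snd).and (hf.app hS Tm.snd Tm.snd.wk))
    refine key.congr fun x => ?_
    exact Part.mem_bind_iff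
  | @prec f g _ _ hf hg =>
    have key : Sg S (extI S (extI S (id : Unit → Unit))) (ext (ext D)) fun x =>
        ∃ a n, Nat.pair a n = x.1.2 ∧ ∃ c d, c % ((n + 1) * d + 1) = x.2 ∧
        (∃ v, v ∈ f a ∧ c % ((0 + 1) * d + 1) = v) ∧
        ∀ y < n, ∃ i, c % ((y + 1) * d + 1) = i ∧ ∃ j, c % ((y + 1 + 1) * d + 1) = j ∧
          ∃ p, Nat.pair y i = p ∧ ∃ q, Nat.pair a p = q ∧ j ∈ g q := by
      refine Sg.ex hS (Sg.ex hS (Sg.and (DD.pair hS Tm.snd.wk Tm.snd Tm.snd.wk.wk.wk).sg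
        (Sg.ex hS (Sg.ex hS (Sg.and ?_ (Sg.and (Sg.ex hS (Sg.and ?_ ?_))
          (Sg.ball hS ?_ (Sg.ex hS (Sg.and ?_ (Sg.ex hS (Sg.and ?_ (Sg.ex hS (Sg.and
            (DD.pair hS ?_ ?_ ?_).sg (Sg.ex hS (Sg.and (DD.pair hS ?_ ?_ ?_).sg
              ?_)))))))))))))))
      · exact Sg.mod hS Tm.snd.wk (Tm.mul hS Tm.snd.wk.wk.succ Tm.snd) Tm.snd.wk.wk.wk.wk
      · exact hf.app hS Tm.snd.wk.wk.wk.wk Tm.snd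
      · exact Sg.mod hS Tm.snd.wk.wk (Tm.mul hS Tm.zero.succ Tm.snd.wk) Tm.snd
      · exact Tm.snd.wk.wk
      · exact Sg.mod hS Tm.snd.wk.wk.wk (Tm.mul hS Tm.snd.wk.succ Tm.snd.wk.wk) Tm.snd
      · exact Sg.mod hS Tm.snd.wk.wk.wk.wk (Tm.mul hS Tm.snd.wk.wk.succ.succ Tm.snd.wk.wk.wk)
          Tm.snd
      · exact Tm.snd.wk.wk.wk
      · exact Tm.snd.wk.wk
      · exact Tm.snd
      · exact Tm.snd.wk.wk.wk.wk.wk.wk.wk.wk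
      · exact Tm.snd.wk
      · exact Tm.snd
      · exact hg.app hS Tm.snd Tm.snd.wk.wk
    refine key.congr fun x => ?_
    simp only [Nat.unpaired]
    refine Iff.trans mem_prec ?_
    constructor
    · intro h; exact ⟨_, _, Nat.pair_unpair _, h⟩
    · rintro ⟨a, n, h, h'⟩
      rw [← h]; simpa using h'
  | @rfind f _ hf =>
    have key : Sg S (extI S (extI S (id : Unit → Unit))) (ext (ext D)) fun x =>
        (∃ p, Nat.pair x.1.2 x.2 = p ∧ 0 ∈ f p) ∧
        ∀ j < x.2, ∃ p, Nat.pair x.1.2 j = p ∧ ∃ v, 0 < v ∧ v ∈ f p := by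
      refine Sg.and (Sg.ex hS (Sg.and (DD.pair hS Tm.snd.wk.wk Tm.snd.wk Tm.snd).sg
        (hf.app hS Tm.snd Tm.zero))) (Sg.ball hS Tm.snd (Sg.ex hS (Sg.and
        (DD.pair hS Tm.snd.wk.wk.wk Tm.snd.wk Tm.snd).sg (Sg.ex hS (Sg.and
        (DD.lt hS Tm.zero Tm.snd).sg (hf.app hS Tm.snd.wk Tm.snd))))))
    refine key.congr fun x => ?_
    refine Iff.trans Nat.mem_rfind ?_
    simp [Nat.pos_iff_ne_zero, and_comm]

theorem dd_of_recursiveIn {D : Set (Unit → M)} {A B : Set ℕ}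
    (hA : DD S (extI S (id : Unit → Unit)) (ext D) fun x => x.2 ∈ A) (hB : TuringLe B A) :
    DD S (extI S (id : Unit → Unit)) (ext D) fun x => x.2 ∈ B := by
  have h := gr_of_recursiveIn hS hA hB
  refine DD.of_sg hS ((h.app hS Tm.snd Tm.one).congr fun x => ?_)
    ((h.app hS Tm.snd Tm.zero).congr fun x => ?_)
  · by_cases hx : x.2 ∈ B <;> simp [chi, hx]
  · by_cases hx : x.2 ∈ B <;> simp [chi, hx]

end Sigma

/-! ### Relative recursiveness -/

theorem recursiveIn_of_partrec {O f : ℕ →. ℕ} (h : Nat.Partrec f) : RecursiveIn O f := by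
  induction h with
  | zero => exact RecursiveIn.zero
  | succ => exact RecursiveIn.succ
  | left => exact RecursiveIn.left
  | right => exact RecursiveIn.right
  | pair _ _ h1 h2 => exact RecursiveIn.pair h1 h2
  | comp _ _ h1 h2 => exact RecursiveIn.comp h1 h2
  | prec _ _ h1 h2 => exact RecursiveIn.prec h1 h2
  | rfind _ h => exact RecursiveIn.rfind h

theorem turingLe_of_computable {A B : Set ℕ} (h : ComputablePred fun n => n ∈ B) :
    TuringLe B A := by
  obtain ⟨hd, h⟩ := h
  refine recursiveIn_of_partrec (Partrec.nat_iff.1 ?_)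
  have : Computable fun n => if n ∈ B then 1 else 0 := by
    have := Computable.cond h (Computable.const (1 : ℕ)) (Computable.const 0)
    exact this.of_eq fun n => by by_cases hn : n ∈ B <;> simp [hn]
  refine this.partrec.of_eq fun n => ?_
  by_cases hn : n ∈ B <;> simp [chi, hn]

section Trace

variable {M : Type} {S : AStr M} (hS : ModelsT S PAax)
include hS

/-- Computable binary relations are traces of parameter-free definable relations. -/
theorem dd_of_computable {G : ℕ → ℕ → Prop}
    (hG : ComputablePred fun n : ℕ => G n.unpair.1 n.unpair.2) :
    ∃ R : M → M → Prop, Dfn S (ext (ext (∅ : Set (Unit → M)))) (fun p => R p.1.2 p.2) ∧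
      ∀ m n, G m n ↔ R (S.num m) (S.num n) := by
  have hE : DD S (extI S (id : Unit → Unit)) (ext ∅) fun x => x.2 ∈ (∅ : Set ℕ) :=
    ⟨_, Dfn.lt FD.snd FD.zero, fun x => by simpa using pa_not_lt_zero hS _⟩
  have hB : DD S (extI S (id : Unit → Unit)) (ext ∅) fun x =>
      x.2 ∈ {n : ℕ | G n.unpair.1 n.unpair.2} :=
    dd_of_recursiveIn hS hE (turingLe_of_computable hG)
  obtain ⟨Q, hQ, h⟩ := hB
  have hB1 : DD S (extI S (extI S (extI S (id : Unit → Unit)))) (ext (ext (ext ∅))) fun x =>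
      x.2 ∈ {n : ℕ | G n.unpair.1 n.unpair.2} := by
    refine ⟨fun y => Q ((), y.2), hQ.comap (fun y : ((Unit × M) × M) × M => ((), y.2)) ?_, fun x => h ((), x.2)⟩
    rintro c (rfl | ⟨c, hc, rfl⟩)
    exacts [snd_mem_ext, hc.elim]
  have key : DD S (extI S (extI S (id : Unit → Unit))) (ext (ext ∅)) fun x => G x.1.2 x.2 := by
    have k1 : Sg S (extI S (extI S (id : Unit → Unit))) (ext (ext ∅)) fun x =>
        ∃ p, Nat.pair x.1.2 x.2 = p ∧ p ∈ {n : ℕ | G n.unpair.1 n.unpair.2} :=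
      Sg.ex hS ((DD.pair hS Tm.snd.wk.wk Tm.snd.wk Tm.snd).and hB1).sg
    have k0 : Sg S (extI S (extI S (id : Unit → Unit))) (ext (ext ∅)) fun x =>
        ∃ p, Nat.pair x.1.2 x.2 = p ∧ ¬ p ∈ {n : ℕ | G n.unpair.1 n.unpair.2} :=
      Sg.ex hS ((DD.pair hS Tm.snd.wk.wk Tm.snd.wk Tm.snd).and hB1.not).sg
    exact DD.of_sg hS (k1.congr fun x => by simp) (k0.congr fun x => by simp)
  obtain ⟨R, hR, h⟩ := key
  exact ⟨fun a b => R (((), a), b), hR, fun m n => h (((), m), n)⟩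

end Trace

/-! ### Codes of binary strings -/

/-- `e` codes a binary string of length `m`. -/
def LenN (e m : ℕ) : Prop := ∃ l : List Bool, Encodable.encode l = e ∧ l.length = m

/-- `e` codes a binary string whose `j`-th entry is `true`. -/
def BitN (e j : ℕ) : Prop := ∃ l : List Bool, Encodable.encode l = e ∧ l[j]? = some true

theorem lenN_encode {l : List Bool} {m : ℕ} : LenN (Encodable.encode l) m ↔ l.length = m := by
  simp [LenN]

theorem bitN_encode {l : List Bool} {m : ℕ} : BitN (Encodable.encode l) m ↔ l[m]? = some true := by
  simp [BitN]

theorem computable_lenN : ComputablePred fun n : ℕ => LenN n.unpair.1 n.unpair.2 := by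
  have h : PrimrecPred fun n : ℕ => (Encodable.decode (α := List Bool) n.unpair.1).map
      (fun l => (Encodable.encode l, l.length)) = some n.unpair := by
    refine Primrec.eq.comp ?_ ?_
    · refine Primrec.option_map (Primrec.decode.comp (Primrec.fst.comp Primrec.unpair)) ?_
      exact (Primrec.pair (Primrec.encode.comp Primrec.snd)
        (Primrec.list_length.comp Primrec.snd)).to₂
    · exact Primrec.option_some.comp Primrec.unpair
  have := h.computablePred
  refine ComputablePred.of_eq this fun n => ?_
  simp only [LenN, Option.map_eq_some_iff]
  constructor
  · rintro ⟨l, -, h⟩; rw [← h]; exact ⟨l, rfl, rfl⟩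
  · rintro ⟨l, h1, h2⟩; exact ⟨l, by rw [← h1, Encodable.encodek], by rw [h1, h2]⟩

theorem computable_bitN : ComputablePred fun n : ℕ => BitN n.unpair.1 n.unpair.2 := by
  have h : PrimrecPred fun n : ℕ => (Encodable.decode (α := List Bool) n.unpair.1).map
      (fun l => (Encodable.encode l, l[n.unpair.2]?)) = some (n.unpair.1, some true) := by
    refine Primrec.eq.comp ?_ ?_
    · refine Primrec.option_map (Primrec.decode.comp (Primrec.fst.comp Primrec.unpair)) ?_
      exact (Primrec.pair (Primrec.encode.comp Primrec.snd)
        (Primrec.list_getElem?.comp Primrec.snd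
          (Primrec.snd.comp (Primrec.unpair.comp Primrec.fst)))).to₂
    · exact Primrec.option_some.comp (Primrec.pair (Primrec.fst.comp Primrec.unpair)
        (Primrec.const _))
  have := h.computablePred
  refine ComputablePred.of_eq this fun n => ?_
  simp only [BitN, Option.map_eq_some_iff]
  constructor
  · rintro ⟨l, -, h⟩; rw [Prod.mk.injEq] at h; exact ⟨l, h⟩
  · rintro ⟨l, h1, h2⟩; exact ⟨l, by rw [← h1, Encodable.encodek], by rw [h1, h2]⟩

/-- The length-`n` initial segment of (the characteristic function of) a set. -/
noncomputable def seg (B : Set ℕ) (n : ℕ) : List Bool :=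
  open Classical in (List.range n).map fun j => decide (j ∈ B)

@[simp] theorem seg_length (B : Set ℕ) (n : ℕ) : (seg B n).length = n := by simp [seg]

theorem seg_getElem? {B : Set ℕ} {n j : ℕ} (h : j < n) : (seg B n)[j]? = some true ↔ j ∈ B := by
  simp [seg, h]

theorem eq_seg {B : Set ℕ} {n : ℕ} {l : List Bool} (hl : l.length = n)
    (h : ∀ j < n, l[j]? = some true ↔ j ∈ B) : l = seg B n := by
  refine List.ext_getElem? fun j => ?_
  by_cases hj : j < n
  · have := (h j hj).trans (seg_getElem? hj).symm
    rw [List.getElem?_eq_getElem (by omega), List.getElem?_eq_getElem (by simpa using hj)] at this ⊢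
    simp only [Option.some.injEq] at this ⊢
    exact Bool.eq_iff_iff.2 this
  · rw [List.getElem?_eq_none (by omega), List.getElem?_eq_none (by simpa using hj)]

theorem code_eq_seg {B : Set ℕ} {n e : ℕ} (hl : LenN e n) (h : ∀ j < n, BitN e j ↔ j ∈ B) :
    e = Encodable.encode (seg B n) := by
  obtain ⟨l, rfl, hl⟩ := hl
  rw [eq_seg hl fun j hj => bitN_encode.symm.trans (h j hj)]

theorem isBranchThrough_iff {B T : Set ℕ} :
    IsBranchThrough B T ↔ ∀ n, Encodable.encode (seg B n) ∈ T := by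
  refine forall_congr' fun n => ?_
  constructor
  · rintro ⟨l, hl, h, hT⟩
    rwa [← eq_seg hl]
    intro j hj
    rw [List.getElem?_eq_getElem (by omega)]
    simpa using h ⟨j, by omega⟩
  · intro h
    refine ⟨seg B n, seg_length _ _, fun i => ?_, h⟩
    rw [← seg_getElem? (B := B) (by simpa using i.2), List.getElem?_eq_getElem i.2]
    simp

/-- An infinite binary tree has nodes of every length. -/
theorem exists_node {T : Set ℕ} (hT : IsTreeCode T) (hinf : T.Infinite) (n : ℕ) :
    ∃ B : Set ℕ, ∀ m ≤ n, Encodable.encode (seg B m) ∈ T := by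
  have : ∃ l : List Bool, n ≤ l.length ∧ Encodable.encode l ∈ T := by
    by_contra hcon
    push Not at hcon
    refine hinf (((List.finite_length_lt Bool n).image Encodable.encode).subset fun e he => ?_)
    obtain ⟨l, rfl⟩ := hT.1 e he
    exact ⟨l, by by_contra h; exact hcon l (not_lt.1 h) he, rfl⟩
  obtain ⟨l, hl, hlT⟩ := this
  refine ⟨{j | l[j]? = some true}, fun m hm => hT.2 _ l ?_ hlT⟩
  rw [← eq_seg (l := l.take m) (by simp; omega) fun j hj => ?_]
  · exact List.take_prefix _ _
  · rw [List.getElem?_take_of_lt hj]; rfl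

/-! ### Standard systems are Scott sets -/

section StandardSystem

variable {M : Type} {S : AStr M} (hS : ModelsT S PAax)
include hS

/-- In a nonstandard model the trace on `ℕ` of any definable predicate is coded. -/
theorem trace_mem_SSy (hN : S.Nonstd) {R : M → Prop}
    (hR : Dfn S (ext (Set.univ : Set (Unit → M))) fun p => R p.2) :
    {n | R (S.num n)} ∈ S.SSy := by
  obtain ⟨d, hd, c, hc⟩ := overspill hS hN (X := Unit) (C := Set.univ)
    (P := fun _ d => ∃ c, ∀ x, S.lt x d → (S.MemRel x c ↔ R x)) (by
      refine Dfn.ex (P := fun (p : Unit × M) c => ∀ x, S.lt x p.2 → (S.MemRel x c ↔ R x)) ?_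
      refine Dfn.all (P := fun (p : (Unit × M) × M) x => S.lt x p.1.2 →
        (S.MemRel x p.2 ↔ R x)) ?_
      refine (Dfn.lt FD.snd FD.snd.wk.wk).imp ((Dfn.memRel FD.snd FD.snd.wk).iff ?_)
      refine hR.pull (fun q : ((Unit × M) × M) × M => ((), q.2)) ?_
      rintro c (rfl | ⟨c, -, rfl⟩)
      · exact FD.snd
      · exact (FD.param (fun _ => c ())).wk.wk.wk) () (fun n => by
      obtain ⟨t, ht⟩ := exists_code {j | R (S.num j)} n
      refine ⟨S.num t, fun x hx => ?_⟩
      obtain ⟨m, hm, rfl⟩ := (lt_num hS).1 hx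
      rw [memRel_num hS, ht m hm]; rfl)
  exact ⟨c, fun n => (hc _ (hd n)).symm⟩

theorem dd_iff_mem_SSy (hN : S.Nonstd) {A : Set ℕ} :
    DD S (extI S (id : Unit → Unit)) (ext Set.univ) (fun x => x.2 ∈ A) ↔ A ∈ S.SSy := by
  constructor
  · rintro ⟨R, hR, h⟩
    have : A = {n | R ((), S.num n)} := Set.ext fun n => h ((), n)
    rw [this]
    exact trace_mem_SSy hS hN (R := fun m => R ((), m)) hR
  · rintro ⟨c, hc⟩
    exact ⟨fun p => S.MemRel p.2 c, Dfn.memRel FD.snd (FD.param (fun _ => c)).wk,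
      fun x => hc x.2⟩

/-- A version of `dd_of_computable` for an arbitrary context. -/
theorem exists_dfn_of_computable {G : ℕ → ℕ → Prop}
    (hG : ComputablePred fun n : ℕ => G n.unpair.1 n.unpair.2) :
    ∃ R : M → M → Prop, (∀ {X : Type} {C : Set (X → M)} {f g : X → M}, FD S C f → FD S C g →
      Dfn S C fun x => R (f x) (g x)) ∧ ∀ m n, G m n ↔ R (S.num m) (S.num n) := by
  obtain ⟨R, hR, h⟩ := dd_of_computable hS hG
  refine ⟨R, fun {X C f g} hf hg => ?_, h⟩
  refine hR.pull (fun x : X => (((), f x), g x)) ?_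
  rintro c (rfl | ⟨c, (rfl | ⟨c, hc, rfl⟩), rfl⟩)
  exacts [hg, hf, hc.elim]

theorem exists_branch_of_mem_SSy (hN : S.Nonstd) {T : Set ℕ} (hT : T ∈ S.SSy)
    (htree : IsTreeCode T) (hinf : T.Infinite) : ∃ B ∈ S.SSy, IsBranchThrough B T := by
  obtain ⟨c, hc⟩ := hT
  obtain ⟨L, hLd, hL⟩ := exists_dfn_of_computable hS computable_lenN
  obtain ⟨R, hRd, hR⟩ := exists_dfn_of_computable hS computable_bitN
  -- `Φ e' m e`: the string coded by `e'` is the initial segment of length `m` of the set coded by `e`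
  let Φ : M → M → M → Prop := fun e' m e => L e' m ∧ ∀ j, S.lt j m → (R e' j ↔ S.MemRel j e)
  have hΦd : ∀ {X : Type} {C : Set (X → M)} {f g k : X → M}, FD S C f → FD S C g → FD S C k →
      Dfn S C fun x => Φ (f x) (g x) (k x) := fun {X C f g k} hf hg hk =>
    (hLd hf hg).and (Dfn.all (P := fun x j => S.lt j (g x) → (R (f x) j ↔ S.MemRel j (k x)))
      ((Dfn.lt FD.snd hg.wk).imp ((hRd hf.wk FD.snd).iff (Dfn.memRel FD.snd hk.wk))))
  have hΦ : ∀ e' m e (B : Set ℕ), (∀ j < m, S.MemRel (S.num j) e ↔ j ∈ B) →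
      (Φ (S.num e') (S.num m) e ↔ e' = Encodable.encode (seg B m)) := by
    intro e' m e B hB
    constructor
    · rintro ⟨h1, h2⟩
      refine code_eq_seg ((hL _ _).2 h1) fun j hj => ?_
      rw [← hB j hj, ← h2 _ ((num_lt_num hS).2 hj), hR]
    · rintro rfl
      refine ⟨(hL _ _).1 (lenN_encode.2 (seg_length _ _)), fun j hj => ?_⟩
      obtain ⟨j, hj', rfl⟩ := (lt_num hS).1 hj
      rw [← hR, bitN_encode, seg_getElem? hj', hB j hj']
  obtain ⟨d, hd, e, he⟩ := overspill hS hN (X := Unit) (C := Set.univ)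
    (P := fun _ d => ∃ e, ∀ m, S.lt m d → ∀ e', Φ e' m e →
      ∃ e'', ¬ S.lt e' e'' ∧ Φ e'' m e ∧ S.MemRel e'' c) (by
      refine Dfn.ex (P := fun (p : Unit × M) e => ∀ m, S.lt m p.2 → ∀ e', Φ e' m e →
        ∃ e'', ¬ S.lt e' e'' ∧ Φ e'' m e ∧ S.MemRel e'' c) ?_
      refine Dfn.all (P := fun (p : (Unit × M) × M) m => S.lt m p.1.2 → ∀ e', Φ e' m p.2 →
        ∃ e'', ¬ S.lt e' e'' ∧ Φ e'' m p.2 ∧ S.MemRel e'' c) ?_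
      refine (Dfn.lt FD.snd FD.snd.wk.wk).imp ?_
      refine Dfn.all (P := fun (p : ((Unit × M) × M) × M) e' => Φ e' p.2 p.1.2 →
        ∃ e'', ¬ S.lt e' e'' ∧ Φ e'' p.2 p.1.2 ∧ S.MemRel e'' c) ?_
      refine (hΦd FD.snd FD.snd.wk FD.snd.wk.wk).imp ?_
      refine Dfn.ex (P := fun (p : (((Unit × M) × M) × M) × M) e'' => ¬ S.lt p.2 e'' ∧
        Φ e'' p.1.2 p.1.1.2 ∧ S.MemRel e'' c) ?_
      exact (Dfn.lt FD.snd.wk FD.snd).not.and ((hΦd FD.snd FD.snd.wk.wk FD.snd.wk.wk.wk).and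
        (Dfn.memRel FD.snd (FD.param (fun _ => c)).wk.wk.wk.wk.wk))) () (fun n => by
      obtain ⟨B, hB⟩ := exists_node htree hinf n
      obtain ⟨t, ht⟩ := exists_code B n
      refine ⟨S.num t, fun m hm e' he' => ?_⟩
      obtain ⟨m, hm', rfl⟩ := (lt_num hS).1 hm
      have hB' : ∀ j < m, S.MemRel (S.num j) (S.num t) ↔ j ∈ B := fun j hj => by
        rw [memRel_num hS, ht j (by omega)]
      refine ⟨S.num (Encodable.encode (seg B m)), fun hlt => ?_, (hΦ _ _ _ B hB').2 rfl,
        (hc _).1 (hB m hm'.le)⟩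
      obtain ⟨k, hk, rfl⟩ := (lt_num hS).1 hlt
      exact hk.ne ((hΦ _ _ _ B hB').1 he'))
  refine ⟨{j | S.MemRel (S.num j) e}, ⟨e, fun n => Iff.rfl⟩, isBranchThrough_iff.2 fun m => ?_⟩
  have hB' : ∀ j < m, S.MemRel (S.num j) e ↔ j ∈ {j | S.MemRel (S.num j) e} := fun j _ => Iff.rfl
  obtain ⟨e'', h1, h2, h3⟩ := he _ (hd m) (S.num (Encodable.encode (seg _ m)))
    ((hΦ _ _ _ _ hB').2 rfl)
  obtain ⟨k, -, rfl⟩ := (le_num hS).1 h1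
  rw [(hΦ _ _ _ _ hB').1 h2] at h3
  exact (hc _).2 h3

/-- The standard system of a nonstandard model of PA is a Scott set. -/
theorem isScottSet_SSy (hN : S.Nonstd) : IsScottSet S.SSy := by
  refine ⟨⟨_, S.zero, fun n => Iff.rfl⟩, ?_, ?_, ?_, fun T hT h1 h2 =>
    exists_branch_of_mem_SSy hS hN hT h1 h2⟩
  · intro A hA B hB
    rw [← dd_iff_mem_SSy hS hN] at hA hB ⊢
    exact hA.or hB
  · intro A hA
    rw [← dd_iff_mem_SSy hS hN] at hA ⊢
    exact hA.not
  · intro A hA B hBA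
    rw [← dd_iff_mem_SSy hS hN] at hA ⊢
    exact dd_of_recursiveIn hS hA hBA

omit hS in
theorem repSet_subset_SSy {T : Set Fml} (hPA : PAax ⊆ T) (hT : ModelsT S T) (hN : S.Nonstd) :
    repSet T ⊆ S.SSy := by
  have hS : ModelsT S PAax := fun φ hφ => hT φ (hPA hφ)
  rintro A ⟨φ, hφ, hfree, h⟩
  have key : A = {n | SatFO S (fun _ => S.num n) φ} := by
    ext n
    have e : SatFO S (fun _ => S.zero) (φ.substN 0 (numeral n)) ↔
        SatFO S (fun _ => S.num n) φ := by
      rw [satFO_substN (by simp [numeral_vars]) hφ, numeral_val]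
      refine satFO_congr hφ fun m hm => ?_
      have : m = 0 := by simpa using hfree hm
      simp [this]
    by_cases hn : n ∈ A
    · exact iff_of_true hn (e.1 ((h n).1 hn M S hT _))
    · refine iff_of_false hn fun h' => ?_
      exact (h n).2 hn M S hT (fun _ => S.zero) (e.2 h')
  rw [key]
  exact trace_mem_SSy hS hN (R := fun m => SatFO S (fun _ => m) φ) (Dfn.sat hφ fun _ => FD.snd)

end StandardSystem

/-! ### Closure properties of Scott sets -/

section Scott

variable {𝔛 : Set (Set ℕ)} (hX : IsScottSet 𝔛)
include hX

theorem IsScottSet.inter {A B : Set ℕ} (hA : A ∈ 𝔛) (hB : B ∈ 𝔛) : A ∩ B ∈ 𝔛 := by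
  have := hX.2.2.1 _ (hX.2.1 _ (hX.2.2.1 A hA) _ (hX.2.2.1 B hB))
  rwa [Set.compl_union, compl_compl, compl_compl] at this

theorem IsScottSet.computable {A : Set ℕ} (hA : ComputablePred fun n => n ∈ A) : A ∈ 𝔛 := by
  obtain ⟨B, hB⟩ := hX.1
  exact hX.2.2.2.1 B hB A (turingLe_of_computable hA)

theorem IsScottSet.univ_mem : Set.univ ∈ 𝔛 := by
  obtain ⟨B, hB⟩ := hX.1
  have := hX.2.1 B hB _ (hX.2.2.1 B hB)
  rwa [Set.union_compl_self] at this

theorem IsScottSet.preimage {A : Set ℕ} (hA : A ∈ 𝔛) {f : ℕ → ℕ} (hf : Computable f) :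
    f ⁻¹' A ∈ 𝔛 := by
  refine hX.2.2.2.1 A hA _ ?_
  have h1 : RecursiveIn (chi A) (f : ℕ →. ℕ) :=
    recursiveIn_of_partrec (Partrec.nat_iff.1 hf.partrec)
  have := RecursiveIn.comp RecursiveIn.oracle h1
  have e : chi (f ⁻¹' A) = fun n => (f : ℕ →. ℕ) n >>= chi A := by
    funext n
    exact (Part.bind_some (f n) (chi A)).symm
  unfold TuringLe
  rw [e]
  exact this

theorem IsScottSet.iff {A B : Set ℕ} (hA : A ∈ 𝔛) (hB : B ∈ 𝔛) : {n | n ∈ A ↔ n ∈ B} ∈ 𝔛 := by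
  have := hX.2.1 _ (hX.inter hA hB) _ (hX.inter (hX.2.2.1 A hA) (hX.2.2.1 B hB))
  convert this using 1
  ext n
  simp only [Set.mem_ofPred_eq, Set.mem_union, Set.mem_inter_iff, Set.mem_compl_iff]
  tauto

theorem IsScottSet.ball {Z : Set ℕ} (hZ : Z ∈ 𝔛) : {n | ∀ i < n, Nat.pair n i ∈ Z} ∈ 𝔛 := by
  classical
  -- the least `i` with `i ≥ n` or `⟨n, i⟩ ∉ Z` equals `n` precisely when `n` is in the set
  let Z' : Set ℕ := {m | m.unpair.2 < m.unpair.1} ∩ Z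
  have hZ' : Z' ∈ 𝔛 := by
    refine hX.inter (hX.computable ?_) hZ
    exact (Primrec.nat_lt.comp (Primrec.snd.comp Primrec.unpair)
      (Primrec.fst.comp Primrec.unpair)).computablePred
  refine hX.2.2.2.1 Z' hZ' _ ?_
  have h1 := RecursiveIn.rfind (RecursiveIn.oracle (O := chi Z'))
  have h2 : RecursiveIn (chi Z') ((fun n => n : ℕ → ℕ) : ℕ →. ℕ) :=
    recursiveIn_of_partrec (Partrec.nat_iff.1 Computable.id.partrec)
  have h3 : RecursiveIn (chi Z')
      ((fun m => if m.unpair.1 = m.unpair.2 then 1 else 0 : ℕ → ℕ) : ℕ →. ℕ) := by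
    refine recursiveIn_of_partrec (Partrec.nat_iff.1 (Computable.partrec (Primrec.to_comp ?_)))
    exact Primrec.ite (Primrec.eq.comp (Primrec.fst.comp Primrec.unpair)
      (Primrec.snd.comp Primrec.unpair)) (Primrec.const 1) (Primrec.const 0)
  have h4 := RecursiveIn.comp h3 (RecursiveIn.pair h2 h1)
  unfold TuringLe
  refine cast (congrArg (RecursiveIn (chi Z')) (funext fun n => ?_)) h4
  symm
  have hex : ∃ i, Nat.pair n i ∉ Z' := ⟨n, by simp [Z']⟩
  have hr : (Nat.rfind fun i => (fun m => decide (m = 0)) <$> chi Z' (Nat.pair n i)) =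
      Part.some (Nat.find hex) := by
    refine Part.eq_some_iff.2 (Nat.mem_rfind.2 ⟨?_, fun {m} hm => ?_⟩)
    · have := Nat.find_spec hex
      simp [chi, this]
    · have := not_not.1 (Nat.find_min hex hm)
      simp [chi, this]
  simp only [hr]
  have key : n ∈ {n | ∀ i < n, Nat.pair n i ∈ Z} ↔ n = Nat.find hex := by
    rw [eq_comm, Nat.find_eq_iff]
    simp [Z']
    refine forall₂_congr fun i hi => ?_
    simp [hi]
  by_cases hn : n ∈ {n | ∀ i < n, Nat.pair n i ∈ Z}
  · have := key.1 hn
    simp only [chi, if_pos hn]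
    simp only [Seq.seq, ← this, PFun.coe_val, Part.map_eq_map, Part.map_some, Part.bind_some]
    exact Eq.symm ((Part.bind_some _ _).trans (by simp))
  · have := mt key.2 hn
    simp only [chi, if_neg hn]
    simp only [Seq.seq, PFun.coe_val, Part.map_eq_map, Part.map_some, Part.bind_some]
    exact Eq.symm ((Part.bind_some _ _).trans (by simp [this]))

/-- The codes of strings whose even part is an initial segment of `Y`. -/
theorem IsScottSet.agree {Y : Set ℕ} (hY : Y ∈ 𝔛) :
    {e | ∃ B n, e = Encodable.encode (seg B n) ∧ ∀ i, 2 * i < n → (2 * i ∈ B ↔ i ∈ Y)} ∈ 𝔛 := by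
  have h2 : Computable fun m : ℕ => Nat.pair m.unpair.1 (2 * m.unpair.2) :=
    (Primrec₂.natPair.comp (Primrec.fst.comp Primrec.unpair) (Primrec.nat_mul.comp (Primrec.const 2)
      (Primrec.snd.comp Primrec.unpair))).to_comp
  have hs : Computable fun m : ℕ => m.unpair.2 := (Primrec.snd.comp Primrec.unpair).to_comp
  -- `l[2 * i]?` is defined iff `2 * i < l.length`
  have hcode : ∀ (p : Option Bool → Bool), ComputablePred fun n : ℕ =>
      p (((Encodable.decode (α := List Bool) n.unpair.1).getD [])[n.unpair.2]?) = true := by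
    intro p
    have : PrimrecPred fun n : ℕ =>
      p (((Encodable.decode (α := List Bool) n.unpair.1).getD [])[n.unpair.2]?) = true := by
      refine Primrec.eq.comp ((Primrec.dom_finite p).comp (Primrec.list_getElem?.comp
        (Primrec.option_getD.comp (Primrec.decode.comp (Primrec.fst.comp Primrec.unpair))
          (Primrec.const [])) (Primrec.snd.comp Primrec.unpair))) (Primrec.const true)
    exact this.computablePred
  have hc := hX.computable (A := {e | ∃ l : List Bool, Encodable.encode l = e}) (by
    have : PrimrecPred fun n : ℕ => (Encodable.decode (α := List Bool) n).map Encodable.encode =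
        some n := Primrec.eq.comp (Primrec.option_map Primrec.decode
          (Primrec.encode.comp Primrec.snd).to₂) Primrec.option_some
    refine this.computablePred.of_eq fun n => ?_
    simp only [Option.map_eq_some_iff]
    constructor
    · rintro ⟨l, -, h⟩; exact ⟨l, h⟩
    · rintro ⟨l, h⟩; exact ⟨l, by rw [← h, Encodable.encodek], h⟩)
  have hZ := hX.2.1 _ (hX.preimage (hX.computable (A := {m | _}) (hcode Option.isNone)) h2) _
    (hX.iff (hX.preimage (hX.computable (A := {m | _}) (hcode fun o => o.getD false)) h2)
      (hX.preimage hY hs))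
  refine cast (congrArg (· ∈ 𝔛) ?_) (hX.inter hc (hX.ball hZ))
  ext e
  constructor
  · rintro ⟨⟨l, rfl⟩, h⟩
    refine ⟨{j | l[j]? = some true}, l.length, congrArg _ (eq_seg rfl fun j _ => Iff.rfl),
      fun i hi => ?_⟩
    have := h i (lt_of_lt_of_le (by omega) (Encodable.length_le_encode l))
    simpa [hi, not_le.2 hi] using this
  · rintro ⟨B, n, rfl, h⟩
    refine ⟨⟨_, rfl⟩, fun i _ => ?_⟩
    by_cases hi : 2 * i < n
    · right
      simp [seg, hi, h i hi]
    · left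
      simp [seg, not_lt.1 hi]

end Scott

/-! ### Partial types: filters on a power of the model -/

section Good

open Filter

variable {M : Type} {S : AStr M} {ι : Type}

/-- The coordinate functions on `ι → M` with index in `I`. -/
def crd (I : Set ι) : Set ((ι → M) → M) := {c | ∃ A ∈ I, c = fun x => x A}

theorem mem_crd {I : Set ι} {A : ι} (hA : A ∈ I) : (fun x : ι → M => x A) ∈ crd (M := M) I :=
  ⟨A, hA, rfl⟩

theorem crd_mono {I J : Set ι} (h : I ⊆ J) : crd (M := M) I ⊆ crd J := by
  rintro c ⟨A, hA, rfl⟩; exact ⟨A, h hA, rfl⟩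

theorem ext_mono' {X : Type} {C D : Set (X → M)} (h : C ⊆ D) : ext C ⊆ ext D := by
  rintro c (rfl | ⟨c, hc, rfl⟩)
  exacts [Or.inl rfl, Or.inr ⟨c, h hc, rfl⟩]

/-- A filter `F` on `(ι → M)` which is a complete type, without new subsets of `ℕ`, in the variables
indexed by `I`, the variable indexed by `A ∈ I` realizing a code of the set `nm A`. It has a basis of
sets depending only on the coordinates in `I` (`dep`), it decides each formula in these coordinates
(`dec`), and the set of all `n` for which it contains `B (x, n)` is in `𝔛` for each formula `B`
(`typ`). -/
structure Good (S : AStr M) (𝔛 : Set (Set ℕ)) (nm : ι → Set ℕ) (I : Set ι) (F : Filter (ι → M)) :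
    Prop where
  ne : F.NeBot
  dep : ∀ s ∈ F, ∃ t ∈ F, t ⊆ s ∧ ∀ x y : ι → M, (∀ A ∈ I, x A = y A) → x ∈ t → y ∈ t
  typ : ∀ B : (ι → M) → M → Prop, Dfn S (ext (crd I)) (fun p => B p.1 p.2) →
    {n | ∀ᶠ x in F, B x (S.num n)} ∈ 𝔛
  dec : ∀ P : (ι → M) → Prop, Dfn S (crd I) P → (∀ᶠ x in F, P x) ∨ ∀ᶠ x in F, ¬ P x
  cod : ∀ A ∈ I, ∀ n, ∀ᶠ x in F, (S.MemRel (S.num n) (x A) ↔ n ∈ nm A)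

theorem Dfn.at_num {X : Type} {C : Set (X → M)} {B : X → M → Prop}
    (h : Dfn S (ext C) fun p => B p.1 p.2) (n : ℕ) : Dfn S C fun x => B x (S.num n) :=
  h.subst (FD.num n)

theorem eventually_iff_of_dec {X : Type} {F F' : Filter X} (hF : F' ≤ F) [F'.NeBot] {P : X → Prop}
    (h : (∀ᶠ x in F, P x) ∨ ∀ᶠ x in F, ¬ P x) : (∀ᶠ x in F', P x) ↔ ∀ᶠ x in F, P x := by
  refine ⟨fun hP => h.resolve_right fun hn => ?_, fun hP => hF hP⟩
  obtain ⟨x, h1, h2⟩ := (hP.and (hF hn)).exists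
  exact h2 h1

variable {𝔛 : Set (Set ℕ)} {nm : ι → Set ℕ} {I : Set ι} {F : Filter (ι → M)}

open Classical in
/-- The formulas `C (x, a) n`, with truth values given by `Y`, are consistently realized by
a value `a` of the new variable `A`. -/
def Cond (S : AStr M) (F : Filter (ι → M)) (A : ι) (C : (ι → M) → M → Prop) (Y : Set ℕ) : Prop :=
  ∀ l, ∀ᶠ x in F, ∃ a, ∀ j < l, (C (Function.update x A a) (S.num j) ↔ j ∈ Y)

variable (hS : ModelsT S PAax)
include hS

/-- Two formulas `C (x, n)` and `B (x, n)` are merged into one, at even and odd arguments `n`. -/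
theorem dfn_join {X : Type} {D : Set (X → M)} {C B : X → M → Prop}
    (hC : Dfn S (ext D) fun p => C p.1 p.2) (hB : Dfn S (ext D) fun p => B p.1 p.2) :
    ∃ E : X → M → Prop, Dfn S (ext D) (fun p => E p.1 p.2) ∧
      ∀ x i, (E x (S.num (2 * i)) ↔ C x (S.num i)) ∧ (E x (S.num (2 * i + 1)) ↔ B x (S.num i)) := by
  refine ⟨fun x z => (∃ w, S.add w w = z ∧ C x w) ∨ ∃ w, S.add (S.add w w) S.one = z ∧ B x w,
    ?_, fun x i => ⟨?_, ?_⟩⟩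
  · refine Dfn.or ?_ ?_
    · refine Dfn.ex (P := fun (p : X × M) w => S.add w w = p.2 ∧ C p.1 w) ?_
      refine (Dfn.eq (FD.snd.add FD.snd) FD.snd.wk).and ?_
      refine hC.comap (fun q : (X × M) × M => (q.1.1, q.2)) ?_
      rintro c (rfl | ⟨c, hc, rfl⟩)
      exacts [snd_mem_ext, wk_mem_ext (wk_mem_ext hc)]
    · refine Dfn.ex (P := fun (p : X × M) w => S.add (S.add w w) S.one = p.2 ∧ B p.1 w) ?_
      refine (Dfn.eq ((FD.snd.add FD.snd).add FD.one) FD.snd.wk).and ?_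
      refine hB.comap (fun q : (X × M) × M => (q.1.1, q.2)) ?_
      rintro c (rfl | ⟨c, hc, rfl⟩)
      exacts [snd_mem_ext, wk_mem_ext (wk_mem_ext hc)]
  all_goals
    have hd : ∀ k, S.add (S.num k) (S.num k) = S.num (2 * k) := fun k => by
      rw [← num_add hS, two_mul]
    have hd' : ∀ k, S.add (S.num (2 * k)) S.one = S.num (2 * k + 1) := fun k => rfl
    constructor
  · rintro (⟨w, hw, h⟩ | ⟨w, hw, h⟩)
    · obtain ⟨k, -, rfl, -⟩ := std_of_add hS hw
      rw [hd, num_inj_iff hS] at hw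
      rwa [show i = k by omega]
    · obtain ⟨k, -, hk, -⟩ := std_of_add hS hw
      obtain ⟨k, -, rfl, -⟩ := std_of_add hS hk
      rw [hd, hd', num_inj_iff hS] at hw
      omega
  · exact fun h => Or.inl ⟨_, hd i, h⟩
  · rintro (⟨w, hw, h⟩ | ⟨w, hw, h⟩)
    · obtain ⟨k, -, rfl, -⟩ := std_of_add hS hw
      rw [hd, num_inj_iff hS] at hw
      omega
    · obtain ⟨k, -, hk, -⟩ := std_of_add hS hw
      obtain ⟨k, -, rfl, -⟩ := std_of_add hS hk
      rw [hd, hd', num_inj_iff hS] at hw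
      rwa [show i = k by omega]
  · exact fun h => Or.inr ⟨_, by rw [hd, hd'], h⟩

omit hS in
open Classical in
theorem dfn_update {X : Type} {D : Set (X → M)} {A : ι} {C : (ι → M) → M → Prop}
    (hC : Dfn S (ext (crd (insert A I))) fun p => C p.1 p.2) {x : X → ι → M} {f g : X → M}
    (hx : ∀ B ∈ I, FD S D fun y => x y B) (hf : FD S D f) (hg : FD S D g) :
    Dfn S D fun y => C (Function.update (x y) A (f y)) (g y) := by
  refine hC.pull (fun y => (Function.update (x y) A (f y), g y)) ?_
  rintro c (rfl | ⟨c, ⟨B, hB, rfl⟩, rfl⟩)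
  · exact hg
  · by_cases h : B = A
    · subst h; simpa using hf
    · simpa [h] using hx B (hB.resolve_left h)

open Classical in
/-- The tree of all consistent ways of continuing a partial type lies in the Scott set. -/
theorem tree_mem (hX : IsScottSet 𝔛) (hF : Good S 𝔛 nm I F) {A : ι} {C : (ι → M) → M → Prop}
    (hC : Dfn S (ext (crd (insert A I))) fun p => C p.1 p.2) {Y : Set ℕ} (hY : Y ∈ 𝔛) :
    ∃ T ∈ 𝔛, IsTreeCode T ∧ ∀ B n, Encodable.encode (seg B n) ∈ T ↔
      (∀ i, 2 * i < n → (2 * i ∈ B ↔ i ∈ Y)) ∧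
      ∀ᶠ x in F, ∃ a, ∀ j < n, (C (Function.update x A a) (S.num j) ↔ j ∈ B) := by
  obtain ⟨L, hLd, hL⟩ := exists_dfn_of_computable hS computable_lenN
  obtain ⟨R, hRd, hR⟩ := exists_dfn_of_computable hS computable_bitN
  let ψ : (ι → M) → M → Prop := fun x e => ∃ a, ∀ m, ¬ S.lt e m → L e m →
    ∀ j, S.lt j m → (C (Function.update x A a) j ↔ R e j)
  have hψ : Dfn S (ext (crd I)) fun p : (ι → M) × M => ψ p.1 p.2 := by
    refine Dfn.ex (P := fun (p : (ι → M) × M) a => ∀ m, ¬ S.lt p.2 m → L p.2 m →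
      ∀ j, S.lt j m → (C (Function.update p.1 A a) j ↔ R p.2 j)) ?_
    refine Dfn.all (P := fun (p : ((ι → M) × M) × M) m => ¬ S.lt p.1.2 m → L p.1.2 m →
      ∀ j, S.lt j m → (C (Function.update p.1.1 A p.2) j ↔ R p.1.2 j)) ?_
    refine (Dfn.lt FD.snd.wk.wk FD.snd).not.imp ((hLd FD.snd.wk.wk FD.snd).imp ?_)
    refine Dfn.all (P := fun (p : (((ι → M) × M) × M) × M) j => S.lt j p.2 →
      (C (Function.update p.1.1.1 A p.1.2) j ↔ R p.1.1.2 j)) ?_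
    refine (Dfn.lt FD.snd FD.snd.wk).imp (Dfn.iff ?_ (hRd FD.snd.wk.wk.wk FD.snd))
    exact dfn_update hC (x := fun p : ((((ι → M) × M) × M) × M) × M => p.1.1.1.1)
      (fun B hB => (FD.coord (mem_crd hB)).wk.wk.wk.wk) FD.snd.wk.wk FD.snd
  have hψ' : ∀ B n x, ψ x (S.num (Encodable.encode (seg B n))) ↔
      ∃ a, ∀ j < n, (C (Function.update x A a) (S.num j) ↔ j ∈ B) := by
    intro B n x
    refine exists_congr fun a => ?_
    constructor
    · intro h j hj
      have hle : n ≤ Encodable.encode (seg B n) := by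
        have := Encodable.length_le_encode (seg B n)
        rwa [seg_length] at this
      rw [h (S.num n) ((le_num hS).2 ⟨n, hle, rfl⟩)
        ((hL _ _).1 (lenN_encode.2 (seg_length _ _))) _ ((num_lt_num hS).2 hj), ← hR,
        bitN_encode, seg_getElem? hj]
    · intro h m hm hLm j hj
      obtain ⟨m, -, rfl⟩ := (le_num hS).1 hm
      have : n = m := by simpa using lenN_encode.1 ((hL _ _).2 hLm)
      subst this
      obtain ⟨j, hj', rfl⟩ := (lt_num hS).1 hj
      rw [h j hj', ← hR, bitN_encode, seg_getElem? hj']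
  have hiff : ∀ B n, Encodable.encode (seg B n) ∈ {e | ∃ B n, e = Encodable.encode (seg B n) ∧
      ∀ i, 2 * i < n → (2 * i ∈ B ↔ i ∈ Y)} ∩ {e | ∀ᶠ x in F, ψ x (S.num e)} ↔
      (∀ i, 2 * i < n → (2 * i ∈ B ↔ i ∈ Y)) ∧
      ∀ᶠ x in F, ∃ a, ∀ j < n, (C (Function.update x A a) (S.num j) ↔ j ∈ B) := by
    intro B n
    refine and_congr ⟨?_, fun h => ⟨B, n, rfl, h⟩⟩ ?_
    · rintro ⟨B', n', h, h'⟩ i hi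
      have h := Encodable.encode_injective h
      have hn : n = n' := by simpa using congrArg List.length h
      subst hn
      rw [← h' i hi, ← seg_getElem? hi, h, seg_getElem? hi]
    · show (∀ᶠ x in F, ψ x _) ↔ _
      simp only [hψ']
  refine ⟨_, hX.inter (hX.agree hY) (hF.typ ψ hψ), ⟨?_, ?_⟩, hiff⟩
  · rintro e ⟨⟨B, n, rfl, -⟩, -⟩
    exact ⟨_, rfl⟩
  · intro l₁ l₂ hl h
    obtain ⟨⟨B, n, h', -⟩, -⟩ := id h
    have h' := Encodable.encode_injective h'
    subst h'
    have hlen : l₁.length ≤ n := by simpa using hl.length_le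
    have : l₁ = seg B l₁.length := eq_seg rfl fun j hj => by
      obtain ⟨t, ht⟩ := hl
      rw [← seg_getElem? (B := B) (lt_of_lt_of_le hj hlen), ← ht, List.getElem?_append_left hj]
    rw [hiff] at h
    rw [this, hiff]
    refine ⟨fun i hi => h.1 i (by omega), h.2.mono fun x => ?_⟩
    rintro ⟨a, ha⟩
    exact ⟨a, fun j hj => ha j (by omega)⟩

open Classical in
/-- The decisions `Y` for the formulas `C (x, n)`, made consistently with the type `F`, extend to
consistent decisions `Y'` in the Scott set for `C (x, n)` and `B (x, n)`, at even and odd positions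
respectively: `Y'` is a branch of the tree in `tree_mem`. -/
theorem exists_step (hX : IsScottSet 𝔛) (hF : Good S 𝔛 nm I F) {A : ι} {C : (ι → M) → M → Prop}
    (hC : Dfn S (ext (crd (insert A I))) fun p => C p.1 p.2) {Y : Set ℕ} (hY : Y ∈ 𝔛)
    (hCY : Cond S F A C Y) {B : (ι → M) → M → Prop}
    (hB : Dfn S (ext (crd (insert A I))) fun p => B p.1 p.2) :
    ∃ (C' : (ι → M) → M → Prop) (Y' : Set ℕ),
      (Dfn S (ext (crd (insert A I))) (fun p => C' p.1 p.2) ∧ Y' ∈ 𝔛 ∧ Cond S F A C' Y') ∧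
      (∀ i, 2 * i ∈ Y' ↔ i ∈ Y) ∧
      ∀ x i, (C' x (S.num (2 * i)) ↔ C x (S.num i)) ∧ (C' x (S.num (2 * i + 1)) ↔ B x (S.num i)) := by
  have := hF.ne
  obtain ⟨C', hC', h⟩ := dfn_join hS hC hB
  obtain ⟨T, hT, htree, hTiff⟩ := tree_mem hS hX hF hC' hY
  have hnode : ∀ n, ∃ Z, Encodable.encode (seg Z n) ∈ T := by
    intro n
    by_contra hcon
    have hnot : ∀ Z : Set ℕ, (∀ i, 2 * i < n → (2 * i ∈ Z ↔ i ∈ Y)) →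
        ∀ᶠ x in F, ¬ ∃ a, ∀ j < n, (C' (Function.update x A a) (S.num j) ↔ j ∈ Z) := by
      intro Z hZ
      refine (hF.dec (fun x => ∃ a, ∀ j < n, (C' (Function.update x A a) (S.num j) ↔ j ∈ Z))
        ?_).resolve_left fun h' => hcon ⟨Z, (hTiff Z n).2 ⟨hZ, h'⟩⟩
      refine Dfn.ex (P := fun x a => ∀ j < n, (C' (Function.update x A a) (S.num j) ↔ j ∈ Z)) ?_
      have hd : ∀ k, Dfn S (ext (crd I)) fun p : (ι → M) × M =>
          ∀ j < k, (C' (Function.update p.1 A p.2) (S.num j) ↔ j ∈ Z) := by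
        intro k
        induction k with
        | zero => exact (Dfn.eq FD.zero FD.zero).congr fun x => by simp
        | succ k ih =>
          have hk : Dfn S (ext (crd I)) fun p : (ι → M) × M =>
              C' (Function.update p.1 A p.2) (S.num k) :=
            dfn_update hC' (x := fun p : (ι → M) × M => p.1)
              (fun B hB => (FD.coord (mem_crd hB)).wk) FD.snd (FD.num k)
          have hk' : Dfn S (ext (crd I)) fun p : (ι → M) × M =>
              (C' (Function.update p.1 A p.2) (S.num k) ↔ k ∈ Z) := by
            by_cases hkZ : k ∈ Z
            · exact hk.congr fun x => by simp [hkZ]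
            · exact hk.not.congr fun x => by simp [hkZ]
          exact (ih.and hk').congr fun x => by
            simp only [Nat.lt_succ_iff_lt_or_eq, or_imp, forall_and, forall_eq]
      exact hd n
    have hfin : ∀ᶠ x in F, ∀ σ ∈ (Finset.range n).powerset,
        (∀ i, 2 * i < n → (2 * i ∈ σ ↔ i ∈ Y)) →
        ¬ ∃ a, ∀ j < n, (C' (Function.update x A a) (S.num j) ↔ j ∈ σ) := by
      rw [Filter.eventually_all_finset]
      intro σ _
      by_cases hσ : ∀ i, 2 * i < n → (2 * i ∈ σ ↔ i ∈ Y)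
      · exact (hnot (σ : Set ℕ) (by simpa using hσ)).mono fun x hx _ => by simpa using hx
      · exact Eventually.of_forall fun x h' => (hσ h').elim
    obtain ⟨x, h1, a, ha⟩ := (hfin.and (hCY n)).exists
    refine h1 ((Finset.range n).filter fun j => C' (Function.update x A a) (S.num j))
      (by simp) (fun i hi => ?_) ⟨a, fun j hj => ?_⟩
    · simp [hi, (h _ _).1, ha i (by omega)]
    · simp [hj]
  choose Z hZ using hnode
  have hinf : T.Infinite := by
    refine Set.infinite_of_injective_forall_mem (f := fun n => Encodable.encode (seg (Z n) n))
      (fun m n hmn => ?_) hZ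
    simpa using congrArg List.length (Encodable.encode_injective hmn)
  obtain ⟨Y', hY', hbr⟩ := hX.2.2.2.2 T hT htree hinf
  rw [isBranchThrough_iff] at hbr
  exact ⟨C', Y', ⟨hC', hY', fun l => ((hTiff _ _).1 (hbr l)).2⟩,
    fun i => ((hTiff _ _).1 (hbr (2 * i + 1))).1 i (by omega), h⟩

end Good

/-! ### Extending a partial type by one variable -/

section Extend

open Filter

variable {M : Type} {S : AStr M} {ι : Type} {𝔛 : Set (Set ℕ)} {nm : ι → Set ℕ} {I : Set ι}
  {F : Filter (ι → M)} (hS : ModelsT S PAax)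
include hS

open Classical in
/-- A type in countably many variables extends by one more variable. The new type is generated by
the old one and the sets `E k l`, which assert the first `l` of the decisions taken in step `k`. -/
theorem Good.exists_insert (hX : IsScottSet 𝔛) (hF : Good S 𝔛 nm I F) {A : ι} (hA : A ∉ I)
    (hI : I.Countable) (hnm : nm A ∈ 𝔛) : ∃ F' ≤ F, Good S 𝔛 nm (insert A I) F' := by
  have hFne := hF.ne
  -- an enumeration of the formulas in the variables indexed by `insert A I`
  have hcrd : (ext (crd (M := M) (insert A I))).Countable := by
    have h1 : crd (M := M) (insert A I) = (fun A (x : ι → M) => x A) '' insert A I := by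
      ext c; simp only [crd, Set.mem_image, Set.mem_ofPred_eq, eq_comm]
    have h2 : ext (crd (M := M) (insert A I)) =
        insert Prod.snd ((fun c (p : (ι → M) × M) => c p.1) '' crd (insert A I)) := by
      ext c; simp only [ext, Set.mem_insert_iff, Set.mem_image, Set.mem_ofPred_eq, eq_comm]
    rw [h2, h1]
    exact (((hI.insert A).image _).image _).insert _
  obtain ⟨en, hen⟩ := (countable_dfn (S := S) hcrd).exists_eq_range
    ⟨_, Dfn.eq FD.zero FD.zero⟩
  have henD : ∀ k, Dfn S (ext (crd (insert A I))) fun p : (ι → M) × M => en k (p.1, p.2) :=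
    fun k => (hen ▸ Set.mem_range_self k : en k ∈ {P | Dfn S (ext (crd (insert A I))) P})
  let St : Type := {s : ((ι → M) → M → Prop) × Set ℕ //
    Dfn S (ext (crd (insert A I))) (fun p => s.1 p.1 p.2) ∧ s.2 ∈ 𝔛 ∧ Cond S F A s.1 s.2}
  have hstep : ∀ (k : ℕ) (s : St), ∃ s' : St, (∀ i, 2 * i ∈ s'.1.2 ↔ i ∈ s.1.2) ∧
      ∀ x i, (s'.1.1 x (S.num (2 * i)) ↔ s.1.1 x (S.num i)) ∧
        (s'.1.1 x (S.num (2 * i + 1)) ↔ en k (x, S.num i)) := by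
    rintro k ⟨⟨C, Y⟩, hC, hY, hCY⟩
    obtain ⟨C', Y', h1, h2⟩ := exists_step hS hX hF hC hY hCY (B := fun x z => en k (x, z))
      (henD k)
    exact ⟨⟨⟨C', Y'⟩, h1⟩, h2⟩
  choose nx hnx1 hnx2 using hstep
  have hinit : Cond S F A (fun x z => S.MemRel z (x A)) (nm A) := by
    intro l
    obtain ⟨t, ht⟩ := exists_code (nm A) l
    refine Eventually.of_forall fun x => ⟨S.num t, fun j hj => ?_⟩
    beta_reduce
    rw [Function.update_self, memRel_num hS, ht j hj]
  let st : ℕ → St := fun k => Nat.rec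
    ⟨(fun x z => S.MemRel z (x A), nm A), Dfn.memRel FD.snd
      (FD.coord (mem_crd (Set.mem_insert A I))).wk, hnm, hinit⟩ nx k
  let E : ℕ → ℕ → Set (ι → M) := fun k l =>
    {x | ∀ j < l, ((st k).1.1 x (S.num j) ↔ j ∈ (st k).1.2)}
  have hst1 : ∀ k i, 2 * i ∈ (st (k + 1)).1.2 ↔ i ∈ (st k).1.2 := fun k => hnx1 k (st k)
  have hst2 : ∀ k x i, ((st (k + 1)).1.1 x (S.num (2 * i)) ↔ (st k).1.1 x (S.num i)) ∧
      ((st (k + 1)).1.1 x (S.num (2 * i + 1)) ↔ en k (x, S.num i)) := fun k => hnx2 k (st k)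
  have hE : ∀ i k l, E (k + i) (l * 2 ^ i) ⊆ E k l := by
    intro i
    induction i with
    | zero => intro k l; simp
    | succ i ih =>
      intro k l x hx j hj
      refine ih k l (fun j' hj' => ?_) j hj
      have := hx (2 * j') (by rw [pow_succ, ← mul_assoc]; omega)
      rw [← add_assoc] at this
      rwa [(hst2 _ _ _).1, hst1] at this
  have hEl : ∀ k {l l'}, l ≤ l' → E k l' ⊆ E k l := fun k l l' h x hx j hj => hx j (by omega)
  have hEdir : ∀ k l k' l', ∃ k'' l'', E k'' l'' ⊆ E k l ∩ E k' l' := by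
    intro k l k' l'
    refine ⟨max k k', max (l * 2 ^ (max k k' - k)) (l' * 2 ^ (max k k' - k')),
      Set.subset_inter ?_ ?_⟩
    · have := hE (max k k' - k) k l
      rw [Nat.add_sub_cancel' (le_max_left _ _)] at this
      exact (hEl _ (le_max_left _ _)).trans this
    · have := hE (max k k' - k') k' l'
      rw [Nat.add_sub_cancel' (le_max_right _ _)] at this
      exact (hEl _ (le_max_right _ _)).trans this
  let F' : Filter (ι → M) :=
    { sets := {s | ∃ t ∈ F, ∃ k l, t ∩ E k l ⊆ s}
      univ_sets := ⟨_, univ_mem, 0, 0, Set.subset_univ _⟩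
      sets_of_superset := by
        rintro s s' ⟨t, ht, k, l, h⟩ hs
        exact ⟨t, ht, k, l, h.trans hs⟩
      inter_sets := by
        rintro s s' ⟨t, ht, k, l, h⟩ ⟨t', ht', k', l', h'⟩
        obtain ⟨k'', l'', h''⟩ := hEdir k l k' l'
        exact ⟨t ∩ t', inter_mem ht ht', k'', l'', fun x hx =>
          ⟨h ⟨hx.1.1, (h'' hx.2).1⟩, h' ⟨hx.1.2, (h'' hx.2).2⟩⟩⟩ }
  have hF'F : F' ≤ F := fun s hs => ⟨s, hs, 0, 0, Set.inter_subset_left⟩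
  have hEF' : ∀ k l, E k l ∈ F' := fun k l => ⟨_, univ_mem, k, l, Set.inter_subset_right⟩
  have hne : F'.NeBot := by
    refine neBot_iff.2 fun hbot => ?_
    have : ∅ ∈ F' := by rw [hbot]; exact mem_bot
    obtain ⟨t, ht, k, l, h⟩ := this
    obtain ⟨t', ht', hsub, hdep⟩ := hF.dep t ht
    obtain ⟨x, ⟨a, ha⟩, hx⟩ := (((st k).2.2.2 l).and ht').exists
    refine (h (show Function.update x A a ∈ t ∩ E k l from
      ⟨hsub (hdep x _ (fun B hB => ?_) hx), ha⟩)).elim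
    rw [Function.update_of_ne]
    rintro rfl; exact hA hB
  -- a formula occurring in the enumeration is decided, and its trace is the odd part of some `Y`
  have hodd : ∀ k n, (2 * n + 1 ∈ (st (k + 1)).1.2 → ∀ᶠ x in F', en k (x, S.num n)) ∧
      (2 * n + 1 ∉ (st (k + 1)).1.2 → ∀ᶠ x in F', ¬ en k (x, S.num n)) := by
    intro k n
    constructor <;> intro hn <;> refine Filter.mem_of_superset (hEF' (k + 1) (2 * n + 2)) ?_ <;>
      intro x hx
    · exact (hst2 k x n).2.1 ((hx (2 * n + 1) (by omega)).2 hn)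
    · exact fun h => hn ((hx (2 * n + 1) (by omega)).1 ((hst2 k x n).2.2 h))
  have hfind : ∀ B : (ι → M) → M → Prop, Dfn S (ext (crd (insert A I))) (fun p => B p.1 p.2) →
      ∃ k, ∀ x z, en k (x, z) ↔ B x z := by
    intro B hB
    have : (fun p : (ι → M) × M => B p.1 p.2) ∈ Set.range en := hen ▸ hB
    obtain ⟨k, hk⟩ := this
    exact ⟨k, fun x z => by rw [hk]⟩
  refine ⟨F', hF'F, hne, ?_, ?_, ?_, ?_⟩
  · rintro s ⟨t, ht, k, l, h⟩
    obtain ⟨t', ht', hsub, hdep⟩ := hF.dep t ht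
    refine ⟨t' ∩ E k l, ⟨t', ht', k, l, subset_rfl⟩,
      (Set.inter_subset_inter_left _ hsub).trans h, fun x y hxy hx =>
      ⟨hdep x y (fun B hB => hxy B (Or.inr hB)) hx.1, fun j hj => ?_⟩⟩
    rw [← hx.2 j hj]
    refine Dfn.depends ((st k).2.1.at_num j) ?_
    rintro c ⟨B, hB, rfl⟩
    exact (hxy B hB).symm
  · intro B hB
    obtain ⟨k, hk⟩ := hfind B hB
    have hf : Computable fun n : ℕ => 2 * n + 1 :=
      (Primrec.succ.comp (Primrec.nat_mul.comp (Primrec.const 2) Primrec.id)).to_comp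
    refine cast (congrArg (· ∈ 𝔛) ?_) (hX.preimage (st (k + 1)).2.2.1 hf)
    ext n
    simp only [Set.mem_preimage, Set.mem_ofPred_eq, ← hk]
    refine ⟨(hodd k n).1, fun h => ?_⟩
    by_contra hn
    obtain ⟨x, h1, h2⟩ := (h.and ((hodd k n).2 hn)).exists
    exact h2 h1
  · intro P hP
    obtain ⟨k, hk⟩ := hfind (fun x _ => P x) hP.wk
    have := hodd k 0
    simp only [hk] at this
    by_cases hn : 2 * 0 + 1 ∈ (st (k + 1)).1.2
    · exact Or.inl (this.1 hn)
    · exact Or.inr (this.2 hn)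
  · rintro B (rfl | hB) n
    · exact Filter.mem_of_superset (hEF' 0 (n + 1)) fun x hx => hx n (by omega)
    · exact hF'F (hF.cod B hB n)

end Extend

/-! ### Partial types over chains, and the empty type -/

section Chain

open Filter

variable {M : Type} {S : AStr M} {ι : Type} {𝔛 : Set (Set ℕ)} {nm : ι → Set ℕ}

theorem Dfn.exists_finite {X : Type} {C : Set (X → M)} {P : X → Prop} (h : Dfn S C P) :
    ∃ D ⊆ C, D.Finite ∧ Dfn S D P := by
  obtain ⟨φ, hφ, e, he, h⟩ := h
  refine ⟨e '' φ.freeN, ?_, Set.Finite.image _ φ.freeN.finite_toSet, φ, hφ, e,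
    fun n hn => ⟨n, hn, rfl⟩, h⟩
  rintro _ ⟨n, hn, rfl⟩
  exact he n hn

/-- A formula in the variables indexed by a directed union of sets uses the variables from just one
of them. -/
theorem Dfn.exists_of_directed {κ : Type} {c : Set κ} {I : κ → Set ι} (hne : c.Nonempty)
    (hdir : DirectedOn (fun p q => I p ⊆ I q) c) {P : (ι → M) × M → Prop}
    (h : Dfn S (ext (crd (⋃ p ∈ c, I p))) P) : ∃ p ∈ c, Dfn S (ext (crd (I p))) P := by
  obtain ⟨D, hD, hfin, h⟩ := h.exists_finite
  suffices ∃ p ∈ c, D ⊆ ext (crd (I p)) by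
    obtain ⟨p, hp, hDp⟩ := this
    exact ⟨p, hp, h.mono hDp⟩
  clear h
  induction D, hfin using Set.Finite.induction_on with
  | empty => exact ⟨hne.some, hne.some_mem, Set.empty_subset _⟩
  | @insert a D _ _ ih =>
    obtain ⟨p, hp, hDp⟩ := ih ((Set.subset_insert _ _).trans hD)
    rcases hD (Set.mem_insert _ _) with rfl | ⟨_, ⟨A, hA, rfl⟩, rfl⟩
    · exact ⟨p, hp, Set.insert_subset snd_mem_ext hDp⟩
    · simp only [Set.mem_iUnion] at hA
      obtain ⟨q, hq, hA⟩ := hA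
      obtain ⟨r, hr, hpr, hqr⟩ := hdir p hp q hq
      exact ⟨r, hr, Set.insert_subset (wk_mem_ext (mem_crd (hqr hA)))
        (hDp.trans (ext_mono' (crd_mono hpr)))⟩

/-- The union of a directed family of types is a type. -/
theorem Good.iInf {κ : Type} {c : Set κ} {I : κ → Set ι} {F : κ → Filter (ι → M)}
    (hne : c.Nonempty) (hdir : DirectedOn (fun p q => I p ⊆ I q ∧ F q ≤ F p) c)
    (h : ∀ p ∈ c, Good S 𝔛 nm (I p) (F p)) :
    Good S 𝔛 nm (⋃ p ∈ c, I p) (⨅ p ∈ c, F p) := by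
  have hmem : ∀ s, s ∈ (⨅ p ∈ c, F p) ↔ ∃ p ∈ c, s ∈ F p := fun s =>
    mem_biInf_of_directed (fun p hp q hq => by
      obtain ⟨r, hr, h1, h2⟩ := hdir p hp q hq
      exact ⟨r, hr, h1.2, h2.2⟩) hne
  have hle : ∀ p ∈ c, (⨅ p ∈ c, F p) ≤ F p := fun p hp s hs => (hmem s).2 ⟨p, hp, hs⟩
  have hNe : (⨅ p ∈ c, F p).NeBot := by
    refine neBot_iff.2 fun hbot => ?_
    have : ∅ ∈ (⨅ p ∈ c, F p) := by rw [hbot]; exact mem_bot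
    obtain ⟨p, hp, h'⟩ := (hmem _).1 this
    have := (h p hp).ne
    exact empty_notMem _ h'
  have hdir' : DirectedOn (fun p q => I p ⊆ I q) c := fun p hp q hq => by
    obtain ⟨r, hr, h1, h2⟩ := hdir p hp q hq
    exact ⟨r, hr, h1.1, h2.1⟩
  refine ⟨hNe, fun s hs => ?_, fun B hB => ?_, fun P hP => ?_, fun A hA n => ?_⟩
  · obtain ⟨p, hp, hs⟩ := (hmem _).1 hs
    obtain ⟨t, ht, h1, h2⟩ := (h p hp).dep s hs
    exact ⟨t, hle p hp ht, h1, fun x y hxy => h2 x y fun A hA => hxy A (by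
      simp only [Set.mem_iUnion]; exact ⟨p, hp, hA⟩)⟩
  · obtain ⟨p, hp, hB⟩ := hB.exists_of_directed hne hdir'
    refine cast (congrArg (· ∈ 𝔛) ?_) ((h p hp).typ B hB)
    ext n
    exact (eventually_iff_of_dec (hle p hp) ((h p hp).dec _ (Dfn.at_num hB n))).symm
  · obtain ⟨p, hp, hP⟩ := hP.wk.exists_of_directed hne hdir'
    exact ((h p hp).dec P (Dfn.at_num (B := fun x _ => P x) hP 0)).imp (fun h => hle p hp h)
      fun h => hle p hp h
  · simp only [Set.mem_iUnion] at hA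
    obtain ⟨p, hp, hA⟩ := hA
    exact hle p hp ((h p hp).cod A hA n)

/-- The theory `T` itself is a type in no variables. The trace of a formula without parameters is
represented in `T` by completeness, so it is in `𝔛`. -/
theorem Good.empty {T : Set Fml} (hT : ModelsT S T) (hComp : CompleteT T) (hrep : repSet T ⊆ 𝔛) :
    Good S 𝔛 nm ∅ ⊤ := by
  have hdep : ∀ c ∈ crd (M := M) (∅ : Set ι), False := by rintro c ⟨A, hA, -⟩; exact hA
  have hne : Nonempty (ι → M) := ⟨fun _ => S.zero⟩
  refine ⟨inferInstance, fun s hs => ⟨s, hs, subset_rfl, fun x y _ _ => ?_⟩, fun B hB => ?_,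
    fun P hP => ?_, fun A hA => hA.elim⟩
  · rw [mem_top.1 hs]; trivial
  · obtain ⟨φ, hφ, e, he, h⟩ := hB
    have he' : ∀ n ∈ φ.freeN, e n = Prod.snd := by
      intro n hn
      rcases he n hn with h | ⟨c, hc, -⟩
      exacts [h, (hdep c hc).elim]
    have hB : ∀ x z, B x z ↔ SatFO S (fun _ => z) φ := fun x z => by
      refine (h (x, z)).symm.trans (satFO_congr hφ fun n hn => ?_)
      rw [he' n hn]
    have hset : {n | ∀ᶠ x in (⊤ : Filter (ι → M)), B x (S.num n)} =
        {n | SatFO S (fun _ => S.num n) φ} := by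
      ext n
      simp only [Set.mem_ofPred_eq, hB, eventually_const]
    rw [hset]
    set ψ := φ.ren (fun _ => 0) (φ.fresh fun _ => 0) with hψ
    have hψF : ψ.IsFO := Fml.isFO_ren hφ _ _
    have hψ0 : ψ.freeN ⊆ {0} := (Fml.freeN_ren φ _ _).trans fun n hn => by
      obtain ⟨m, -, rfl⟩ := Finset.mem_image.1 hn
      exact Finset.mem_singleton_self _
    have hsent : ∀ n, IsFOSentence (ψ.substN 0 (numeral n)) := fun n => by
      refine ⟨Fml.isFO_substN hψF, Finset.subset_empty.1
        ((Fml.freeN_substN (numeral_vars n) ψ).trans fun m hm => ?_)⟩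
      obtain ⟨h1, h2⟩ := Finset.mem_erase.1 hm
      exact (h1 (Finset.mem_singleton.1 (hψ0 h2))).elim
    have hsat : ∀ n v, SatFO S v (ψ.substN 0 (numeral n)) ↔ SatFO S (fun _ => S.num n) φ := by
      intro n v
      rw [satFO_substN (by rw [numeral_vars]; exact Finset.empty_subset _) hψF, numeral_val, hψ,
        satFO_ren hφ _ _ (Fml.lt_fresh φ _)]
      simp
    have x₀ : ℕ → M := fun _ => S.zero
    refine hrep ⟨ψ, hψF, hψ0, fun n => ⟨fun hn => (hComp _ (hsent n)).resolve_right fun h' => ?_,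
      fun hn => (hComp _ (hsent n)).resolve_left fun h' => ?_⟩⟩
    · exact satFO_not.1 (h' M S hT x₀) ((hsat n x₀).2 hn)
    · exact hn ((hsat n x₀).1 (h' M S hT x₀))
  · obtain ⟨x⟩ := hne
    by_cases hx : P x
    · exact Or.inl (Eventually.of_forall fun y =>
        (Dfn.depends hP fun c hc => (hdep c hc).elim).1 hx)
    · exact Or.inr (Eventually.of_forall fun y hy =>
        hx ((Dfn.depends hP fun c hc => (hdep c hc).elim).1 hy))

end Chain

/-! ### Definable ultrapowers -/

section Ultra

open Filter

variable {M : Type} {S : AStr M} {X : Type} {C : Set (X → M)}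

/-- Definable Skolem functions, obtained from the least number principle. -/
theorem exists_fd_choice (hS : ModelsT S PAax) {P : X → M → Prop}
    (hP : Dfn S (ext C) fun p => P p.1 p.2) : ∃ f, FD S C f ∧ ∀ x, (∃ a, P x a) → P x (f x) := by
  classical
  have hl : ∀ x, ∃ a, ((P x a ∧ ∀ b, S.lt b a → ¬ P x b) ∨ ((∀ b, ¬ P x b) ∧ S.zero = a)) := by
    intro x
    by_cases h : ∃ a, P x a
    · obtain ⟨a, ha⟩ := pa_least hS hP x h
      exact ⟨a, Or.inl ha⟩
    · exact ⟨_, Or.inr ⟨not_exists.1 h, rfl⟩⟩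
  choose f hf using hl
  refine ⟨f, ?_, fun x hx => ?_⟩
  · have hD : Dfn S (ext C) fun p : X × M =>
        (P p.1 p.2 ∧ ∀ b, S.lt b p.2 → ¬ P p.1 b) ∨ ((∀ b, ¬ P p.1 b) ∧ S.zero = p.2) := by
      have hP' : Dfn S (ext (ext C)) fun q : (X × M) × M => P q.1.1 q.2 := by
        refine hP.comap (fun q : (X × M) × M => (q.1.1, q.2)) ?_
        rintro c (rfl | ⟨c, hc, rfl⟩)
        exacts [snd_mem_ext, wk_mem_ext (wk_mem_ext hc)]
      refine (hP.and ?_).or (Dfn.and ?_ (Dfn.eq FD.zero FD.snd))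
      · exact Dfn.all (P := fun (p : X × M) b => S.lt b p.2 → ¬ P p.1 b)
          ((Dfn.lt FD.snd FD.snd.wk).imp hP'.not)
      · exact Dfn.all (P := fun (p : X × M) b => ¬ P p.1 b) hP'.not
    refine hD.congr fun ⟨x, a⟩ => ⟨fun h => ?_, fun h => h ▸ hf x⟩
    rcases hf x with h1 | h1 <;> rcases h with h2 | h2
    · exact pa_least_unique hS h1 h2
    · exact (h2.1 _ h1.1).elim
    · exact (h1.1 _ h2.1).elim
    · exact h1.2.symm.trans h2.2
  · obtain ⟨a, ha⟩ := hx
    exact (hf x).elim (fun h => h.1) fun h => (h.1 a ha).elim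

variable (S C) (U : Ultrafilter X)

/-- Equality of definable functions modulo an ultrafilter. -/
def ultraSetoid : Setoid {f : X → M // FD S C f} where
  r f g := ∀ᶠ x in (U : Filter X), f.1 x = g.1 x
  iseqv := ⟨fun _ => Eventually.of_forall fun _ => rfl, fun h => h.mono fun _ h => h.symm,
    fun h k => (h.and k).mono fun _ h => h.1.trans h.2⟩

/-- The definable ultrapower: functions `X → M` definable from the functions in `C`, modulo `U`. -/
def UPow : Type := Quotient (ultraSetoid S C U)

variable {S C}

/-- The class of a definable function in the definable ultrapower. -/
def UPow.mk (f : {f : X → M // FD S C f}) : UPow S C U := Quotient.mk (ultraSetoid S C U) f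

theorem UPow.mk_eq {f g : {f : X → M // FD S C f}} :
    UPow.mk U f = UPow.mk U g ↔ ∀ᶠ x in (U : Filter X), f.1 x = g.1 x :=
  ⟨fun h => Quotient.exact h, fun h => Quotient.sound (s := ultraSetoid S C U) h⟩

variable (S C)

/-- The pointwise arithmetical structure on the definable ultrapower. -/
def ultraStr : AStr (UPow S C U) where
  zero := UPow.mk U ⟨_, FD.zero⟩
  one := UPow.mk U ⟨_, FD.one⟩
  add := Quotient.map₂ (fun f g => ⟨_, f.2.add g.2⟩) fun f f' hf g g' hg => by
    refine ((show ∀ᶠ x in (U : Filter X), f.1 x = f'.1 x from hf).and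
      (show ∀ᶠ x in (U : Filter X), g.1 x = g'.1 x from hg)).mono fun x h => ?_
    simp only [h.1, h.2]
  mul := Quotient.map₂ (fun f g => ⟨_, f.2.mul g.2⟩) fun f f' hf g g' hg => by
    refine ((show ∀ᶠ x in (U : Filter X), f.1 x = f'.1 x from hf).and
      (show ∀ᶠ x in (U : Filter X), g.1 x = g'.1 x from hg)).mono fun x h => ?_
    simp only [h.1, h.2]
  lt := Quotient.lift₂ (fun f g => ∀ᶠ x in (U : Filter X), S.lt (f.1 x) (g.1 x))
    fun f g f' g' hf hg => propext <| eventually_congr <|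
      ((show ∀ᶠ x in (U : Filter X), f.1 x = f'.1 x from hf).and
        (show ∀ᶠ x in (U : Filter X), g.1 x = g'.1 x from hg)).mono fun x h => by rw [h.1, h.2]

variable {S C}

theorem ultraStr_val (h : ℕ → {f : X → M // FD S C f}) (t : PTerm) :
    t.val (ultraStr S C U) (fun n => UPow.mk U (h n)) =
      UPow.mk U ⟨fun x => t.val S fun n => (h n).1 x, FD.val (fun n => (h n).2) t⟩ := by
  induction t with
  | var n => rfl
  | zero => rfl
  | one => rfl
  | add t u iht ihu => rw [PTerm.val, iht, ihu]; rfl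
  | mul t u iht ihu => rw [PTerm.val, iht, ihu]; rfl

theorem ultraStr_num (n : ℕ) :
    (ultraStr S C U).num n = UPow.mk U ⟨fun _ => S.num n, FD.num n⟩ := by
  induction n with
  | zero => rfl
  | succ n ih => rw [AStr.num, ih]; rfl

/-- Łoś's theorem for definable ultrapowers. -/
theorem ultraStr_sat (hS : ModelsT S PAax) {φ : Fml} (hφ : φ.IsFO)
    (h : ℕ → {f : X → M // FD S C f}) :
    SatFO (ultraStr S C U) (fun n => UPow.mk U (h n)) φ ↔
      ∀ᶠ x in (U : Filter X), SatFO S (fun n => (h n).1 x) φ := by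
  induction φ generalizing h with
  | eq t u => rw [satFO_eq, ultraStr_val, ultraStr_val, UPow.mk_eq]; rfl
  | lt t u => rw [satFO_lt, ultraStr_val, ultraStr_val]; rfl
  | mem t k => exact hφ.elim
  | not φ ih => rw [satFO_not, ih hφ, ← Ultrafilter.eventually_not]; rfl
  | imp φ ψ ihφ ihψ =>
    rw [satFO_imp, ihφ hφ.1, ihψ hφ.2, ← Ultrafilter.eventually_imp]; rfl
  | allS k φ => exact hφ.elim
  | all y φ ih =>
    have hupd : ∀ g : {f : X → M // FD S C f},
        Function.update (fun n => UPow.mk U (h n)) y (UPow.mk U g) =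
          fun n => UPow.mk U (Function.update h y g n) := fun g => by
      funext n
      by_cases hn : n = y
      · subst hn; simp
      · simp [hn]
    have hupd' : ∀ (g : {f : X → M // FD S C f}) x,
        Function.update (fun n => (h n).1 x) y (g.1 x) =
          fun n => (Function.update h y g n).1 x := fun g x => by
      funext n
      by_cases hn : n = y
      · subst hn; simp
      · simp [hn]
    simp only [satFO_all]
    constructor
    · intro hall
      obtain ⟨f, hf, hf'⟩ := exists_fd_choice hS (C := C)
        (P := fun x a => ¬ SatFO S (Function.update (fun n => (h n).1 x) y a) φ) (by
          refine Dfn.not ((Dfn.sat (φ := φ) hφ (h := Function.update (fun n (p : X × M) => (h n).1 p.1) y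
            Prod.snd) fun n => ?_).congr fun p => ?_)
          · by_cases hn : n = y
            · subst hn; simpa using FD.snd
            · simpa [hn] using (h n).2.wk
          · refine satFO_congr (φ := φ) hφ fun n _ => ?_
            by_cases hn : n = y
            · subst hn; simp
            · simp [hn])
      have := hall (UPow.mk U ⟨f, hf⟩)
      rw [hupd, ih hφ] at this
      refine this.mono fun x hx a => by_contra fun ha => hf' x ⟨a, ha⟩ ?_
      rwa [← hupd'] at hx
    · intro hev a
      obtain ⟨g, rfl⟩ : ∃ g, UPow.mk U g = a := Quotient.exists_rep a
      rw [hupd, ih hφ]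
      refine hev.mono fun x hx => ?_
      rw [← hupd']
      exact hx _

theorem ultraStr_models (hS : ModelsT S PAax) {T : Set Fml} (hT : ModelsT S T)
    (hSent : ∀ φ ∈ T, IsFOSentence φ) : ModelsT (ultraStr S C U) T := by
  intro φ hφ v
  have hrep : ∀ n, ∃ g, UPow.mk U g = v n := fun n => Quotient.exists_rep (v n)
  choose h hh using hrep
  rw [← funext hh, ultraStr_sat U hS (hSent φ hφ).1]
  exact Eventually.of_forall fun x => hT φ hφ _

theorem ultraStr_memRel (hS : ModelsT S PAax) (f g : {f : X → M // FD S C f}) :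
    (ultraStr S C U).MemRel (UPow.mk U f) (UPow.mk U g) ↔
      ∀ᶠ x in (U : Filter X), S.MemRel (f.1 x) (g.1 x) := by
  have := ultraStr_sat U hS memFml_isFO fun n => if n = 0 then f else g
  simpa [satFO_memFml] using this

end Ultra

/-! ### Assembling the model -/

section Final

open Filter Cardinal

/-- A set of size at most `ℵ₁` has a well-order with countable initial segments. -/
theorem exists_wellOrder {ι : Type} (h : #ι ≤ ℵ_ 1) :
    ∃ r : ι → ι → Prop, IsWellOrder ι r ∧ ∀ a, {b | r b a}.Countable := by
  obtain ⟨r, hr, hord⟩ := Cardinal.exists_ord_eq ι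
  refine ⟨r, hr, fun a => ?_⟩
  have h1 : Ordinal.typein r a < (#ι).ord := hord ▸ Ordinal.typein_lt_type r a
  have h2 : #{b // r b a} < ℵ_ 1 := by
    have := Cardinal.lt_ord.1 h1
    rw [Ordinal.card_typein] at this
    exact this.trans_le h
  have h3 : (ℵ_ 1 : Cardinal) = Order.succ ℵ₀ := by
    rw [← Cardinal.aleph_zero, Cardinal.succ_aleph, zero_add]
  rw [h3, Order.lt_succ_iff] at h2
  exact Cardinal.le_aleph0_iff_set_countable.1 h2

/-- By Zorn's lemma, there is a type in variables indexed by all of `𝔛`. Only types in the variables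
from an initial segment of a well-order with countable proper initial segments are considered, so
that any of them which is not in all the variables is in countably many. -/
theorem exists_good {M : Type} {S : AStr M} (hS : ModelsT S PAax) {T : Set Fml}
    (hT : ModelsT S T) (hComp : CompleteT T) {𝔛 : Set (Set ℕ)} (hcard : #𝔛 ≤ ℵ_ 1)
    (hX : IsScottSet 𝔛) (hrep : repSet T ⊆ 𝔛) :
    ∃ F : Filter (𝔛 → M), Good S 𝔛 Subtype.val Set.univ F := by
  obtain ⟨r, hr, hcount⟩ := exists_wellOrder hcard
  let Q : Type := {p : Set 𝔛 × Filter (𝔛 → M) // Good S 𝔛 Subtype.val p.1 p.2 ∧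
    ∀ A ∈ p.1, ∀ B, r B A → B ∈ p.1}
  let R : Q → Q → Prop := fun p q => p.1.1 ⊆ q.1.1 ∧ q.1.2 ≤ p.1.2
  have hRt : ∀ {p q s : Q}, R p q → R q s → R p s :=
    fun h h' => ⟨h.1.trans h'.1, h'.2.trans h.2⟩
  obtain ⟨m, hm⟩ := exists_maximal_of_chains_bounded (r := R) (fun c hc => by
    rcases c.eq_empty_or_nonempty with rfl | hne
    · exact ⟨⟨(∅, ⊤), Good.empty hT hComp hrep, fun A hA => hA.elim⟩, fun a ha => ha.elim⟩
    · have hdir : DirectedOn R c := fun p hp q hq => by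
        by_cases hpq : p = q
        · exact ⟨q, hq, by rw [hpq]; exact ⟨subset_rfl, le_rfl⟩, subset_rfl, le_rfl⟩
        · rcases hc hp hq hpq with h | h
          · exact ⟨q, hq, h, subset_rfl, le_rfl⟩
          · exact ⟨p, hp, ⟨subset_rfl, le_rfl⟩, h⟩
      refine ⟨⟨(⋃ p ∈ c, p.1.1, ⨅ p ∈ c, p.1.2),
        Good.iInf (I := fun p : Q => p.1.1) (F := fun p : Q => p.1.2) hne hdir fun p _ => p.2.1,
        fun A hA B hBA => ?_⟩, fun p hp => ⟨Set.subset_biUnion_of_mem (u := fun p : Q => p.1.1) hp,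
          iInf₂_le (f := fun (p : Q) (_ : p ∈ c) => p.1.2) p hp⟩⟩
      simp only [Set.mem_iUnion] at hA ⊢
      obtain ⟨p, hp, hA⟩ := hA
      exact ⟨p, hp, p.2.2 A hA B hBA⟩) hRt
  obtain ⟨⟨I, F⟩, hgood, hlow⟩ := m
  suffices I = Set.univ from ⟨F, this ▸ hgood⟩
  by_contra hI
  obtain ⟨A₀, hA₀⟩ : (Iᶜ : Set 𝔛).Nonempty := Set.nonempty_compl.2 hI
  have hwf : WellFounded r := hr.wf
  -- the least index not yet treated has only countably many predecessors
  obtain ⟨A, hA, hmin⟩ := hwf.has_min _ ⟨A₀, hA₀⟩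
  have hsub : I ⊆ {B | r B A} := fun B hB => by
    rcases trichotomous_of r B A with h | h | h
    · exact h
    · exact (hA (h ▸ hB)).elim
    · exact (hA (hlow B hB A h)).elim
  obtain ⟨F', hF', hgood'⟩ := hgood.exists_insert hS hX hA ((hcount A).mono hsub) A.2
  have := hm ⟨(insert A I, F'), hgood', fun B hB D hD => ?_⟩ ⟨Set.subset_insert _ _, hF'⟩
  · exact hA (this.1 (Set.mem_insert _ _))
  · rcases hB with rfl | hB
    · exact Or.inr (by_contra fun h => hmin D h hD)
    · exact Or.inr (hlow B hB D hD)

/-- The model generated by a realization of a type in variables indexed by all of `𝔛` has the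
standard system `𝔛`. -/
theorem exists_model {M : Type} {S : AStr M} (hS : ModelsT S PAax) {T : Set Fml}
    (hT : ModelsT S T) (hSent : ∀ φ ∈ T, IsFOSentence φ) {𝔛 : Set (Set ℕ)} (hX : IsScottSet 𝔛)
    {F : Filter (𝔛 → M)} (hF : Good S 𝔛 Subtype.val Set.univ F) :
    ∃ (N : Type) (SN : AStr N), ModelsT SN T ∧ SN.Nonstd ∧ SN.SSy = 𝔛 := by
  have := hF.ne
  let U : Ultrafilter (𝔛 → M) := Ultrafilter.of F
  have hU : (U : Filter (𝔛 → M)) ≤ F := Ultrafilter.of_le F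
  let C : Set ((𝔛 → M) → M) := crd Set.univ
  let co : 𝔛 → {f : (𝔛 → M) → M // FD S C f} := fun A =>
    ⟨fun x => x A, FD.coord (mem_crd (Set.mem_univ A))⟩
  have hco : ∀ (A : 𝔛) n, (ultraStr S C U).MemRel ((ultraStr S C U).num n) (UPow.mk U (co A)) ↔
      n ∈ A.1 := by
    intro A n
    rw [ultraStr_num, ultraStr_memRel U hS]
    have := hU (hF.cod A (Set.mem_univ A) n)
    rw [eventually_congr this]
    exact eventually_const
  refine ⟨UPow S C U, ultraStr S C U, ultraStr_models U hS hT hSent, ?_, ?_⟩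
  · -- a code of the set of all natural numbers is nonstandard
    refine ⟨UPow.mk U (co ⟨Set.univ, hX.univ_mem⟩), fun n hn => ?_⟩
    have h := (hco ⟨Set.univ, hX.univ_mem⟩ n).2 (Set.mem_univ n)
    rw [hn, ultraStr_num, ultraStr_memRel U hS] at h
    obtain ⟨x, hx⟩ := h.exists
    exact lt_irrefl n ((memRel_num hS).1 hx).1
  · ext A
    constructor
    · rintro ⟨c, hc⟩
      obtain ⟨g, rfl⟩ : ∃ g, UPow.mk U g = c := Quotient.exists_rep c
      have hD : Dfn S (ext C) fun p : (𝔛 → M) × M => S.MemRel p.2 (g.1 p.1) :=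
        Dfn.memRel FD.snd g.2.wk
      refine cast (congrArg (· ∈ 𝔛) ?_) (hF.typ (fun x z => S.MemRel z (g.1 x)) hD)
      ext n
      rw [hc, ultraStr_num, ultraStr_memRel U hS]
      exact (eventually_iff_of_dec hU (hF.dec _
        (Dfn.at_num (B := fun x z => S.MemRel z (g.1 x)) hD n))).symm
    · exact fun hA => ⟨UPow.mk U (co ⟨A, hA⟩), fun n => (hco ⟨A, hA⟩ n).symm⟩

end Final

/-- Theorem 2 of the paper. For `𝔛` of cardinality at most `ℵ₁` and
a complete consistent `T ⊇ PA`: `𝔛` is a Scott set with `rep(T) ⊆ 𝔛` iff `𝔛` is the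
standard system of a nonstandard model of `T`. -/
theorem scott_theorem_aleph_one (𝔛 : Set (Set ℕ)) (T : Set Fml)
    (hcard : Cardinal.mk 𝔛 ≤ Cardinal.aleph 1)
    (hSent : ∀ φ ∈ T, IsFOSentence φ)
    (hPA : PAax ⊆ T) (hCons : ConsistentT T) (hComp : CompleteT T) :
    (IsScottSet 𝔛 ∧ repSet T ⊆ 𝔛) ↔
      (∃ (N : Type) (SN : AStr N), ModelsT SN T ∧ SN.Nonstd ∧ SN.SSy = 𝔛) := by
  constructor
  · rintro ⟨hX, hrep⟩
    obtain ⟨M, S, hT⟩ := hCons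
    have hS : ModelsT S PAax := fun φ hφ => hT φ (hPA hφ)
    obtain ⟨F, hF⟩ := exists_good hS hT hComp hcard hX hrep
    exact exists_model hS hT hSent hX hF
  · rintro ⟨N, SN, hT, hN, rfl⟩
    exact ⟨isScottSet_SSy (fun φ hφ => hT φ (hPA hφ)) hN, repSet_subset_SSy hPA hT hN⟩

end Paper
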